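/- arXiv:2008.07213 — 2 statements merged into one kernel-verified Lean document; each statement's English description precedes it below -/
import Mathlib

section
/- Let ℓ be a prime and e, r positive integers with r | e | (ℓ−1). Then |Irr(G(e,r,ℓ))| − z(k G(e,r,ℓ)) = eℓ/r, where z denotes the number of ℓ-defect-zero irreducible characters. -/
open CategoryTheory

/-- `χ : G → ℂ` is the character of an irreducible complex representation of `G`. -/
def IsIrrChar (G : Type) [Group G] (χ : G → ℂ) : Prop :=
  ∃ V : FDRep ℂ G, Simple V ∧ χ = fun g => FDRep.character V g

/-- `χ` is an irreducible character of `G` of `ℓ`-defect zero, i.e. `ℓ ∤ |G|/χ(1)`. -/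
def IsDefectZeroChar (ℓ : ℕ) (G : Type) [Group G] (χ : G → ℂ) : Prop :=
  IsIrrChar G χ ∧ ∃ d : ℕ, χ 1 = (d : ℂ) ∧ ¬ (ℓ ∣ Nat.card G / d)

/-- The number of irreducible complex characters of `G`. -/
noncomputable def numIrr (G : Type) [Group G] : ℕ :=
  Nat.card {χ : G → ℂ // IsIrrChar G χ}

/-- The number of irreducible complex characters of `G` of `ℓ`-defect zero. -/
noncomputable def numDefectZero (ℓ : ℕ) (G : Type) [Group G] : ℕ :=
  Nat.card {χ : G → ℂ // IsDefectZeroChar ℓ G χ}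

/-- The action of `S_n` on the base group `Fin n → A` of a wreath product. -/
def wreathAct (n : ℕ) (A : Type) [Group A] :
    Equiv.Perm (Fin n) →* MulAut (Fin n → A) where
  toFun σ :=
    { toFun := fun f => f ∘ σ.symm
      invFun := fun f => f ∘ σ
      left_inv := fun f => by ext i; simp
      right_inv := fun f => by ext i; simp
      map_mul' := fun f g => rfl }
  map_one' := by ext f i; rfl
  map_mul' := fun σ τ => by ext f i; rfl

/-- The wreath product `A ≀ S_n`. -/
abbrev Wreath (A : Type) [Group A] (n : ℕ) : Type :=
  (Fin n → A) ⋊[wreathAct n A] Equiv.Perm (Fin n)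

/-- The imprimitive complex reflection group `G(e,r,n)`, realised as the group of
monomial `n × n` matrices (encoded as pairs of a diagonal part and a permutation)
whose nonzero entries are `e`-th roots of unity with product an `(e/r)`-th root of
unity. -/
def Gerr (A : Type) [CommGroup A] (e r n : ℕ) : Subgroup (Wreath A n) where
  carrier := {x | (∀ i, x.left i ^ e = 1) ∧ (∏ i, x.left i) ^ (e / r) = 1}
  one_mem' := by
    constructor
    · intro i; simp [SemidirectProduct.one_left]
    · simp [SemidirectProduct.one_left]
  mul_mem' := by
    rintro x y ⟨hx1, hx2⟩ ⟨hy1, hy2⟩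
    have hl : (x * y).left = fun i => x.left i * y.left (x.right.symm i) := rfl
    constructor
    · intro i
      rw [hl]
      simp only [mul_pow, hx1 i, hy1 _, mul_one]
    · rw [hl]
      rw [Finset.prod_mul_distrib]
      have : (∏ i, y.left (x.right.symm i)) = ∏ i, y.left i :=
        Equiv.prod_comp x.right.symm y.left
      rw [this, mul_pow, hx2, hy2, mul_one]
  inv_mem' := by
    rintro x ⟨hx1, hx2⟩
    constructor
    · intro i
      have h : (x⁻¹).left i = (x.left (x.right i))⁻¹ := rfl
      rw [h, inv_pow, hx1, inv_one]
    · have hb : (∏ i, (x⁻¹).left i) = ∏ i, (x.left (x.right i))⁻¹ :=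
        Finset.prod_congr rfl fun i _ => rfl
      have hc : (∏ i, (x.left (x.right i))⁻¹) = (∏ i, x.left i)⁻¹ := by
        rw [Equiv.prod_comp x.right fun i => (x.left i)⁻¹, ← Finset.prod_inv_distrib]
      rw [hb, hc, inv_pow, hx2, inv_one]

/-- An equivariant linear endomorphism of a simple representation is a scalar. -/
theorem schur_scalar {G : Type} [Group G] (V : FDRep ℂ G) [Simple V]
    (f : V →ₗ[ℂ] V) (hf : ∀ g, f ∘ₗ V.ρ g = V.ρ g ∘ₗ f) :
    ∃ c : ℂ, f = c • LinearMap.id := by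
  let F : V ⟶ V := ⟨InducedCategory.homMk (ModuleCat.ofHom f), fun g => by
    ext1
    exact hf g⟩
  have h1 : Module.finrank ℂ (V ⟶ V) = 1 := finrank_endomorphism_simple_eq_one ℂ V
  obtain ⟨c, hc⟩ := (finrank_eq_one_iff_of_nonzero' (𝟙 V) (id_nonzero V)).mp h1 F
  refine ⟨c, ?_⟩
  have := congrArg (fun q : V ⟶ V => q.hom.hom.hom) hc
  exact this.symm

theorem isIntegral_char {G : Type} [Group G] [Finite G] (V : FDRep ℂ G) (g : G) :
    IsIntegral ℤ (V.character g) := by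
  unfold FDRep.character
  rw [Module.End.trace_eq_sum_roots_charpoly_of_splits (IsAlgClosed.splits _)]
  refine IsIntegral.multiset_sum fun μ hμ => ?_
  have hμ' : Module.End.HasEigenvalue (V.ρ g) μ := by
    rw [Module.End.hasEigenvalue_iff_isRoot_charpoly]
    exact (Polynomial.mem_roots'.mp hμ).2
  obtain ⟨v, hv⟩ := hμ'.exists_hasEigenvector
  have h1 := hv.pow_apply (Nat.card G)
  rw [← map_pow, pow_card_eq_one', map_one] at h1
  have h2 : (μ ^ Nat.card G - 1) • v = 0 := by
    rw [sub_smul, one_smul, ← h1]; simp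
  have h3 : μ ^ Nat.card G = 1 := by
    rcases smul_eq_zero.mp h2 with h | h
    · exact sub_eq_zero.mp h
    · exact absurd h hv.2
  refine IsIntegral.of_pow (n := Nat.card G) Nat.card_pos ?_
  rw [h3]; exact isIntegral_one

theorem degree_dvd {G : Type} [Group G] [Finite G] (V : FDRep ℂ G) [Simple V] :
    Module.finrank ℂ V ∣ Nat.card G := by
  classical
  have := Fintype.ofFinite G
  let A := integralClosure ℤ ℂ
  let ch : G → A := fun g => ⟨V.character g⁻¹, isIntegral_char V g⁻¹⟩
  let z : MonoidAlgebra A G := ∑ g, MonoidAlgebra.single g (ch g)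
  let L : MonoidAlgebra A G →ₐ[A] Module.End ℂ V := MonoidAlgebra.lift A _ G V.ρ
  have hLz : L z = ∑ g, V.character g⁻¹ • V.ρ g := by
    simp only [z, L, map_sum, MonoidAlgebra.lift_single]
    rfl
  have hcomm : ∀ h, (L z : V →ₗ[ℂ] V) ∘ₗ V.ρ h = V.ρ h ∘ₗ (L z : V →ₗ[ℂ] V) := by
    intro h
    rw [hLz]
    change (∑ g, V.character g⁻¹ • V.ρ g) * V.ρ h = V.ρ h * (∑ g, V.character g⁻¹ • V.ρ g)
    rw [Finset.sum_mul, Finset.mul_sum]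
    refine Fintype.sum_equiv (MulAut.conj h⁻¹).toEquiv _ _ fun g => ?_
    rw [smul_mul_assoc, mul_smul_comm, ← map_mul, ← map_mul]
    simp only [MulEquiv.toEquiv_eq_coe, EquivLike.coe_coe, MulAut.conj_apply, inv_inv]
    congr 1
    · have := V.char_conj g⁻¹ h⁻¹
      rw [← this]; congr 1; group
    · congr 1; group
  obtain ⟨c, hc⟩ := schur_scalar V (L z) hcomm
  have hsimp := (FDRep.simple_iff_char_is_norm_one V).mp inferInstance
  have htr : c * Module.finrank ℂ V = Nat.card G := by
    rw [← hsimp]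
    have h1 : LinearMap.trace ℂ V (L z) = c * Module.finrank ℂ V := by
      rw [hc]; simp
    rw [← h1, hLz, map_sum]
    refine Finset.sum_congr rfl fun g _ => ?_
    rw [map_smul, smul_eq_mul, mul_comm]; rfl
  have hintg : IsIntegral A (L z) := (IsIntegral.of_finite A z).map L
  have hd : Module.finrank ℂ V ≠ 0 := by
    intro h0
    rw [h0] at htr
    have : (Nat.card G : ℂ) ≠ 0 := by exact_mod_cast Nat.card_pos.ne'
    exact this (by simpa using htr.symm)
  have hnt : Nontrivial V := Module.nontrivial_of_finrank_pos (R := ℂ) (Nat.pos_of_ne_zero hd)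
  have hcA : IsIntegral A c := by
    have : L z = algebraMap ℂ (Module.End ℂ V) c := by rw [hc]; rfl
    rw [this] at hintg
    exact (isIntegral_algebraMap_iff (FaithfulSMul.algebraMap_injective ℂ (Module.End ℂ V))).mp hintg
  have hcZ : IsIntegral ℤ c := isIntegral_trans (A := A) c hcA
  have hcq : c = algebraMap ℚ ℂ ((Nat.card G : ℚ) / Module.finrank ℂ V) := by
    have : (Module.finrank ℂ V : ℂ) ≠ 0 := by exact_mod_cast hd
    simp only [map_div₀, map_natCast]
    field_simp
    exact htr
  rw [hcq, isIntegral_algebraMap_iff (algebraMap ℚ ℂ).injective] at hcZ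
  obtain ⟨n, hn⟩ := IsIntegrallyClosed.isIntegral_iff.mp hcZ
  have hdq : (Module.finrank ℂ V : ℚ) ≠ 0 := by exact_mod_cast hd
  rw [eq_div_iff hdq] at hn
  have : (Module.finrank ℂ V : ℤ) ∣ Nat.card G := ⟨n, by
    have : (n : ℚ) * Module.finrank ℂ V = Nat.card G := by simpa using hn
    rw [mul_comm]; exact_mod_cast this.symm⟩
  exact_mod_cast this

/-- If a simple `S` occurs in `V`, there is a representation with character `V - S`. -/
theorem exists_complement {G : Type} [Group G] [Fintype G] (V S : FDRep ℂ G) [Simple S]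
    (h : ∑ g : G, V.character g * S.character g⁻¹ = Nat.card G) :
    ∃ W : FDRep ℂ G, ∀ g, W.character g = V.character g - S.character g := by
  have hG : (Nat.card G : ℂ) ≠ 0 := by exact_mod_cast Nat.card_pos.ne'
  have hN : NeZero (Nat.card G : ℂ) := ⟨hG⟩
  have := invertibleOfNonzero hG
  have h1 := FDRep.scalar_product_char_eq_finrank_equivariant S V
  rw [h, inv_mul_cancel₀ hG] at h1
  have h2 : 0 < Module.finrank ℂ (S ⟶ V) := by
    have : Module.finrank ℂ (S ⟶ V) = 1 := by exact_mod_cast h1.symm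
    omega
  obtain ⟨f, hf⟩ := (Module.finrank_pos_iff_exists_ne_zero (R := ℂ)).mp h2
  have : Mono f := mono_of_nonzero_from_simple hf
  let p : V ⟶ S := Injective.factorThru (𝟙 S) f
  have hp : f ≫ p = 𝟙 S := Injective.comp_factorThru (𝟙 S) f
  let F : S →ₗ[ℂ] V := f.hom.hom.hom
  let P : V →ₗ[ℂ] S := p.hom.hom.hom
  have hPF : P ∘ₗ F = LinearMap.id := congrArg (fun q : S ⟶ S => q.hom.hom.hom) hp
  have hF : ∀ g, F ∘ₗ S.ρ g = V.ρ g ∘ₗ F := fun g => congrArg (fun q => q.hom.hom) (f.comm g)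
  have hP : ∀ g, P ∘ₗ V.ρ g = S.ρ g ∘ₗ P := fun g => congrArg (fun q => q.hom.hom) (p.comm g)
  have hPx : ∀ g x, P (V.ρ g x) = S.ρ g (P x) := fun g x => LinearMap.congr_fun (hP g) x
  have hPFx : ∀ x, P (F x) = x := fun x => LinearMap.congr_fun hPF x
  let U : Subrepresentation V.ρ :=
    ⟨LinearMap.ker P, fun g v hv => by
      rw [LinearMap.mem_ker] at hv ⊢
      rw [hPx, hv, map_zero]⟩
  let ι : U.toSubmodule →ₗ[ℂ] V := U.toSubmodule.subtype
  let q : V →ₗ[ℂ] U.toSubmodule := (LinearMap.id - F ∘ₗ P).codRestrict _ (fun x => by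
    change P (x - F (P x)) = 0
    rw [map_sub, hPFx, sub_self])
  have hιq : ι ∘ₗ q = LinearMap.id - F ∘ₗ P := rfl
  have hqι : q ∘ₗ ι = LinearMap.id := by
    ext x
    change (x : V) - F (P x) = x
    have hx : P (x : V) = 0 := x.2
    rw [hx, map_zero, sub_zero]
  refine ⟨FDRep.of U.toRepresentation, fun g => ?_⟩
  have e1 : V.ρ g ∘ₗ ι = ι ∘ₗ U.toRepresentation g := rfl
  have e2 : V.ρ g = (V.ρ g ∘ₗ ι) ∘ₗ q + (V.ρ g ∘ₗ F) ∘ₗ P := by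
    rw [LinearMap.comp_assoc, hιq, LinearMap.comp_assoc]
    ext x
    simp
  have e3 : V.character g = LinearMap.trace ℂ _ ((V.ρ g ∘ₗ ι) ∘ₗ q)
      + LinearMap.trace ℂ _ ((V.ρ g ∘ₗ F) ∘ₗ P) := by
    rw [← map_add, ← e2]; rfl
  rw [e3, ← hF, e1, LinearMap.comp_assoc, LinearMap.comp_assoc, LinearMap.trace_comp_comm',
    LinearMap.trace_comp_comm' (S.ρ g ∘ₗ P) F, LinearMap.comp_assoc, LinearMap.comp_assoc,
    hqι, hPF, LinearMap.comp_id, LinearMap.comp_id]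
  change _ = _ + S.character g - S.character g
  rw [add_sub_cancel_right]
  rfl

/-- If the character vanishes on all nontrivial powers of an element of prime order `ℓ`, then `ℓ`
divides the degree. -/
theorem dvd_degree {G : Type} [Group G] [Finite G] (V : FDRep ℂ G) (ℓ : ℕ) (c : G)
    (hc : orderOf c = ℓ) (hv : ∀ i, 0 < i → i < ℓ → V.character (c ^ i) = 0) :
    ℓ ∣ Module.finrank ℂ V := by
  classical
  have := Fintype.ofFinite G
  have hcard : Nat.card (Subgroup.zpowers c) = ℓ := by rw [Nat.card_zpowers, hc]
  have hl : 0 < ℓ := hc ▸ orderOf_pos c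
  let R : Representation ℂ (Subgroup.zpowers c) V := V.ρ.comp (Subgroup.zpowers c).subtype
  have hG : (Nat.card (Subgroup.zpowers c) : ℂ) ≠ 0 := by exact_mod_cast Nat.card_pos.ne'
  have := invertibleOfNonzero hG
  have h1 := R.card_inv_mul_sum_char_eq_finrank
  have h2 : ∑ g, R.character g = R.character 1 := by
    refine Fintype.sum_eq_single 1 fun x hx => ?_
    obtain ⟨x, hx'⟩ := x
    obtain ⟨i, hi, rfl⟩ := (mem_zpowers_iff_mem_range_orderOf.mp hx' |> Finset.mem_image.mp)
    rw [Finset.mem_range, hc] at hi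
    rcases Nat.eq_zero_or_pos i with rfl | h0
    · exact absurd (Subtype.ext (pow_zero c)) hx
    · exact hv i h0 hi
  rw [h2, Representation.char_one, hcard] at h1
  have hl' : (ℓ : ℂ) ≠ 0 := by exact_mod_cast hl.ne'
  rw [inv_mul_eq_iff_eq_mul₀ hl'] at h1
  exact ⟨_, by exact_mod_cast h1⟩

open ComplexConjugate in
/-- If orthonormal class functions already exhaust `|C_G(c)|`, then every class function
orthogonal to them vanishes at `c`. -/
theorem vanish_of_orthogonal {G : Type} [Group G] [Fintype G] {ι : Type} [Fintype ι]
    [DecidableEq ι] (ψ : ι → G → ℂ) (c : G)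
    (hcl : ∀ i g h, ψ i (h * g * h⁻¹) = ψ i g)
    (horth : ∀ i j, ∑ g, ψ i g * conj (ψ j g) = if i = j then (Nat.card G : ℂ) else 0)
    (hn : ∀ i, ‖ψ i c‖ = 1)
    (hC : Nat.card (Subgroup.centralizer {c}) ≤ Fintype.card ι)
    (χ : G → ℂ) (hχcl : ∀ g h, χ (h * g * h⁻¹) = χ g)
    (hχ : ∀ i, ∑ g, χ g * conj (ψ i g) = 0) : χ c = 0 := by
  classical
  have hG : (Nat.card G : ℂ) ≠ 0 := by exact_mod_cast Nat.card_pos.ne'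
  let f : G → ℂ := fun g => ∑ x : G, if x * c * x⁻¹ = g then 1 else 0
  have hf : ∀ u : G → ℂ, (∀ g h, u (h * g * h⁻¹) = u g) → ∑ g, f g * u g = Nat.card G * u c := by
    intro u hu
    simp only [f, Finset.sum_mul]
    rw [Finset.sum_comm]
    simp [hu]
  have hfr : ∀ g, conj (f g) = f g := by
    intro g
    simp only [f, map_sum]
    refine Finset.sum_congr rfl fun x _ => ?_
    split_ifs <;> simp
  have hfc : f c = Nat.card (Subgroup.centralizer {c}) := by
    simp only [f]
    rw [Finset.sum_boole, Nat.card_eq_fintype_card, Fintype.card_subtype]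
    congr 2
    ext x
    simp only [Finset.mem_filter, Finset.mem_univ, true_and, Subgroup.mem_centralizer_singleton_iff,
      mul_inv_eq_iff_eq_mul]
  have hfcl : ∀ g h, f (h * g * h⁻¹) = f g := by
    intro g h
    simp only [f]
    refine Fintype.sum_equiv (Equiv.mulLeft h⁻¹) _ _ fun x => ?_
    have : (x * c * x⁻¹ = h * g * h⁻¹) ↔ (h⁻¹ * x * c * (h⁻¹ * x)⁻¹ = g) := by
      constructor
      · intro e
        calc h⁻¹ * x * c * (h⁻¹ * x)⁻¹ = h⁻¹ * (x * c * x⁻¹) * h := by group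
          _ = g := by rw [e]; group
      · rintro rfl; group
    simp [this]
  let p : G → ℂ := fun g => ∑ i, conj (ψ i c) * ψ i g
  have hnn : ∀ i, conj (ψ i c) * ψ i c = 1 := by
    intro i
    rw [Complex.conj_mul', hn]; simp
  have hpc : p c = Fintype.card ι := by
    simp [p, hnn]
  have hpcl : ∀ g h, p (h * g * h⁻¹) = p g := by
    intro g h; simp [p, hcl]
  have hpψ : ∀ j, ∑ g, p g * conj (ψ j g) = conj (ψ j c) * Nat.card G := by
    intro j
    simp only [p, Finset.sum_mul]
    rw [Finset.sum_comm]
    simp_rw [mul_assoc, ← Finset.mul_sum, horth]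
    simp
  have hpp : ∀ u : G → ℂ, ∑ g, u g * conj (p g) = ∑ j, ψ j c * ∑ g, u g * conj (ψ j g) := by
    intro u
    simp only [p, map_sum, map_mul, Complex.conj_conj, Finset.mul_sum]
    rw [Finset.sum_comm]
    refine Finset.sum_congr rfl fun j _ => Finset.sum_congr rfl fun g _ => by ring
  have hE : ∑ g, (f g - p g) * conj (f g - p g)
      = Nat.card G * (Nat.card (Subgroup.centralizer {c}) - Fintype.card ι) := by
    have e : ∀ g, (f g - p g) * conj (f g - p g)
        = f g * f g - f g * conj (p g) - f g * p g + p g * conj (p g) := by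
      intro g; rw [map_sub, hfr]; ring
    simp_rw [e]
    rw [Finset.sum_add_distrib, Finset.sum_sub_distrib, Finset.sum_sub_distrib, hf f hfcl,
      hf p hpcl, hf (fun g => conj (p g)) (fun g h => by simp only [hpcl]), hpp p]
    simp_rw [hpψ]
    have : ∀ j, ψ j c * (conj (ψ j c) * (Nat.card G : ℂ)) = Nat.card G := by
      intro j
      rw [← mul_assoc, mul_comm (ψ j c), hnn, one_mul]
    simp_rw [this]
    simp only [hfc, hpc, map_natCast, Finset.sum_const, Finset.card_univ, nsmul_eq_mul]
    ring
  have hE' : ∑ g, Complex.normSq (f g - p g) ≤ 0 := by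
    have h1 : ((∑ g, Complex.normSq (f g - p g) : ℝ) : ℂ)
        = ((Nat.card G * (Nat.card (Subgroup.centralizer {c}) - Fintype.card ι) : ℝ) : ℂ) := by
      push_cast
      rw [← hE]
      exact Finset.sum_congr rfl fun g _ => (Complex.mul_conj _).symm
    rw [Complex.ofReal_inj] at h1
    rw [h1]
    have : (Nat.card (Subgroup.centralizer {c}) : ℝ) ≤ Fintype.card ι := by exact_mod_cast hC
    exact mul_nonpos_of_nonneg_of_nonpos (by positivity) (by linarith)
  have hfp : ∀ g, f g = p g := by
    have h0 := (Finset.sum_eq_zero_iff_of_nonneg (s := Finset.univ)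
      (f := fun g => Complex.normSq (f g - p g)) (fun g _ => Complex.normSq_nonneg _)).mp
      (le_antisymm hE' (Finset.sum_nonneg fun g _ => Complex.normSq_nonneg _))
    intro g
    have := h0 g (Finset.mem_univ g)
    exact sub_eq_zero.mp (Complex.normSq_eq_zero.mp this)
  have h1 := hf χ hχcl
  have h2 : ∑ g, f g * χ g = 0 := by
    have : ∀ g, f g * χ g = χ g * conj (p g) := by
      intro g; rw [← hfp, hfr, mul_comm]
    simp_rw [this]
    rw [hpp χ]
    simp [hχ]
  rw [h2] at h1
  exact (mul_eq_zero.mp h1.symm).resolve_left hG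

section Combinatorics
open Equiv Finset

variable {α : Type} [Fintype α] [DecidableEq α]

theorem perm_apply_inv (g : Perm α) (x : α) : g (g⁻¹ x) = x := g.apply_symm_apply x

theorem perm_inv_apply (g : Perm α) (x : α) : g⁻¹ (g x) = x := g.symm_apply_apply x

/-- The sign of the restriction of `g` to `I` if `I` is `g`-stable, and `0` otherwise. -/
def wt (g : Perm α) (I : Finset α) : ℤ :=
  if h : ∀ x, g x ∈ I ↔ x ∈ I then (Perm.sign (g.subtypePerm h) : ℤˣ) else 0

/-- The character of the `k`-th exterior power of the permutation representation. -/
def phi (k : ℕ) (g : Perm α) : ℤ := ∑ I ∈ powersetCard k univ, wt g I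

theorem wt_mul (g h : Perm α) (I : Finset α) (hh : ∀ x, h x ∈ I ↔ x ∈ I) :
    wt (g * h) I = wt g I * wt h I := by
  unfold wt
  by_cases hg : ∀ x, g x ∈ I ↔ x ∈ I
  · have hgh : ∀ x, (g * h) x ∈ I ↔ x ∈ I := fun x => (hg _).trans (hh x)
    rw [dif_pos hg, dif_pos hh, dif_pos hgh, ← Perm.subtypePerm_mul g h hg hh, map_mul]
    simp
  · have hgh : ¬ ∀ x, (g * h) x ∈ I ↔ x ∈ I := fun H => hg fun x => by
      have h1 := H (h⁻¹ x)
      have h2 := hh (h⁻¹ x)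
      simp only [Perm.mul_apply, perm_apply_inv] at h1 h2
      exact h1.trans h2.symm
    rw [dif_neg hg, dif_neg hgh, zero_mul]

theorem wt_one (I : Finset α) : wt (1 : Perm α) I = 1 := by
  unfold wt
  have h : ∀ x, (1 : Perm α) x ∈ I ↔ x ∈ I := fun _ => Iff.rfl
  rw [dif_pos h]
  have : (1 : Perm α).subtypePerm (p := (· ∈ I)) (fun x => Iff.rfl) = 1 := Perm.subtypePerm_one _
  rw [this]; simp

theorem wt_swap_mem (a b : α) (hab : a ≠ b) (I : Finset α) (ha : a ∈ I) (hb : b ∈ I) :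
    (∀ x, swap a b x ∈ I ↔ x ∈ I) ∧ wt (swap a b) I = -1 := by
  have h : ∀ x, swap a b x ∈ I ↔ x ∈ I := by
    intro x
    rw [swap_apply_def]
    split_ifs <;> simp_all
  refine ⟨h, ?_⟩
  unfold wt
  rw [dif_pos h]
  have : (swap a b).subtypePerm h = swap (⟨a, ha⟩ : {x // x ∈ I}) ⟨b, hb⟩ := by
    ext x
    simp only [Perm.subtypePerm_apply, swap_apply_def, Subtype.ext_iff]
    split_ifs <;> rfl
  rw [this, Perm.sign_swap (by simpa using hab)]
  rfl

theorem wt_swap_not_mem (a b : α) (I : Finset α) (ha : a ∉ I) (hb : b ∉ I) :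
    (∀ x, swap a b x ∈ I ↔ x ∈ I) ∧ wt (swap a b) I = 1 := by
  have h : ∀ x, swap a b x ∈ I ↔ x ∈ I := by
    intro x
    rw [swap_apply_def]
    split_ifs <;> simp_all
  refine ⟨h, ?_⟩
  unfold wt
  rw [dif_pos h]
  have : (swap a b).subtypePerm h = 1 := by
    ext x
    have h1 : (x : α) ≠ a := fun e => ha (e ▸ x.2)
    have h2 : (x : α) ≠ b := fun e => hb (e ▸ x.2)
    simp [Perm.subtypePerm_apply, swap_apply_of_ne_of_ne h1 h2]
  rw [this]; simp

theorem wt_inv (g : Perm α) (I : Finset α) : wt g⁻¹ I = wt g I := by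
  unfold wt
  by_cases hg : ∀ x, g x ∈ I ↔ x ∈ I
  · have hg' : ∀ x, g⁻¹ x ∈ I ↔ x ∈ I := fun x => by
      have := hg (g⁻¹ x)
      rw [perm_apply_inv] at this
      exact this.symm
    rw [dif_pos hg, dif_pos hg', Perm.subtypePerm_inv, Perm.sign_inv]
  · have hg' : ¬ ∀ x, g⁻¹ x ∈ I ↔ x ∈ I := fun H => hg fun x => by
      have := H (g x)
      rw [perm_inv_apply] at this
      exact this.symm
    rw [dif_neg hg, dif_neg hg']

theorem phi_inv (k : ℕ) (g : Perm α) : phi k g⁻¹ = phi k g := by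
  simp [phi, wt_inv]

theorem phi_one (k : ℕ) : phi k (1 : Perm α) = (Fintype.card α).choose k := by
  simp [phi, wt_one]

/-- Pairs of different shape are orthogonal. -/
theorem pair_zero (I J : Finset α) (h : 2 ≤ #(I \ J) ∨ 2 ≤ #(J \ I)) :
    ∑ g : Perm α, wt g I * wt g J = 0 := by
  have key : ∀ I J : Finset α, 2 ≤ #(I \ J) → ∑ g : Perm α, wt g I * wt g J = 0 := by
    intro I J h
    obtain ⟨a, ha, b, hb, hab⟩ := one_lt_card.mp h
    rw [mem_sdiff] at ha hb
    obtain ⟨h1, h2⟩ := wt_swap_mem a b hab I ha.1 hb.1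
    obtain ⟨h3, h4⟩ := wt_swap_not_mem a b J ha.2 hb.2
    have e : ∑ g : Perm α, wt g I * wt g J = ∑ g : Perm α, -(wt g I * wt g J) := by
      refine Fintype.sum_equiv (Equiv.mulRight (swap a b)) _ _ fun g => ?_
      simp only [Equiv.coe_mulRight]
      rw [wt_mul g _ I h1, wt_mul g _ J h3, h2, h4]
      ring
    rw [sum_neg_distrib] at e
    omega
  rcases h with h | h
  · exact key I J h
  · simp_rw [mul_comm (wt _ I)]
    exact key J I h

/-- Removing at most one point from a stable set does not change the sign. -/
theorem wt_inter (g : Perm α) (I J : Finset α) (hI : ∀ x, g x ∈ I ↔ x ∈ I)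
    (hJ : ∀ x, g x ∈ J ↔ x ∈ J) (h : #(I \ J) ≤ 1) : wt g I = wt g (I ∩ J) := by
  have hIJ : ∀ x, g x ∈ I ∩ J ↔ x ∈ I ∩ J := fun x => by simp [hI, hJ]
  unfold wt
  rw [dif_pos hI, dif_pos hIJ]
  have e : Perm.ofSubtype (g.subtypePerm hI) = Perm.ofSubtype (g.subtypePerm hIJ) := by
    ext x
    by_cases hx : x ∈ I
    · rw [Perm.ofSubtype_subtypePerm_of_mem hI hx]
      by_cases hx' : x ∈ I ∩ J
      · rw [Perm.ofSubtype_subtypePerm_of_mem hIJ hx']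
      · rw [Perm.ofSubtype_subtypePerm_of_not_mem hIJ hx']
        have hxJ : x ∉ J := fun hj => hx' (mem_inter.mpr ⟨hx, hj⟩)
        refine card_le_one.mp h _ ?_ _ ?_ <;> simp [hI, hJ, hx, hxJ]
    · have hx' : x ∉ I ∩ J := fun hh => hx (mem_inter.mp hh).1
      rw [Perm.ofSubtype_subtypePerm_of_not_mem hI hx,
        Perm.ofSubtype_subtypePerm_of_not_mem hIJ hx']
  rw [← Perm.sign_ofSubtype (g.subtypePerm hI), e, Perm.sign_ofSubtype]

theorem pair_good (I J : Finset α) (h1 : #(I \ J) ≤ 1) (h2 : #(J \ I) ≤ 1) :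
    ∑ g : Perm α, wt g I * wt g J
      = #{g : Perm α | (∀ x, g x ∈ I ↔ x ∈ I) ∧ (∀ x, g x ∈ J ↔ x ∈ J)} := by
  rw [card_filter]
  push_cast
  refine sum_congr rfl fun g _ => ?_
  by_cases hI : ∀ x, g x ∈ I ↔ x ∈ I
  · by_cases hJ : ∀ x, g x ∈ J ↔ x ∈ J
    · rw [if_pos ⟨hI, hJ⟩, wt_inter g I J hI hJ h1, wt_inter g J I hJ hI h2, inter_comm J I]
      have hIJ : ∀ x, g x ∈ I ∩ J ↔ x ∈ I ∩ J := fun x => by simp [hI, hJ]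
      unfold wt
      rw [dif_pos hIJ, ← Units.val_mul, Int.units_mul_self]
      rfl
    · rw [if_neg (fun h => hJ h.2)]
      unfold wt
      rw [dif_neg hJ, mul_zero]
  · rw [if_neg (fun h => hI h.1)]
    unfold wt
    rw [dif_neg hI, zero_mul]

theorem exists_perm_pair (I J I' J' : Finset α) (h1 : #I = #I') (h2 : #J = #J')
    (h3 : #(I \ J) = #(I' \ J')) :
    ∃ g : Perm α, (∀ x, g x ∈ I' ↔ x ∈ I) ∧ (∀ x, g x ∈ J' ↔ x ∈ J) := by
  have key : ∀ c : Bool × Bool, Nonempty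
      ({a : α // (decide (a ∈ I), decide (a ∈ J)) = c} ≃
        {a : α // (decide (a ∈ I'), decide (a ∈ J')) = c}) := by
    have a1 := card_sdiff_add_card_inter I J
    have a2 := card_sdiff_add_card_inter I' J'
    have a3 := card_sdiff_add_card_inter J I
    have a4 := card_sdiff_add_card_inter J' I'
    rw [inter_comm] at a3 a4
    have a5 := card_union_add_card_inter I J
    have a6 := card_union_add_card_inter I' J'
    have a7 := card_compl_add_card (I ∪ J)
    have a8 := card_compl_add_card (I' ∪ J')
    rintro ⟨b1, b2⟩
    refine ⟨Fintype.equivOfCardEq ?_⟩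
    rw [Fintype.card_subtype, Fintype.card_subtype]
    cases b1 <;> cases b2
    · have e1 : ({a | (decide (a ∈ I), decide (a ∈ J)) = (false, false)} : Finset α)
          = (I ∪ J)ᶜ := by ext; simp
      have e2 : ({a | (decide (a ∈ I'), decide (a ∈ J')) = (false, false)} : Finset α)
          = (I' ∪ J')ᶜ := by ext; simp
      rw [e1, e2]; omega
    · have e1 : ({a | (decide (a ∈ I), decide (a ∈ J)) = (false, true)} : Finset α)
          = J \ I := by ext; simp [and_comm]
      have e2 : ({a | (decide (a ∈ I'), decide (a ∈ J')) = (false, true)} : Finset α)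
          = J' \ I' := by ext; simp [and_comm]
      rw [e1, e2]; omega
    · have e1 : ({a | (decide (a ∈ I), decide (a ∈ J)) = (true, false)} : Finset α)
          = I \ J := by ext; simp
      have e2 : ({a | (decide (a ∈ I'), decide (a ∈ J')) = (true, false)} : Finset α)
          = I' \ J' := by ext; simp
      rw [e1, e2]; omega
    · have e1 : ({a | (decide (a ∈ I), decide (a ∈ J)) = (true, true)} : Finset α)
          = I ∩ J := by ext; simp
      have e2 : ({a | (decide (a ∈ I'), decide (a ∈ J')) = (true, true)} : Finset α)
          = I' ∩ J' := by ext; simp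
      rw [e1, e2]; omega
  let g : Perm α := Equiv.ofFiberEquiv (f := fun a => (decide (a ∈ I), decide (a ∈ J)))
    (g := fun a => (decide (a ∈ I'), decide (a ∈ J'))) fun c => (key c).some
  have hg : ∀ x, (decide (g x ∈ I'), decide (g x ∈ J')) = (decide (x ∈ I), decide (x ∈ J)) :=
    fun x => Equiv.ofFiberEquiv_map (f := fun a => (decide (a ∈ I), decide (a ∈ J)))
      (g := fun a => (decide (a ∈ I'), decide (a ∈ J'))) _ x
  refine ⟨g, fun x => ?_, fun x => ?_⟩
  · simpa using congrArg Prod.fst (hg x)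
  · simpa using congrArg Prod.snd (hg x)

/-- Pairs of subsets of prescribed relative position. -/
def shape (α : Type) [Fintype α] [DecidableEq α] (k j a : ℕ) : Finset (Finset α × Finset α) :=
  {p ∈ powersetCard k univ ×ˢ powersetCard j univ | #(p.1 \ p.2) = a}

theorem mem_shape (k j a : ℕ) (p : Finset α × Finset α) :
    p ∈ shape α k j a ↔ #p.1 = k ∧ #p.2 = j ∧ #(p.1 \ p.2) = a := by
  simp [shape, and_assoc]

theorem burnside_shape (k j a : ℕ) (h : (shape α k j a).Nonempty) :
    ∑ p ∈ shape α k j a,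
      #{g : Perm α | (∀ x, g x ∈ p.1 ↔ x ∈ p.1) ∧ (∀ x, g x ∈ p.2 ↔ x ∈ p.2)}
      = (Fintype.card α).factorial := by
  obtain ⟨p, hp⟩ := h
  rw [mem_shape] at hp
  let F : Perm α → Finset α × Finset α := fun g => (p.1.map g.toEmbedding, p.2.map g.toEmbedding)
  have hF : ∀ g ∈ (univ : Finset (Perm α)), F g ∈ shape α k j a := by
    intro g _
    rw [mem_shape]
    simp only [F, card_map, ← Finset.map_sdiff]
    exact hp
  have hFq : ∀ g q, F g = q ↔ (∀ x, g x ∈ q.1 ↔ x ∈ p.1) ∧ (∀ x, g x ∈ q.2 ↔ x ∈ p.2) := by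
    have aux : ∀ (g : Perm α) (A B : Finset α),
        A.map g.toEmbedding = B ↔ ∀ x, g x ∈ B ↔ x ∈ A := by
      intro g A B
      constructor
      · rintro rfl x; simp
      · intro H
        ext y
        have := H (g.symm y)
        rw [Equiv.apply_symm_apply] at this
        rw [this]
        simp [Finset.mem_map_equiv]
    intro g q
    rw [← aux, ← aux]
    simp [F, Prod.ext_iff]
  rw [← Fintype.card_perm, ← Finset.card_univ, card_eq_sum_card_fiberwise hF]
  refine sum_congr rfl fun q hq => ?_
  rw [mem_shape] at hq
  obtain ⟨g0, hg1, hg2⟩ := exists_perm_pair p.1 p.2 q.1 q.2 (hp.1.trans hq.1.symm)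
    (hp.2.1.trans hq.2.1.symm) (hp.2.2.trans hq.2.2.symm)
  refine card_bij (fun g _ => g * g0) ?_ ?_ ?_
  · intro g hg
    simp only [mem_filter, mem_univ, true_and] at hg ⊢
    rw [hFq]
    exact ⟨fun x => (hg.1 _).trans (hg1 x), fun x => (hg.2 _).trans (hg2 x)⟩
  · intro g _ g' _ e
    exact mul_right_cancel e
  · intro g hg
    simp only [mem_filter, mem_univ, true_and] at hg
    rw [hFq] at hg
    refine ⟨g * g0⁻¹, ?_, by simp⟩
    simp only [mem_filter, mem_univ, true_and]
    constructor
    · intro x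
      have h1 := hg.1 (g0⁻¹ x)
      have h2 := hg1 (g0⁻¹ x)
      rw [perm_apply_inv] at h2
      exact h1.trans h2.symm
    · intro x
      have h1 := hg.2 (g0⁻¹ x)
      have h2 := hg2 (g0⁻¹ x)
      rw [perm_apply_inv] at h2
      exact h1.trans h2.symm

theorem sum_shape_good (k j a : ℕ) (h : (shape α k j a).Nonempty) (ha : a ≤ 1)
    (hj : j + a ≤ k + 1) :
    ∑ p ∈ shape α k j a, ∑ g : Perm α, wt g p.1 * wt g p.2 = (Fintype.card α).factorial := by
  rw [← burnside_shape k j a h]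
  push_cast
  refine sum_congr rfl fun p hp => ?_
  rw [mem_shape] at hp
  have a1 := card_sdiff_add_card_inter p.1 p.2
  have a3 := card_sdiff_add_card_inter p.2 p.1
  rw [inter_comm] at a3
  exact pair_good p.1 p.2 (by omega) (by omega)

theorem sum_shape_bad (k j a : ℕ) (h : 2 ≤ a ∨ k + 2 ≤ j + a) :
    ∑ p ∈ shape α k j a, ∑ g : Perm α, wt g p.1 * wt g p.2 = 0 := by
  refine sum_eq_zero fun p hp => ?_
  rw [mem_shape] at hp
  have a1 := card_sdiff_add_card_inter p.1 p.2
  have a3 := card_sdiff_add_card_inter p.2 p.1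
  rw [inter_comm] at a3
  exact pair_zero p.1 p.2 (by omega)

theorem gram_eq (k j : ℕ) :
    ∑ g : Perm α, phi k g * phi j g
      = ∑ a ∈ range (k + 1), ∑ p ∈ shape α k j a, ∑ g : Perm α, wt g p.1 * wt g p.2 := by
  have e : ∑ g : Perm α, phi k g * phi j g
      = ∑ p ∈ powersetCard k univ ×ˢ powersetCard j univ,
          ∑ g : Perm α, wt g p.1 * wt g p.2 := by
    rw [sum_comm]
    refine sum_congr rfl fun g _ => ?_
    rw [phi, phi, sum_mul_sum, sum_product]
  rw [e]
  symm
  refine sum_fiberwise_of_maps_to (g := fun p : Finset α × Finset α => #(p.1 \ p.2)) ?_ _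
  intro p hp
  simp only [mem_product, mem_powersetCard, subset_univ, true_and] at hp
  rw [mem_range]
  have := card_le_card (sdiff_subset (s := p.1) (t := p.2))
  omega

theorem gram_far (k j : ℕ) (h : k + 2 ≤ j) : ∑ g : Perm α, phi k g * phi j g = 0 := by
  rw [gram_eq]
  exact sum_eq_zero fun a _ => sum_shape_bad k j a (by omega)

theorem gram_zero : ∑ g : Perm α, phi 0 g * phi 0 g = (Fintype.card α).factorial := by
  rw [gram_eq, zero_add, sum_range_one]
  exact sum_shape_good 0 0 0 ⟨(∅, ∅), by simp [mem_shape]⟩ (by omega) (by omega)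

theorem gram_next (k : ℕ) (hk : k + 1 ≤ Fintype.card α) :
    ∑ g : Perm α, phi k g * phi (k + 1) g = (Fintype.card α).factorial := by
  rw [gram_eq, sum_eq_single 0]
  · refine sum_shape_good k (k + 1) 0 ?_ (by omega) (by omega)
    obtain ⟨S, -, hS⟩ := exists_subset_card_eq (s := (univ : Finset α)) (n := k + 1) (by simpa)
    obtain ⟨x, hx⟩ : S.Nonempty := card_pos.mp (by omega)
    refine ⟨(S.erase x, S), ?_⟩
    rw [mem_shape]
    refine ⟨by rw [card_erase_of_mem hx]; omega, hS, ?_⟩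
    rw [card_eq_zero, sdiff_eq_empty_iff_subset]
    exact erase_subset x S
  · intro a _ ha
    exact sum_shape_bad _ _ _ (by omega)
  · simp

theorem gram_self (k : ℕ) (hk0 : 0 < k) (hk : k + 1 ≤ Fintype.card α) :
    ∑ g : Perm α, phi k g * phi k g = 2 * (Fintype.card α).factorial := by
  rw [gram_eq, ← sum_subset (s₁ := {0, 1}) (by intro x; simp; omega)
    (fun a _ ha => sum_shape_bad _ _ _ (by simp at ha; omega)), sum_pair (by simp)]
  obtain ⟨S, -, hS⟩ := exists_subset_card_eq (s := (univ : Finset α)) (n := k + 1) (by simpa)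
  obtain ⟨x, hx, y, hy, hxy⟩ := one_lt_card.mp (show 1 < #S by omega)
  rw [sum_shape_good k k 0 ?_ (by omega) (by omega), sum_shape_good k k 1 ?_ (by omega) (by omega)]
  · ring
  · refine ⟨(S.erase x, S.erase y), ?_⟩
    rw [mem_shape]
    refine ⟨by rw [card_erase_of_mem hx]; omega, by rw [card_erase_of_mem hy]; omega, ?_⟩
    rw [card_eq_one]
    refine ⟨y, ?_⟩
    ext z
    simp only [mem_sdiff, mem_erase, mem_singleton]
    grind
  · refine ⟨(S.erase x, S.erase x), ?_⟩
    rw [mem_shape]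
    refine ⟨by rw [card_erase_of_mem hx]; omega, by rw [card_erase_of_mem hx]; omega, by simp⟩

/-- Hook characters. -/
def hook : ℕ → Perm α → ℤ
  | 0, g => phi 0 g
  | k + 1, g => phi (k + 1) g - hook k g

theorem hook_inv (k : ℕ) (g : Perm α) : hook k g⁻¹ = hook k g := by
  induction k with
  | zero => exact phi_inv 0 g
  | succ k ih => simp only [hook, ih, phi_inv]

theorem hook_phi (k j : ℕ) (hk : k + 1 ≤ Fintype.card α) (hj : k + 1 ≤ j) :
    ∑ g : Perm α, hook k g * phi j g = if j = k + 1 then ((Fintype.card α).factorial : ℤ) else 0 := by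
  induction k generalizing j with
  | zero =>
    simp only [hook]
    split_ifs with h
    · subst h; exact gram_next 0 hk
    · exact gram_far 0 j (by omega)
  | succ k ih =>
    simp only [hook, sub_mul, sum_sub_distrib]
    rw [ih j (by omega) (by omega), if_neg (by omega), sub_zero]
    split_ifs with h
    · subst h; exact gram_next (k + 1) hk
    · exact gram_far (k + 1) j (by omega)

theorem hook_orth_aux (k : ℕ) (hk : k + 1 ≤ Fintype.card α) :
    ∑ g : Perm α, hook k g * hook k g = (Fintype.card α).factorial ∧
    ∀ j < k, ∑ g : Perm α, hook j g * hook k g = 0 := by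
  induction k with
  | zero => exact ⟨gram_zero, by omega⟩
  | succ k ih =>
    obtain ⟨ih1, ih2⟩ := ih (by omega)
    have h0 : ∑ g : Perm α, hook k g * hook (k + 1) g = 0 := by
      simp only [hook, mul_sub, sum_sub_distrib]
      rw [hook_phi k (k + 1) (by omega) le_rfl, if_pos rfl, ih1, sub_self]
    constructor
    · have e : ∀ g : Perm α, hook (k + 1) g * hook (k + 1) g
          = phi (k + 1) g * phi (k + 1) g - hook k g * phi (k + 1) g
            - hook k g * hook (k + 1) g := by
        intro g; simp only [hook]; ring
      simp_rw [e]
      rw [sum_sub_distrib, sum_sub_distrib, h0, gram_self (k + 1) (by omega) hk,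
        hook_phi k (k + 1) (by omega) le_rfl, if_pos rfl]
      ring
    · intro j hj
      rcases Nat.lt_succ_iff_lt_or_eq.mp hj with h | h
      · simp only [hook, mul_sub, sum_sub_distrib]
        rw [hook_phi j (k + 1) (by omega) (by omega), if_neg (by omega), ih2 j h, sub_self]
      · subst h; exact h0

theorem hook_orth (k j : ℕ) (hk : k + 1 ≤ Fintype.card α) (hj : j + 1 ≤ Fintype.card α) :
    ∑ g : Perm α, hook k g * hook j g = if k = j then ((Fintype.card α).factorial : ℤ) else 0 := by
  rcases lt_trichotomy k j with h | h | h
  · rw [if_neg h.ne, (hook_orth_aux j hj).2 k h]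
  · subst h; rw [if_pos rfl, (hook_orth_aux k hk).1]
  · rw [if_neg h.ne']
    simp_rw [mul_comm (hook k _)]
    exact (hook_orth_aux k hk).2 j h

theorem hook_one (k n : ℕ) (hn : Fintype.card α = n + 1) :
    hook k (1 : Perm α) = n.choose k := by
  induction k with
  | zero => simp [hook, phi_one]
  | succ k ih =>
    simp only [hook, ih, phi_one, hn, Nat.choose_succ_succ]
    push_cast; ring

/-- The hook characters take the values `±1` on a transitive cycle. -/
theorem hook_cycle (c : Perm α) (hc : ∀ I : Finset α, (∀ x, c x ∈ I ↔ x ∈ I) → I = ∅ ∨ I = univ)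
    (k : ℕ) (hk : k + 1 ≤ Fintype.card α) : hook k c = (-1) ^ k := by
  induction k with
  | zero =>
    simp only [hook, phi, powersetCard_zero, sum_singleton, pow_zero]
    unfold wt
    rw [dif_pos (by simp)]
    have : c.subtypePerm (p := (· ∈ (∅ : Finset α))) (by simp) = 1 := by
      ext x; exact absurd x.2 (notMem_empty _)
    rw [this]; simp
  | succ k ih =>
    rw [hook, ih (by omega)]
    have : phi (k + 1) c = 0 := by
      refine sum_eq_zero fun I hI => ?_
      rw [mem_powersetCard] at hI
      unfold wt
      rw [dif_neg]
      intro H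
      rcases hc I H with h | h
      · rw [h] at hI; simp at hI
      · rw [h, card_univ] at hI; omega
    rw [this]; ring

end Combinatorics

section MatrixRep
open Equiv Finset

variable {α : Type} [Fintype α] [DecidableEq α]

/-- A numbering of the elements of a `k`-subset. -/
noncomputable def numb {k : ℕ} (I : {I : Finset α // #I = k}) : {x // x ∈ I.1} ≃ Fin k :=
  I.1.equivFinOfCardEq I.2

/-- The matrix entries of the exterior power of the permutation representation. -/
noncomputable def extMat (k : ℕ) (g : Perm α) :
    Matrix {I : Finset α // #I = k} {I : Finset α // #I = k} ℂ := fun J I =>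
  if h : ∀ x, x ∈ I.1 ↔ g x ∈ J.1 then
    (((Perm.sign ((numb I).symm.trans ((g.subtypeEquiv h).trans (numb J))) : ℤˣ) : ℤ) : ℂ) else 0

theorem extMat_one (k : ℕ) : extMat k (1 : Perm α) = 1 := by
  ext J I
  rw [Matrix.one_apply]
  unfold extMat
  split_ifs with h1 h2 h2
  · subst h2
    have : (numb J).symm.trans (((1 : Perm α).subtypeEquiv h1).trans (numb J)) = Equiv.refl _ := by
      ext x
      simp [Equiv.subtypeEquiv]
    rw [this]; simp
  · exact absurd (Subtype.ext (Finset.ext fun x => (h1 x).symm)) h2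
  · exact absurd (fun x => by subst h2; rfl) h1
  · rfl

theorem extMat_mul (k : ℕ) (g h : Perm α) : extMat k (g * h) = extMat k g * extMat k h := by
  ext K I
  rw [Matrix.mul_apply]
  let J : {I : Finset α // #I = k} := ⟨I.1.map h.toEmbedding, by rw [card_map, I.2]⟩
  have hJ : ∀ x, x ∈ I.1 ↔ h x ∈ J.1 := fun x => by simp [J]
  rw [Finset.sum_eq_single J]
  · unfold extMat
    rw [dif_pos hJ]
    by_cases hg : ∀ x, x ∈ J.1 ↔ g x ∈ K.1
    · have hgh : ∀ x, x ∈ I.1 ↔ (g * h) x ∈ K.1 := fun x => (hJ x).trans (hg _)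
      rw [dif_pos hg, dif_pos hgh, ← Int.cast_mul, ← Units.val_mul, ← Perm.sign_mul]
      refine congrArg (fun σ => (((Perm.sign σ : ℤˣ) : ℤ) : ℂ)) ?_
      ext x
      simp [Equiv.subtypeEquiv]
    · rw [dif_neg hg, dif_neg, zero_mul]
      intro H
      apply hg
      intro x
      have h1 := H (h.symm x)
      have h2 := hJ (h.symm x)
      simp only [Perm.mul_apply, Equiv.apply_symm_apply] at h1 h2
      exact h2.symm.trans h1
  · intro J' _ hne
    have : extMat k h J' I = 0 := by
      unfold extMat
      rw [dif_neg]
      intro H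
      apply hne
      ext x
      have h1 := H (h.symm x)
      have h2 := hJ (h.symm x)
      simp only [Equiv.apply_symm_apply] at h1 h2
      exact h1.symm.trans h2
    rw [this, mul_zero]
  · simp

theorem extMat_trace (k : ℕ) (g : Perm α) : (extMat k g).trace = (phi k g : ℂ) := by
  unfold phi Matrix.trace
  push_cast
  rw [Finset.sum_subtype (p := fun I : Finset α => #I = k) (powersetCard k univ)
    (f := fun I => ((wt g I : ℤ) : ℂ)) (by simp)]
  refine Finset.sum_congr rfl fun I _ => ?_
  simp only [Matrix.diag_apply]
  unfold extMat wt
  by_cases h : ∀ x, g x ∈ I.1 ↔ x ∈ I.1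
  · have h' : ∀ x, x ∈ I.1 ↔ g x ∈ I.1 := fun x => (h x).symm
    rw [dif_pos h, dif_pos h']
    have := Perm.sign_symm_trans_trans (g.subtypePerm h) (numb I)
    rw [← this]
    rfl
  · rw [dif_neg h, dif_neg (fun H => h fun x => (H x).symm)]
    simp

/-- The exterior power of a permutation representation, twisted by a linear character. -/
noncomputable def twRep {G : Type} [Group G] (π : G →* Perm α) (δ : G →* ℂˣ) (k : ℕ) :
    Representation ℂ G ({I : Finset α // #I = k} → ℂ) where
  toFun x := (δ x : ℂ) • Matrix.toLin' (extMat k (π x))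
  map_one' := by simp [extMat_one]; rfl
  map_mul' x y := by
    simp only [map_mul, extMat_mul, Matrix.toLin'_mul, Units.val_mul]
    rw [smul_mul_smul_comm, Module.End.mul_eq_comp]

theorem exists_twRep {G : Type} [Group G] (π : G →* Perm α) (δ : G →* ℂˣ) (k : ℕ) :
    ∃ V : FDRep ℂ G, ∀ x, V.character x = (phi k (π x) : ℂ) * δ x := by
  refine ⟨FDRep.of (twRep π δ k), fun x => ?_⟩
  have : (FDRep.of (twRep π δ k)).character x
      = LinearMap.trace ℂ _ ((δ x : ℂ) • Matrix.toLin' (extMat k (π x))) := rfl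
  rw [this, map_smul, Matrix.trace_toLin'_eq, extMat_trace, smul_eq_mul, mul_comm]

end MatrixRep

section Abs
open Equiv Finset

variable {α : Type} [Fintype α] [DecidableEq α] {G : Type} [Group G] [Fintype G]

theorem sum_pullback (π : G →* Perm α) (hπ : Function.Surjective π) (F : Perm α → ℂ) :
    (Fintype.card α).factorial * ∑ x, F (π x) = Nat.card G * ∑ σ, F σ := by
  have h1 : ∀ τ : Perm α, ∑ x, F (π x * τ) = ∑ x, F (π x) := by
    intro τ
    obtain ⟨t, rfl⟩ := hπ τ
    refine Fintype.sum_equiv (Equiv.mulRight t) _ _ fun x => ?_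
    simp
  have h2 : ∀ x : G, ∑ τ : Perm α, F (π x * τ) = ∑ σ, F σ := by
    intro x
    refine Fintype.sum_equiv (Equiv.mulLeft (π x)) _ _ fun τ => ?_
    simp
  have h3 : ∑ τ : Perm α, ∑ x, F (π x * τ) = ∑ x, ∑ τ : Perm α, F (π x * τ) := sum_comm
  simp_rw [h1, h2] at h3
  simpa [Fintype.card_perm] using h3

theorem sum_pullback_int (π : G →* Perm α) (hπ : Function.Surjective π) (F : Perm α → ℤ) (a : ℤ)
    (hF : ∑ σ, F σ = a * (Fintype.card α).factorial) :
    ∑ x, ((F (π x) : ℤ) : ℂ) = Nat.card G * a := by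
  have h := sum_pullback π hπ (fun σ => ((F σ : ℤ) : ℂ))
  rw [← Int.cast_sum (s := univ) (f := F), hF] at h
  have h0 : ((Fintype.card α).factorial : ℂ) ≠ 0 := by exact_mod_cast Nat.factorial_ne_zero _
  apply mul_left_cancel₀ h0
  rw [h]; push_cast; ring

/-- The listed characters. -/
noncomputable def lst (π : G →* Perm α) (δ : G →* ℂˣ) (k j : ℕ) (x : G) : ℂ :=
  (hook k (π x) : ℂ) * (δ x : ℂ) ^ j

theorem lst_orth (π : G →* Perm α) (hπ : Function.Surjective π) (δ : G →* ℂˣ) (m : ℕ)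
    (z : G) (hz : π z = 1) (hzm : IsPrimitiveRoot (δ z) m) (k k' j j' : ℕ)
    (hk : k + 1 ≤ Fintype.card α) (hk' : k' + 1 ≤ Fintype.card α) (hj : j < m) (hj' : j' < m) :
    ∑ x, lst π δ k j x * lst π δ k' j' x⁻¹
      = if k = k' ∧ j = j' then (Nat.card G : ℂ) else 0 := by
  have hred : ∀ x, lst π δ k j x * lst π δ k' j' x⁻¹
      = ((hook k (π x) * hook k' (π x) : ℤ) : ℂ) * ((δ x : ℂ) ^ j * ((δ x : ℂ)⁻¹) ^ j') := by
    intro x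
    simp only [lst, map_inv, hook_inv, Units.val_inv_eq_inv_val]
    push_cast; ring
  simp_rw [hred]
  by_cases h : j = j'
  · subst h
    have : ∀ x, (δ x : ℂ) ^ j * ((δ x : ℂ)⁻¹) ^ j = 1 := fun x => by
      rw [← mul_pow, mul_inv_cancel₀ (δ x).ne_zero, one_pow]
    simp_rw [this, mul_one, and_true]
    rw [sum_pullback_int π hπ (fun σ => hook k σ * hook k' σ) (if k = k' then 1 else 0)]
    · split_ifs <;> simp
    · rw [hook_orth k k' hk hk']; split_ifs <;> simp
  · rw [if_neg (fun H => h H.2)]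
    set c : ℂ := (δ z : ℂ) ^ j * ((δ z : ℂ)⁻¹) ^ j' with hc
    have hc1 : c ≠ 1 := by
      intro H
      apply h
      apply hzm.pow_inj hj hj'
      ext
      push_cast
      rw [hc, inv_pow, mul_inv_eq_one₀ (pow_ne_zero _ (δ z).ne_zero)] at H
      exact H
    set S := ∑ x, ((hook k (π x) * hook k' (π x) : ℤ) : ℂ) * ((δ x : ℂ) ^ j * ((δ x : ℂ)⁻¹) ^ j')
      with hS
    have hcS : c * S = S := by
      rw [hS, mul_sum]
      refine Fintype.sum_equiv (Equiv.mulRight z) _ _ fun x => ?_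
      simp only [Equiv.coe_mulRight, map_mul, hz, mul_one, Units.val_mul, hc, mul_inv, mul_pow]
      ring
    have : (c - 1) * S = 0 := by rw [sub_mul, hcS]; ring
    rcases mul_eq_zero.mp this with h' | h'
    · exact absurd (sub_eq_zero.mp h') hc1
    · exact h'

open ComplexConjugate in
theorem lst_conj (π : G →* Perm α) (δ : G →* ℂˣ) (k j : ℕ) (x : G) :
    conj (lst π δ k j x) = lst π δ k j x⁻¹ := by
  have hn : ‖(δ x : ℂ)‖ = 1 := by
    refine Complex.norm_eq_one_of_pow_eq_one (n := Fintype.card G) ?_ Fintype.card_ne_zero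
    rw [← Units.val_pow_eq_pow_val, ← map_pow, pow_card_eq_one]; simp
  simp only [lst, map_inv, hook_inv, Units.val_inv_eq_inv_val, map_mul, map_pow, map_intCast]
  rw [Complex.inv_eq_conj hn]

theorem lst_class (π : G →* Perm α) (δ : G →* ℂˣ) (k j : ℕ) (V : FDRep ℂ G)
    (hV : ∀ x, V.character x = lst π δ k j x) (g h : G) :
    lst π δ k j (h * g * h⁻¹) = lst π δ k j g := by
  rw [← hV, ← hV, FDRep.char_conj]

theorem lst_exists (π : G →* Perm α) (hπ : Function.Surjective π) (δ : G →* ℂˣ) (m : ℕ)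
    (z : G) (hz : π z = 1) (hzm : IsPrimitiveRoot (δ z) m) (k j : ℕ)
    (hk : k + 1 ≤ Fintype.card α) (hj : j < m) :
    ∃ V : FDRep ℂ G, Simple V ∧ ∀ x, V.character x = lst π δ k j x := by
  have simp_of : ∀ k, k + 1 ≤ Fintype.card α → ∀ V : FDRep ℂ G,
      (∀ x, V.character x = lst π δ k j x) → Simple V := by
    intro k hk V hV
    rw [FDRep.simple_iff_char_is_norm_one]
    simp_rw [hV]
    rw [lst_orth π hπ δ m z hz hzm k k j j hk hk hj hj, if_pos ⟨rfl, rfl⟩]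
  induction k with
  | zero =>
    obtain ⟨V, hV⟩ := exists_twRep π (δ ^ j) 0
    have hV' : ∀ x, V.character x = lst π δ 0 j x := fun x => by
      rw [hV]; simp [lst, hook]
    exact ⟨V, simp_of 0 hk V hV', hV'⟩
  | succ k ih =>
    obtain ⟨S, hS, hSc⟩ := ih (by omega)
    obtain ⟨V, hV⟩ := exists_twRep π (δ ^ j) (k + 1)
    have hV' : ∀ x, V.character x = (phi (k + 1) (π x) : ℂ) * (δ x : ℂ) ^ j := fun x => by
      rw [hV]; simp
    obtain ⟨W, hW⟩ := exists_complement V S (by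
      simp_rw [hV', hSc]
      have : ∀ x, (phi (k + 1) (π x) : ℂ) * (δ x : ℂ) ^ j * lst π δ k j x⁻¹
          = ((hook k (π x) * phi (k + 1) (π x) : ℤ) : ℂ) := by
        intro x
        simp only [lst, map_inv, hook_inv, Units.val_inv_eq_inv_val, inv_pow]
        have := pow_ne_zero j (δ x).ne_zero
        push_cast
        field_simp
      simp_rw [this]
      rw [sum_pullback_int π hπ (fun σ => hook k σ * phi (k + 1) σ) 1]
      · simp
      · rw [hook_phi k (k + 1) (by omega) le_rfl, if_pos rfl, one_mul])
    have hW' : ∀ x, W.character x = lst π δ (k + 1) j x := fun x => by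
      rw [hW, hV', hSc]; simp only [lst, hook]; push_cast; ring
    exact ⟨W, simp_of (k + 1) hk W hW', hW'⟩

end Abs

section Count
open Equiv Finset

theorem irr_pair {G : Type} [Group G] [Fintype G] (V W : FDRep ℂ G) [Simple V] [Simple W]
    (h : V.character ≠ W.character) : ∑ g, V.character g * W.character g⁻¹ = 0 := by
  have hG : (Nat.card G : ℂ) ≠ 0 := by exact_mod_cast Nat.card_pos.ne'
  have : Invertible (Nat.card G : ℂ) := invertibleOfNonzero hG
  have := FDRep.char_orthonormal V W
  rw [if_neg (fun ⟨i⟩ => h (FDRep.char_iso i))] at this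
  rcases mul_eq_zero.mp this with h' | h'
  · exact absurd h' (inv_ne_zero hG)
  · exact h'

theorem irr_self {G : Type} [Group G] [Fintype G] (V : FDRep ℂ G) [hV : Simple V] :
    ∑ g, V.character g * V.character g⁻¹ = Nat.card G :=
  (FDRep.simple_iff_char_is_norm_one V).mp hV

theorem irr_finite (G : Type) [Group G] [Fintype G] : {χ : G → ℂ | IsIrrChar G χ}.Finite := by
  have hG : (Nat.card G : ℂ) ≠ 0 := by exact_mod_cast Nat.card_pos.ne'
  refine LinearIndependent.setFinite (R := ℂ) ?_
  rw [linearIndependent_iff']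
  intro s a hs i hi
  have h1 : ∑ g, (∑ j ∈ s, a j • (j : G → ℂ)) g * (i : G → ℂ) g⁻¹ = 0 := by
    rw [hs]; simp
  have h2 : ∑ g, (∑ j ∈ s, a j • (j : G → ℂ)) g * (i : G → ℂ) g⁻¹
      = ∑ j ∈ s, a j * ∑ g, (j : G → ℂ) g * (i : G → ℂ) g⁻¹ := by
    simp only [Finset.sum_apply, Pi.smul_apply, smul_eq_mul, Finset.sum_mul, Finset.mul_sum]
    rw [sum_comm]
    simp only [mul_assoc]
  rw [h2, sum_eq_single i] at h1
  · obtain ⟨χ, V, hV, rfl⟩ := i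
    have := irr_self V
    simp only [this] at h1
    exact (mul_eq_zero.mp h1).resolve_right hG
  · rintro ⟨χ, V, hV, rfl⟩ _ hne
    obtain ⟨χ', W, hW, rfl⟩ := i
    have : V.character ≠ W.character := fun h => hne (Subtype.ext h)
    simp only [irr_pair V W this, mul_zero]
  · exact fun h => absurd hi h

theorem stable_of_cycle {α : Type} [Fintype α] [DecidableEq α] (c : Perm α) (hc : c.IsCycle)
    (hcs : c.support = univ) (I : Finset α) (hI : ∀ x, c x ∈ I ↔ x ∈ I) : I = ∅ ∨ I = univ := by
  rcases I.eq_empty_or_nonempty with h | ⟨x, hx⟩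
  · exact Or.inl h
  · right
    ext y
    simp only [mem_univ, iff_true]
    have hm : ∀ y, c y ≠ y := fun y => by rw [← Perm.mem_support, hcs]; exact mem_univ _
    obtain ⟨i, rfl⟩ := hc.exists_pow_eq (hm x) (hm y)
    clear hm
    induction i with
    | zero => simpa using hx
    | succ i ih => rw [pow_succ', Perm.mul_apply, hI]; exact ih

open ComplexConjugate in
theorem abstract_count {α : Type} [Fintype α] [DecidableEq α] {G : Type} [Group G] [Fintype G]
    (ℓ : ℕ) (hℓ : ℓ.Prime) (hα : Fintype.card α = ℓ)
    (π : G →* Perm α) (s : Perm α →* G) (hs : ∀ σ, π (s σ) = σ)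
    (δ : G →* ℂˣ) (hδs : ∀ σ, δ (s σ) = 1) (m : ℕ) (z : G) (hz : π z = 1)
    (hzm : IsPrimitiveRoot (δ z) m)
    (hcard : ¬ ℓ ^ 2 ∣ Nat.card G) (c : Perm α) (hc : c.IsCycle) (hcs : c.support = univ)
    (hC : Nat.card (Subgroup.centralizer {s c}) ≤ ℓ * m) :
    numIrr G = numDefectZero ℓ G + ℓ * m := by
  have hπ : Function.Surjective π := fun σ => ⟨s σ, hs σ⟩
  have hsinj : Function.Injective s := fun a b h => by rw [← hs a, h, hs]
  have hoc : orderOf c = ℓ := by rw [hc.orderOf, hcs, card_univ, hα]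
  have hosc : orderOf (s c) = ℓ := by rw [orderOf_injective s hsinj, hoc]
  have hℓG : ℓ ∣ Nat.card G := hosc ▸ orderOf_dvd_natCard (s c)
  let ψ : Fin ℓ × Fin m → G → ℂ := fun p => lst π δ p.1 p.2
  have hk : ∀ k : Fin ℓ, (k : ℕ) + 1 ≤ Fintype.card α := fun k => by rw [hα]; exact k.2
  have hψV : ∀ p, ∃ V : FDRep ℂ G, Simple V ∧ ∀ x, V.character x = ψ p x := fun p =>
    lst_exists π hπ δ m z hz hzm p.1 p.2 (hk _) p.2.2
  have horth : ∀ p q, ∑ g, ψ p g * ψ q g⁻¹ = if p = q then (Nat.card G : ℂ) else 0 := by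
    intro p q
    have := lst_orth π hπ δ m z hz hzm p.1 q.1 p.2 q.2 (hk _) (hk _) p.2.2 q.2.2
    rw [this]
    simp only [Prod.ext_iff, Fin.ext_iff]
  have hG : (Nat.card G : ℂ) ≠ 0 := by exact_mod_cast Nat.card_pos.ne'
  have hψinj : Function.Injective ψ := by
    intro p q h
    by_contra hne
    have h1 := horth p q
    rw [if_neg hne, h, horth q q, if_pos rfl] at h1
    exact hG h1
  have hψirr : ∀ p, IsIrrChar G (ψ p) := fun p => by
    obtain ⟨V, hV, h⟩ := hψV p
    exact ⟨V, hV, funext fun x => (h x).symm⟩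
  have hstab := stable_of_cycle c hc hcs
  have hψc : ∀ p, ‖ψ p (s c)‖ = 1 := fun p => by
    simp only [ψ, lst, hs, hδs, hook_cycle c hstab p.1 (hk _)]
    simp
  have hψnd : ∀ p, ¬ IsDefectZeroChar ℓ G (ψ p) := by
    rintro p ⟨-, d, hd, hnd⟩
    apply hnd
    obtain ⟨V, hV, h⟩ := hψV p
    have h1 : Module.finrank ℂ V = d := by
      have := FDRep.char_one V
      rw [h, hd] at this
      exact_mod_cast this.symm
    have h2 : d ∣ Nat.card G := h1 ▸ degree_dvd V
    have h3 : d = (ℓ - 1).choose p.1 := by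
      have : ψ p 1 = ((ℓ - 1).choose p.1 : ℂ) := by
        simp only [ψ, lst, map_one, hook_one (α := α) p.1 (ℓ - 1)
          (by have := hℓ.pos; omega)]
        simp
      rw [hd] at this
      exact_mod_cast this
    have h4 : ¬ ℓ ∣ d := by
      intro h5
      have h6 : ℓ ∣ (ℓ - 1).factorial := by
        rw [h3] at h5
        refine h5.trans ?_
        have hp := p.1.2
        rw [← Nat.choose_mul_factorial_mul_factorial (show (p.1 : ℕ) ≤ ℓ - 1 by omega), mul_assoc]
        exact dvd_mul_right _ _
      rw [hℓ.dvd_factorial] at h6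
      have := hℓ.pos
      omega
    obtain ⟨q, hq⟩ := h2
    have hd0 : 0 < d := Nat.pos_of_ne_zero fun h0 => h4 (h0 ▸ dvd_zero _)
    rw [hq, Nat.mul_div_cancel_left _ hd0]
    rw [hq] at hℓG
    exact (hℓ.dvd_mul.mp hℓG).resolve_left h4
  have hother : ∀ χ, IsIrrChar G χ → χ ∉ Set.range ψ → IsDefectZeroChar ℓ G χ := by
    intro χ hχ hnot
    refine ⟨hχ, ?_⟩
    obtain ⟨V, hV, rfl⟩ := hχ
    have hv : V.character (s c) = 0 := by
      refine vanish_of_orthogonal ψ (s c) ?_ ?_ hψc ?_ V.character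
        (fun g h => FDRep.char_conj V g h) ?_
      · intro p g h
        obtain ⟨W, hW, hWc⟩ := hψV p
        rw [← hWc, ← hWc, FDRep.char_conj]
      · intro p q
        rw [← horth]
        exact sum_congr rfl fun g _ => by rw [lst_conj]
      · simpa using hC
      · intro p
        obtain ⟨W, hW, hWc⟩ := hψV p
        have := irr_pair V W (fun h => hnot ⟨p, funext fun x => by rw [← hWc, h]⟩)
        rw [← this]
        exact sum_congr rfl fun g _ => by rw [hWc]; simp only [ψ]; rw [lst_conj]
    have hdvd : ℓ ∣ Module.finrank ℂ V := by
      refine dvd_degree V ℓ (s c) hosc fun i hi hiℓ => ?_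
      have hcyc : (c ^ i).IsCycle :=
        hc.isCycle_pow_pos_of_lt_prime_order (hoc.symm ▸ hℓ) i hi (hoc.symm ▸ hiℓ)
      have hsup : (c ^ i).support = c.support := by
        refine hc.support_pow_of_pos_of_lt_orderOf hi (hoc.symm ▸ hiℓ)
      obtain ⟨τ, hτ⟩ := isConj_iff.mp ((hc.isConj_iff hcyc).mpr (by rw [hsup]))
      rw [← map_pow, ← hτ, map_mul, map_mul, map_inv, FDRep.char_conj, hv]
    refine ⟨Module.finrank ℂ V, FDRep.char_one V, fun h => hcard ?_⟩
    have h2 := degree_dvd V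
    obtain ⟨q, hq⟩ := h2
    have hd0 : 0 < Module.finrank ℂ V := by
      refine Nat.pos_of_ne_zero fun h0 => ?_
      rw [h0, zero_mul] at hq
      exact Nat.card_pos.ne' hq
    rw [hq, Nat.mul_div_cancel_left _ hd0] at h
    rw [hq, pow_two]
    exact mul_dvd_mul hdvd h
  have hset : {χ : G → ℂ | IsIrrChar G χ} = {χ | IsDefectZeroChar ℓ G χ} ∪ Set.range ψ := by
    ext χ
    constructor
    · intro h
      by_cases h' : χ ∈ Set.range ψ
      · exact Or.inr h'
      · exact Or.inl (hother χ h h')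
    · rintro (h | ⟨p, rfl⟩)
      · exact h.1
      · exact hψirr p
  have hfin := irr_finite G
  have hfin' : {χ | IsDefectZeroChar ℓ G χ}.Finite := hfin.subset fun χ h => h.1
  have hdisj : Disjoint {χ | IsDefectZeroChar ℓ G χ} (Set.range ψ) := by
    rw [Set.disjoint_left]
    rintro _ h ⟨p, rfl⟩
    exact hψnd p h
  have e1 : numIrr G = {χ : G → ℂ | IsIrrChar G χ}.ncard := rfl
  have e2 : numDefectZero ℓ G = {χ : G → ℂ | IsDefectZeroChar ℓ G χ}.ncard := rfl
  rw [e1, e2, hset, Set.ncard_union_eq hdisj hfin' (Set.finite_range ψ)]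
  congr 1
  rw [← Nat.card_coe_set_eq, Nat.card_range_of_injective hψinj]
  simp

end Count

section Instance
open Equiv Finset

/-- Projection to the symmetric group. -/
def gPi (e r n : ℕ) : Gerr ℂˣ e r n →* Perm (Fin n) :=
  SemidirectProduct.rightHom.comp (Gerr ℂˣ e r n).subtype

theorem inr_mem (e r n : ℕ) (σ : Perm (Fin n)) :
    (SemidirectProduct.inr σ : Wreath ℂˣ n) ∈ Gerr ℂˣ e r n := by
  refine ⟨fun i => ?_, ?_⟩ <;> simp [SemidirectProduct.left_inr]

/-- The permutation matrices. -/
def gS (e r n : ℕ) : Perm (Fin n) →* Gerr ℂˣ e r n :=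
  MonoidHom.codRestrict SemidirectProduct.inr _ (inr_mem e r n)

/-- The product of the nonzero entries. -/
def gDelta (e r n : ℕ) : Gerr ℂˣ e r n →* ℂˣ where
  toFun x := ∏ i, x.1.left i
  map_one' := by simp
  map_mul' x y := by
    have hl : ((x * y : Gerr ℂˣ e r n) : Wreath ℂˣ n).left
        = fun i => x.1.left i * y.1.left (x.1.right.symm i) := rfl
    rw [hl, prod_mul_distrib, Equiv.prod_comp x.1.right.symm y.1.left]

theorem gerr_finite (e r n : ℕ) (he : 0 < e) : Finite (Gerr ℂˣ e r n) := by
  have : NeZero e := ⟨he.ne'⟩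
  let f : Gerr ℂˣ e r n → (Fin n → rootsOfUnity e ℂ) × Perm (Fin n) := fun x =>
    (fun i => ⟨x.1.left i, x.2.1 i⟩, x.1.right)
  refine Finite.of_injective f fun x y h => ?_
  apply Subtype.ext
  apply SemidirectProduct.ext
  · funext i
    exact congrArg Subtype.val (congrFun (congrArg Prod.fst h) i)
  · exact congrArg Prod.snd h

theorem gerr_ker_pow (e r n : ℕ) (x : Gerr ℂˣ e r n) (hx : gPi e r n x = 1) : x ^ e = 1 := by
  apply Subtype.ext
  have h1 : x.1 = SemidirectProduct.inl x.1.left := by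
    apply SemidirectProduct.ext
    · simp
    · rw [SemidirectProduct.right_inl]; exact hx
  rw [Subgroup.coe_pow, h1, ← map_pow]
  have : x.1.left ^ e = 1 := funext fun i => x.2.1 i
  rw [this, map_one]; rfl

theorem gerr_card (ℓ e r : ℕ) (hℓ : ℓ.Prime) (he : 0 < e) (heℓ : e ∣ ℓ - 1) :
    ¬ ℓ ^ 2 ∣ Nat.card (Gerr ℂˣ e r ℓ) := by
  have := gerr_finite e r ℓ he
  have : Fact ℓ.Prime := ⟨hℓ⟩
  have hsurj : Function.Surjective (gPi e r ℓ) := fun σ => ⟨gS e r ℓ σ, rfl⟩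
  have h1 := Subgroup.card_mul_index (gPi e r ℓ).ker
  rw [Subgroup.index_ker, MonoidHom.range_eq_top.mpr hsurj, Subgroup.card_top, Nat.card_perm,
    Nat.card_fin] at h1
  have h2 := hℓ.two_le
  intro h
  rw [← h1, ← Nat.mul_factorial_pred hℓ.ne_zero, mul_left_comm, pow_two] at h
  have h3 := Nat.dvd_of_mul_dvd_mul_left hℓ.pos h
  rcases hℓ.dvd_mul.mp h3 with h4 | h4
  · obtain ⟨x, hx⟩ := exists_prime_orderOf_dvd_card' ℓ h4
    have h5 : x ^ e = 1 := Subtype.ext (gerr_ker_pow e r ℓ x.1 x.2)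
    have h6 : ℓ ∣ e := hx ▸ orderOf_dvd_of_pow_eq_one h5
    have h7 := Nat.le_of_dvd (by omega) (h6.trans heℓ)
    omega
  · rw [hℓ.dvd_factorial] at h4
    omega

theorem gerr_centralizer (ℓ e r : ℕ) (hℓ : ℓ.Prime) (hm : 0 < e / r) (heℓ : e ∣ ℓ - 1)
    (c : Perm (Fin ℓ)) (hc : c.IsCycle) (hcs : c.support = univ) :
    Nat.card (Subgroup.centralizer {gS e r ℓ c}) ≤ ℓ * (e / r) := by
  let i0 : Fin ℓ := ⟨0, hℓ.pos⟩
  have hne : NeZero (e / r) := ⟨hm.ne'⟩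
  have htr : ∀ i, ∃ k : ℕ, (c ^ k) i0 = i := fun i =>
    hc.exists_pow_eq (by rw [← Perm.mem_support, hcs]; exact mem_univ _)
      (by rw [← Perm.mem_support, hcs]; exact mem_univ _)
  have hcomm : ∀ x : Subgroup.centralizer {gS e r ℓ c},
      (∀ i, x.1.1.left (c i) = x.1.1.left i) ∧ ∀ i, x.1.1.right (c i) = c (x.1.1.right i) := by
    intro x
    have h := Subgroup.mem_centralizer_singleton_iff.mp x.2
    have h' : x.1.1 * SemidirectProduct.inr c = SemidirectProduct.inr c * x.1.1 := congrArg Subtype.val h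
    constructor
    · intro i
      have hl := congrFun (congrArg SemidirectProduct.left h') (c i)
      have e1 : (x.1.1 * SemidirectProduct.inr c).left (c i) = x.1.1.left (c i) * 1 := rfl
      have e2 : (SemidirectProduct.inr c * x.1.1).left (c i)
        = 1 * x.1.1.left (c.symm (c i)) := rfl
      rw [e1, e2, Equiv.symm_apply_apply, one_mul, mul_one] at hl
      exact hl
    · intro i
      exact DFunLike.congr_fun (congrArg SemidirectProduct.right h') i
  have hleft : ∀ (x : Subgroup.centralizer {gS e r ℓ c}) i, x.1.1.left i = x.1.1.left i0 := by
    intro x i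
    obtain ⟨k, rfl⟩ := htr i
    induction k with
    | zero => rfl
    | succ k ih => rw [pow_succ', Perm.mul_apply, (hcomm x).1, ih]
  have hright : ∀ (x : Subgroup.centralizer {gS e r ℓ c}) (k : ℕ),
      x.1.1.right ((c ^ k) i0) = (c ^ k) (x.1.1.right i0) := by
    intro x k
    induction k with
    | zero => rfl
    | succ k ih => rw [pow_succ', Perm.mul_apply, (hcomm x).2, ih, Perm.mul_apply]
  have hroot : ∀ x : Subgroup.centralizer {gS e r ℓ c}, x.1.1.left i0 ^ (e / r) = 1 := by
    intro x
    have h1 := x.1.2.2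
    simp_rw [hleft x] at h1
    rw [prod_const, card_univ, Fintype.card_fin] at h1
    have hae : x.1.1.left i0 ^ e = 1 := x.1.2.1 i0
    generalize x.1.1.left i0 = a at h1 hae
    have h2 : a ^ ℓ = a := by
      obtain ⟨q, hq⟩ := heℓ
      have h3 := hℓ.pos
      have : ℓ = e * q + 1 := by omega
      conv_lhs => rw [this, pow_succ, pow_mul, hae, one_pow, one_mul]
    rw [h2] at h1
    exact h1
  let f : Subgroup.centralizer {gS e r ℓ c} → Fin ℓ × rootsOfUnity (e / r) ℂ := fun x =>
    (x.1.1.right i0, ⟨x.1.1.left i0, hroot x⟩)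
  have hf : Function.Injective f := by
    intro x y h
    have ha : x.1.1.right i0 = y.1.1.right i0 := congrArg Prod.fst h
    have hb : x.1.1.left i0 = y.1.1.left i0 := congrArg (fun p => p.2.1) h
    apply Subtype.ext
    apply Subtype.ext
    apply SemidirectProduct.ext
    · funext i; rw [hleft x, hleft y, hb]
    · ext i : 1
      obtain ⟨k, rfl⟩ := htr i
      rw [hright x, hright y, ha]
  have := Nat.card_le_card_of_injective f hf
  rw [Nat.card_prod, Nat.card_fin, Complex.card_rootsOfUnity] at this
  exact this

end Instance

/-- For a prime `ℓ` and positive integers `e, r` with `r ∣ e ∣ (ℓ - 1)`, the number of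
irreducible complex characters of `G(e,r,ℓ)` exceeds the number of those of `ℓ`-defect
zero by exactly `eℓ/r`. -/
theorem numIrr_Gerr_sub_defect_zero (ℓ e r : ℕ) (hℓ : ℓ.Prime)
    (he : 0 < e) (hr : 0 < r) (hre : r ∣ e) (heℓ : e ∣ ℓ - 1) :
    numIrr (Gerr ℂˣ e r ℓ) = numDefectZero ℓ (Gerr ℂˣ e r ℓ) + e * ℓ / r := by
  have hm : 0 < e / r := Nat.div_pos (Nat.le_of_dvd he hre) hr
  have hmul : e * ℓ / r = ℓ * (e / r) := by
    rw [mul_comm e ℓ, Nat.mul_div_assoc _ hre]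
  rw [hmul]
  have hfin := gerr_finite e r ℓ he
  have := Fintype.ofFinite (Gerr ℂˣ e r ℓ)
  have hζ0 := Complex.isPrimitiveRoot_exp (e / r) hm.ne'
  obtain ⟨ζ, hζ'⟩ := hζ0.isUnit hm.ne'
  have hζ : IsPrimitiveRoot ζ (e / r) := by
    rw [← IsPrimitiveRoot.coe_units_iff, hζ']; exact hζ0
  let i0 : Fin ℓ := ⟨0, hℓ.pos⟩
  have hprod : ∏ i, (Pi.mulSingle i0 ζ : Fin ℓ → ℂˣ) i = ζ := by
    rw [Finset.prod_pi_mulSingle']; simp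
  have hzmem : (SemidirectProduct.inl (Pi.mulSingle i0 ζ) : Wreath ℂˣ ℓ) ∈ Gerr ℂˣ e r ℓ := by
    refine ⟨fun i => ?_, ?_⟩
    · rw [SemidirectProduct.left_inl, ← Pi.pow_apply, ← Pi.mulSingle_pow]
      have : ζ ^ e = 1 := (hζ.pow_eq_one_iff_dvd e).mpr (Nat.div_dvd_of_dvd hre)
      rw [this]; simp
    · rw [SemidirectProduct.left_inl, hprod, hζ.pow_eq_one]
  obtain ⟨n, rfl⟩ : ∃ n, ℓ = n + 2 := ⟨ℓ - 2, by have := hℓ.two_le; omega⟩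
  refine abstract_count (n + 2) hℓ (Fintype.card_fin _) (gPi e r _) (gS e r _) (fun σ => rfl)
    (gDelta e r _) (fun σ => ?_) (e / r) ⟨_, hzmem⟩ rfl ?_ (gerr_card _ e r hℓ he heℓ)
    (finRotate (n + 2)) isCycle_finRotate support_finRotate
    (gerr_centralizer _ e r hℓ hm heℓ _ isCycle_finRotate support_finRotate)
  · have : gDelta e r (n + 2) (gS e r (n + 2) σ) = ∏ _i : Fin (n + 2), (1 : ℂˣ) := rfl
    rw [this]; simp
  · have : gDelta e r (n + 2) ⟨_, hzmem⟩ = ζ := hprod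
    rw [this]; exact hζ
end

section
/- Let G = N ≀ S_n be a wreath product of a finite group N with the symmetric group S_n, and ℓ a prime. There is a bijection between the set Irr^0(G) of ℓ-defect-zero irreducible complex characters of G and the set of functions w : Irr^0(N) → {ℓ-core partitions} satisfying Σ_{φ ∈ Irr^0(N)} |w(φ)| = n. -/
open CategoryTheory

/-- The hook length of the cell `(i, j)` of a Young diagram. -/
def hookLength (Y : YoungDiagram) (i j : ℕ) : ℕ :=
  Y.rowLen i + Y.colLen j - i - j - 1

/-- A Young diagram (partition) is an `ℓ`-core if it has no hook of length `ℓ`. -/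
def IsLCore (ℓ : ℕ) (Y : YoungDiagram) : Prop :=
  ∀ c ∈ Y.cells, hookLength Y c.1 c.2 ≠ ℓ

/-! ### Part 1: characters of finite groups -/

section RepTheory

open Representation Module

/-- Characters of irreducible representations, unbundled version. -/
def IrrC (G : Type) [Group G] (χ : G → ℂ) : Prop :=
  ∃ (V : Type) (_ : AddCommGroup V) (_ : Module ℂ V) (_ : FiniteDimensional ℂ V)
    (ρ : Representation ℂ G V), ρ.IsIrreducible ∧ χ = ρ.character

/-- The (unnormalised) bilinear form on functions on `G`. -/
def ipG {G : Type} [Group G] [Fintype G] (f h : G → ℂ) : ℂ := ∑ g, f g * h g⁻¹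

variable {G : Type} [Group G] [Fintype G]

lemma ipG_comm (f h : G → ℂ) : ipG f h = ipG h f := by
  unfold ipG
  rw [← Equiv.sum_comp (Equiv.inv G)]
  simp [mul_comm]

lemma ipG_add_left (f f' h : G → ℂ) : ipG (f + f') h = ipG f h + ipG f' h := by
  simp [ipG, add_mul, Finset.sum_add_distrib]

lemma ipG_sum_left {ι : Type*} (s : Finset ι) (f : ι → G → ℂ) (h : G → ℂ) :
    ipG (∑ i ∈ s, f i) h = ∑ i ∈ s, ipG (f i) h := by
  simp only [ipG, Finset.sum_apply, Finset.sum_mul]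
  rw [Finset.sum_comm]

lemma ipG_smul_left (c : ℂ) (f h : G → ℂ) : ipG (c • f) h = c * ipG f h := by
  simp [ipG, mul_assoc, Finset.mul_sum]

lemma irrC_ortho {χ ψ : G → ℂ} (hχ : IrrC G χ) (hψ : IrrC G ψ) :
    ipG χ ψ = if χ = ψ then (Nat.card G : ℂ) else 0 := by
  obtain ⟨V, _, _, _, ρ, hρ, rfl⟩ := hχ
  obtain ⟨W, _, _, _, σ, hσ, rfl⟩ := hψ
  have hne : (Nat.card G : ℂ) ≠ 0 := by simp
  have := invertibleOfNonzero hne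
  have key := char_orthonormal ρ σ
  have key2 := char_orthonormal σ σ
  rw [if_pos ⟨Representation.Equiv.refl σ⟩] at key2
  unfold ipG
  by_cases h : Nonempty (σ.Equiv ρ)
  · rw [if_pos h] at key
    rw [if_pos (char_iso h.some).symm]
    field_simp at key
    simpa using key
  · rw [if_neg h] at key
    rw [if_neg]
    · simpa [hne] using key
    · intro h'
      rw [h'] at key
      rw [key] at key2
      simp at key2

lemma irrC_isIrrChar {χ : G → ℂ} (hχ : IrrC G χ) : IsIrrChar G χ := by
  have h2 := irrC_ortho hχ hχ
  obtain ⟨V, _, _, _, ρ, hρ, rfl⟩ := hχ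
  refine ⟨FDRep.of ρ, ?_, rfl⟩
  rw [FDRep.simple_iff_char_is_norm_one]
  rw [if_pos rfl] at h2
  exact h2

lemma irrC_one {χ : G → ℂ} (hχ : IrrC G χ) : ∃ d : ℕ, 0 < d ∧ χ 1 = d := by
  obtain ⟨V, _, _, _, ρ, hρ, rfl⟩ := hχ
  refine ⟨finrank ℂ V, ?_, by simp⟩
  have : Nontrivial V := by
    by_contra h
    rw [not_nontrivial_iff_subsingleton] at h
    obtain ⟨a, b, hab⟩ := hρ.toNontrivial
    apply hab
    apply Subrepresentation.toSubmodule_injective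
    exact Subsingleton.elim _ _
  exact finrank_pos

lemma char_mem_closure (m : ℕ) : ∀ (V : Type) [AddCommGroup V] [Module ℂ V]
    [FiniteDimensional ℂ V] (ρ : Representation ℂ G V), finrank ℂ V = m →
    ρ.character ∈ AddSubgroup.closure {χ | IrrC G χ} := by
  induction m using Nat.strong_induction_on with
  | _ m ih =>
  intro V _ _ _ ρ hm
  by_cases hirr : ρ.IsIrreducible
  · exact AddSubgroup.subset_closure ⟨V, _, _, inferInstance, ρ, hirr, rfl⟩
  by_cases hV : Subsingleton V
  · have : ρ.character = 0 := by
      ext g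
      have : ρ g = 0 := by ext x; exact Subsingleton.elim _ _
      simp [Representation.character, this]
    rw [this]
    exact zero_mem _
  rw [not_subsingleton_iff_nontrivial] at hV
  have hnt : Nontrivial (Subrepresentation ρ) := by
    refine ⟨⊥, ⊤, fun h => ?_⟩
    have := congrArg Subrepresentation.toSubmodule h
    exact bot_ne_top (α := Submodule ℂ V) this
  have : ∃ a : Subrepresentation ρ, a ≠ ⊥ ∧ a ≠ ⊤ := by
    by_contra hcon
    push Not at hcon
    exact hirr ⟨fun a => or_iff_not_imp_left.mpr (hcon a)⟩
  obtain ⟨a, ha1, ha2⟩ := this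
  have hss : IsSemisimpleRepresentation ρ := by
    have : NeZero (Nat.card G : ℂ) := ⟨by simp⟩
    infer_instance
  obtain ⟨b, hab⟩ := exists_isCompl a
  have hab' : IsCompl a.toSubmodule b.toSubmodule := by
    constructor
    · rw [disjoint_iff, ← Subrepresentation.toSubmodule_inf, hab.inf_eq_bot]; rfl
    · rw [codisjoint_iff, ← Subrepresentation.toSubmodule_sup, hab.sup_eq_top]; rfl
  have ha1' : a.toSubmodule ≠ ⊥ := fun h => ha1 (Subrepresentation.toSubmodule_injective h)
  have ha2' : a.toSubmodule ≠ ⊤ := fun h => ha2 (Subrepresentation.toSubmodule_injective h)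
  have hsum := Submodule.finrank_add_eq_of_isCompl hab'
  have hlt := Submodule.finrank_lt (lt_top_iff_ne_top.mpr ha2').ne
  have hpos : 0 < finrank ℂ a.toSubmodule := by
    rw [finrank_pos_iff, Submodule.nontrivial_iff_ne_bot]; exact ha1'
  have h1 := ih _ (by omega) a.toSubmodule a.toRepresentation rfl
  have h2 := ih _ (by omega) b.toSubmodule b.toRepresentation rfl
  have : ρ.character = a.toRepresentation.character + b.toRepresentation.character := by
    ext g
    let N : Bool → Submodule ℂ V := fun i => cond i a.toSubmodule b.toSubmodule
    have hN : DirectSum.IsInternal N := by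
      rw [DirectSum.isInternal_submodule_iff_isCompl N (i := true) (j := false) (by simp)]
      · exact hab'
      · ext x; cases x <;> simp
    have hf : ∀ i, Set.MapsTo (ρ g) (N i) (N i) := by
      intro i x hx
      cases i
      · exact b.apply_mem_toSubmodule g hx
      · exact a.apply_mem_toSubmodule g hx
    have := LinearMap.trace_eq_sum_trace_restrict hN hf
    rw [Fintype.sum_bool] at this
    exact this
  rw [this]
  exact add_mem h1 h2

lemma mem_closure_norm_one {f : G → ℂ} (hf : f ∈ AddSubgroup.closure {χ | IrrC G χ})
    (h1 : ipG f f = Nat.card G) (hd : ∃ d : ℕ, f 1 = d) : IrrC G f := by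
  rw [← Submodule.span_int_eq_addSubgroupClosure] at hf
  change f ∈ Submodule.span ℤ _ at hf
  obtain ⟨l, hl⟩ := (Finsupp.mem_span_iff_linearCombination ℤ _ f).mp hf
  have hne : (Nat.card G : ℂ) ≠ 0 := by simp
  have hl' : f = ∑ χ ∈ l.support, ((l χ : ℂ)) • (χ : G → ℂ) := by
    rw [← hl, Finsupp.linearCombination_apply, Finsupp.sum]
    refine Finset.sum_congr rfl fun χ _ => ?_
    ext g; simp
  have hcoef : ∀ χ ∈ l.support, ipG f χ = l χ * Nat.card G := by
    intro χ hχ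
    rw [hl', ipG_sum_left, Finset.sum_eq_single χ]
    · rw [ipG_smul_left, irrC_ortho χ.2 χ.2, if_pos rfl]
    · intro ψ _ hψ
      rw [ipG_smul_left, irrC_ortho ψ.2 χ.2, if_neg, mul_zero]
      exact fun h => hψ (Subtype.ext h)
    · intro h; exact absurd hχ h
  have hsq : ∑ χ ∈ l.support, (l χ) ^ 2 = 1 := by
    have : ipG f f = ∑ χ ∈ l.support, (l χ : ℂ) * (l χ * Nat.card G) := by
      conv_lhs => rw [ipG_comm]; enter [1]; rw [hl']
      rw [ipG_sum_left]
      refine Finset.sum_congr rfl fun χ hχ => ?_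
      rw [ipG_smul_left, ipG_comm, hcoef χ hχ]
    rw [h1] at this
    have h3 : (Nat.card G : ℂ) * 1 = Nat.card G * ∑ χ ∈ l.support, (l χ : ℂ) ^ 2 := by
      rw [mul_one, Finset.mul_sum]
      refine this.trans (Finset.sum_congr rfl fun χ _ => by ring)
    have h4 := mul_left_cancel₀ hne h3
    exact_mod_cast h4.symm
  have hcard : l.support.card ≤ 1 := by
    have : ∑ χ ∈ l.support, (1 : ℤ) ≤ ∑ χ ∈ l.support, (l χ) ^ 2 := by
      refine Finset.sum_le_sum fun χ hχ => ?_
      have h0 : l χ ≠ 0 := Finsupp.mem_support_iff.mp hχ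
      have : 0 < (l χ) ^ 2 := by positivity
      omega
    rw [hsq] at this
    simpa using this
  have hcard' : l.support.card = 1 := by
    rcases Nat.lt_or_ge l.support.card 1 with h | h
    · have : l.support = ∅ := by
        rw [← Finset.card_eq_zero]; omega
      rw [this] at hsq
      simp at hsq
    · omega
  obtain ⟨χ, hχ⟩ := Finset.card_eq_one.mp hcard'
  rw [hχ, Finset.sum_singleton] at hsq hl'
  obtain ⟨e, he, he'⟩ := irrC_one χ.2
  obtain ⟨d, hd⟩ := hd
  rw [sq] at hsq
  rcases mul_self_eq_one_iff.mp hsq with h | h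
  · rw [h] at hl'
    rw [hl']
    have := χ.2
    rwa [Int.cast_one, one_smul]
  · exfalso
    rw [h] at hl'
    rw [hl'] at hd
    simp [he'] at hd
    have : ((e + d : ℕ) : ℂ) = 0 := by push_cast; rw [← hd]; ring
    have : e + d = 0 := by exact_mod_cast this
    omega

lemma isIrrChar_iff {χ : G → ℂ} : IsIrrChar G χ ↔ IrrC G χ := by
  constructor
  · rintro ⟨V, hV, rfl⟩
    refine mem_closure_norm_one (char_mem_closure _ V V.ρ rfl) ?_ ⟨finrank ℂ V, by simp⟩
    exact (FDRep.simple_iff_char_is_norm_one V).mp hV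
  · exact irrC_isIrrChar

lemma matrix_char {m : Type} [Fintype m] [DecidableEq m] (R : G →* Matrix m m ℂ) :
    ∃ ρ : Representation ℂ G (m → ℂ), ρ.character = fun g => (R g).trace :=
  ⟨(Matrix.toLinAlgEquiv' : Matrix m m ℂ ≃ₐ[ℂ] _).toMulEquiv.toMonoidHom.comp R, by
    ext g
    simp only [Representation.character]
    exact Matrix.trace_toLin'_eq (R g)⟩

lemma matrix_char_mem {m : Type} [Fintype m] [DecidableEq m] (R : G →* Matrix m m ℂ) :
    (fun g => (R g).trace) ∈ AddSubgroup.closure {χ | IrrC G χ} := by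
  obtain ⟨ρ, hρ⟩ := matrix_char R
  rw [← hρ]
  exact char_mem_closure _ _ ρ rfl

lemma irrC_finite : {χ : G → ℂ | IrrC G χ}.Finite := by
  have hli : LinearIndependent ℂ (fun χ : {χ : G → ℂ // IrrC G χ} => (χ : G → ℂ)) := by
    rw [linearIndependent_iff']
    intro s c hc χ hχ
    have h : ipG (∑ i ∈ s, c i • (i : G → ℂ)) χ = 0 := by rw [hc]; simp [ipG]
    rw [ipG_sum_left, Finset.sum_eq_single χ] at h
    · rw [ipG_smul_left, irrC_ortho χ.2 χ.2, if_pos rfl] at h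
      simpa using h
    · intro ψ _ hψ
      rw [ipG_smul_left, irrC_ortho ψ.2 χ.2, if_neg, mul_zero]
      exact fun h => hψ (Subtype.ext h)
    · intro h; exact absurd hχ h
  have : Finite {χ : G → ℂ // IrrC G χ} := hli.finite
  exact Set.finite_coe_iff.mp this

/-- If `f` is orthogonal to all irreducible characters then it is orthogonal to all characters. -/
lemma ipG_closure_eq_zero {f h : G → ℂ} (hf : ∀ χ, IrrC G χ → ipG χ f = 0)
    (hh : h ∈ AddSubgroup.closure {χ | IrrC G χ}) : ipG h f = 0 := by
  induction hh using AddSubgroup.closure_induction with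
  | mem x hx => exact hf x hx
  | zero => simp [ipG]
  | add x y _ _ hx hy => rw [ipG_add_left, hx, hy, add_zero]
  | neg x _ hx =>
    have : -x = (-1 : ℂ) • x := by ext; simp
    rw [this, ipG_smul_left, hx, mul_zero]

end RepTheory

/-! ### Part 2: matrix coefficients -/

section MatCoeff

open Representation Module

variable {G : Type} [Group G] [Fintype G]

/-- `R` is a matrix form of an irreducible representation with character `χ`. -/
def MatReal (χ : G → ℂ) (d : ℕ) (R : G →* Matrix (Fin d) (Fin d) ℂ) : Prop :=
  ∃ (V : Type) (_ : AddCommGroup V) (_ : Module ℂ V) (_ : FiniteDimensional ℂ V)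
    (ρ : Representation ℂ G V) (b : Basis (Fin d) ℂ V),
    ρ.IsIrreducible ∧ χ = ρ.character ∧ ∀ t, R t = LinearMap.toMatrix b b (ρ t)

lemma exists_matReal {χ : G → ℂ} (h : IrrC G χ) : ∃ d R, MatReal χ d R := by
  obtain ⟨V, _, _, _, ρ, hρ, hχ⟩ := h
  let b := finBasis ℂ V
  exact ⟨_, ((LinearMap.toMatrixAlgEquiv b).toMulEquiv.toMonoidHom.comp ρ : _ →* _),
    V, _, _, inferInstance, ρ, b, hρ, hχ, fun t => rfl⟩

lemma MatReal.trace {χ : G → ℂ} {d R} (h : MatReal χ d R) (t : G) : χ t = (R t).trace := by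
  obtain ⟨V, _, _, _, ρ, b, hρ, hχ, hR⟩ := h
  rw [hχ, hR, Representation.character, LinearMap.trace_eq_matrix_trace ℂ b]

lemma MatReal.one {χ : G → ℂ} {d R} (h : MatReal χ d R) : χ 1 = d := by
  rw [h.trace, map_one]; simp

lemma MatReal.irr {χ : G → ℂ} {d R} (h : MatReal χ d R) : IrrC G χ := by
  obtain ⟨V, _, _, _, ρ, b, hρ, hχ, hR⟩ := h
  exact ⟨V, _, _, inferInstance, ρ, hρ, hχ⟩

lemma MatReal.pos {χ : G → ℂ} {d R} (h : MatReal χ d R) : 0 < d := by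
  obtain ⟨e, he, he'⟩ := irrC_one h.irr
  rw [h.one] at he'
  have : d = e := by exact_mod_cast he'
  omega

lemma MatReal.schur_ne {χ ψ : G → ℂ} {d R d' R'} (h : MatReal χ d R) (h' : MatReal ψ d' R')
    (hne : χ ≠ ψ) (E : Matrix (Fin d) (Fin d') ℂ) (hE : ∀ s, R s * E = E * R' s) : E = 0 := by
  obtain ⟨V, _, _, _, ρ, b, hρ, hχ, hR⟩ := h
  obtain ⟨W, _, _, _, σ, c, hσ, hψ, hR'⟩ := h'
  let f : W →ₗ[ℂ] V := Matrix.toLin c b E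
  have hf : ∀ g, f ∘ₗ σ g = ρ g ∘ₗ f := by
    intro g
    apply (LinearMap.toMatrix c b).injective
    rw [LinearMap.toMatrix_comp c c b, LinearMap.toMatrix_comp c b b, ← hR, ← hR',
      LinearMap.toMatrix_toLin, hE]
  let F : IntertwiningMap σ ρ := ⟨f, hf⟩
  rcases IsIrreducible.bijective_or_eq_zero F with h | h
  · exact absurd ((char_iso (F.ofBijective h)).trans hχ.symm).symm (by rw [← hψ]; exact hne)
  · have : f = 0 := congrArg IntertwiningMap.toLinearMap h
    simpa [f] using this

lemma MatReal.schur_self {χ : G → ℂ} {d R} (h : MatReal χ d R)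
    (E : Matrix (Fin d) (Fin d) ℂ) (hE : ∀ s, R s * E = E * R s) : ∃ c : ℂ, E = c • 1 := by
  obtain ⟨V, _, _, _, ρ, b, hρ, hχ, hR⟩ := h
  let f : V →ₗ[ℂ] V := Matrix.toLin b b E
  have hf : ∀ g, f ∘ₗ ρ g = ρ g ∘ₗ f := by
    intro g
    apply (LinearMap.toMatrix b b).injective
    rw [LinearMap.toMatrix_comp b b b, LinearMap.toMatrix_comp b b b, ← hR,
      LinearMap.toMatrix_toLin, hE]
  let F : IntertwiningMap ρ ρ := ⟨f, hf⟩
  obtain ⟨c, hc⟩ := (IsIrreducible.algebraMap_intertwiningMap_bijective_of_isAlgClosed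
    (ρ := ρ)).2 F
  refine ⟨c, ?_⟩
  have h1 : f = c • LinearMap.id := by
    have := congrArg IntertwiningMap.toLinearMap hc
    rw [← show F.toLinearMap = f from rfl, ← this]
    rfl
  have h2 := congrArg (LinearMap.toMatrix b b) h1
  simpa [f] using h2

lemma MatReal.ortho_ne {χ ψ : G → ℂ} {d R d' R'} (h : MatReal χ d R) (h' : MatReal ψ d' R')
    (hne : χ ≠ ψ) (u u' v' v) : ∑ t, R t u u' * R' t⁻¹ v' v = 0 := by
  let S : Matrix (Fin d) (Fin d') ℂ := Matrix.single u' v' (1 : ℂ)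
  let E : Matrix (Fin d) (Fin d') ℂ := ∑ t, R t * S * R' t⁻¹
  have hE : ∀ s, R s * E = E * R' s := by
    intro s
    simp only [E, Matrix.mul_sum, Matrix.sum_mul]
    rw [← Equiv.sum_comp (Equiv.mulLeft s) (fun t => R t * S * R' t⁻¹ * R' s)]
    refine Finset.sum_congr rfl fun t _ => ?_
    rw [Equiv.coe_mulLeft, Matrix.mul_assoc (R (s * t) * S), ← map_mul R', map_mul R]
    simp [Matrix.mul_assoc]
  have := congrFun (congrFun (h.schur_ne h' hne E hE) u) v
  simpa [E, S, Matrix.sum_apply, Matrix.mul_apply, Matrix.single_apply, Finset.sum_ite_eq,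
    ite_and] using this

lemma MatReal.ortho_self {χ : G → ℂ} {d R} (h : MatReal χ d R) (u u' v' v) :
    ∑ t, R t u u' * R t⁻¹ v' v = if u = v ∧ u' = v' then (Nat.card G : ℂ) / d else 0 := by
  let E : Matrix (Fin d) (Fin d) ℂ := ∑ t, R t * Matrix.single u' v' 1 * R t⁻¹
  have hE : ∀ s, R s * E = E * R s := by
    intro s
    simp only [E, Finset.mul_sum, Finset.sum_mul]
    rw [← Equiv.sum_comp (Equiv.mulLeft s) (fun t => R t * Matrix.single u' v' 1 * R t⁻¹ * R s)]
    refine Finset.sum_congr rfl fun t _ => ?_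
    rw [Equiv.coe_mulLeft, mul_assoc _ (R (s * t)⁻¹), ← map_mul R, map_mul R s t]
    simp [Matrix.mul_assoc]
  obtain ⟨c, hc⟩ := h.schur_self E hE
  have hd : (d : ℂ) ≠ 0 := by exact_mod_cast h.pos.ne'
  have htr : E.trace = Nat.card G * if u' = v' then 1 else 0 := by
    simp only [E, Matrix.trace_sum]
    rw [Finset.sum_congr rfl (g := fun _ => if u' = v' then (1 : ℂ) else 0)]
    · simp
    · intro t _
      rw [Matrix.trace_mul_comm, ← Matrix.mul_assoc, ← map_mul, inv_mul_cancel, map_one,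
        Matrix.one_mul]
      split_ifs with h
      · subst h; simp
      · exact Matrix.trace_single_eq_of_ne _ _ _ h
  have hc' : c * d = Nat.card G * if u' = v' then 1 else 0 := by
    rw [← htr, hc]; simp
  have h1 := congrFun (congrFun hc u) v
  have h2 : ∑ t, R t u u' * R t⁻¹ v' v = c * (1 : Matrix (Fin d) (Fin d) ℂ) u v := by
    simpa [E, Matrix.sum_apply, Matrix.mul_apply, Matrix.single_apply, Finset.sum_ite_eq,
      ite_and] using h1
  rw [h2, Matrix.one_apply]
  by_cases huv : u = v <;> by_cases huv' : u' = v' <;> simp [huv, huv'] at hc' ⊢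
  · field_simp; exact hc'
  · exact hc'.resolve_right h.pos.ne'

lemma MatReal.isIntegral {χ : G → ℂ} {d R} (h : MatReal χ d R) (t : G) :
    IsIntegral ℤ (χ t) := by
  rw [h.trace, Matrix.trace_eq_sum_roots_charpoly]
  apply IsIntegral.multiset_sum
  intro x hx
  have hx' := Polynomial.isRoot_of_mem_roots hx
  rw [← Matrix.mem_spectrum_iff_isRoot_charpoly] at hx'
  have h1 := spectrum.pow_mem_pow _ (Fintype.card G) hx'
  have : Nonempty (Fin d) := ⟨⟨0, h.pos⟩⟩
  rw [← map_pow, pow_card_eq_one, map_one, spectrum.one_eq] at h1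
  refine IsIntegral.of_pow (Fintype.card_pos (α := G)) ?_
  rw [Set.mem_singleton_iff.mp h1]
  exact isIntegral_one

lemma MatReal.dvd_card {χ : G → ℂ} {d R} (h : MatReal χ d R) : d ∣ Nat.card G := by
  have hd : (d : ℂ) ≠ 0 := by exact_mod_cast h.pos.ne'
  have : Nonempty (Fin d) := ⟨⟨0, h.pos⟩⟩
  have hZ : ∑ t, χ t⁻¹ • R t = algebraMap ℂ (Matrix (Fin d) (Fin d) ℂ) ((Nat.card G : ℂ) / d) := by
    ext u u'
    simp only [Matrix.sum_apply, Matrix.smul_apply, smul_eq_mul, h.trace, Matrix.trace,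
      Matrix.diag_apply, Finset.sum_mul]
    rw [Finset.sum_comm]
    simp_rw [mul_comm _ (R _ u u'), h.ortho_self]
    rw [Matrix.algebraMap_matrix_apply]
    by_cases huv : u = u'
    · subst huv; simp
    · rw [if_neg huv]
      apply Finset.sum_eq_zero
      intro v _
      rw [if_neg]
      rintro ⟨rfl, rfl⟩
      exact huv rfl
  let O := integralClosure ℤ ℂ
  let e : MonoidAlgebra O G := ∑ t, MonoidAlgebra.single t (⟨χ t⁻¹, h.isIntegral _⟩ : O)
  have he : IsIntegral O e := IsIntegral.of_finite O e
  have he2 := he.map (MonoidAlgebra.lift O (Matrix (Fin d) (Fin d) ℂ) G R)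
  have he3 : MonoidAlgebra.lift O (Matrix (Fin d) (Fin d) ℂ) G R e = ∑ t, χ t⁻¹ • R t := by
    simp only [e, map_sum, MonoidAlgebra.lift_single]
    rfl
  rw [he3, hZ, isIntegral_algebraMap_iff (algebraMap ℂ (Matrix (Fin d) (Fin d) ℂ)).injective] at he2
  have he4 : IsIntegral ℤ ((Nat.card G : ℂ) / d) := isIntegral_trans _ he2
  have he5 : IsIntegral ℤ ((Nat.card G : ℚ) / d) := by
    rw [← isIntegral_algebraMap_iff (algebraMap ℚ ℂ).injective]
    simpa using he4
  obtain ⟨z, hz⟩ := IsIntegrallyClosed.isIntegral_iff.mp he5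
  have hd' : (d : ℚ) ≠ 0 := by exact_mod_cast h.pos.ne'
  have : (Nat.card G : ℤ) = d * z := by
    have : (Nat.card G : ℚ) = d * z := by
      rw [eq_div_iff hd'] at hz
      rw [← hz, mul_comm]
      simp
    exact_mod_cast this
  exact Int.natCast_dvd_natCast.mp ⟨z, this⟩

lemma closure_expand [Fintype {χ : G → ℂ // IrrC G χ}] {h : G → ℂ}
    (hh : h ∈ AddSubgroup.closure {χ | IrrC G χ}) :
    (Nat.card G : ℂ) • h = ∑ φ : {χ : G → ℂ // IrrC G χ}, ipG h φ • (φ : G → ℂ) := by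
  induction hh using AddSubgroup.closure_induction with
  | mem x hx =>
    rw [Finset.sum_eq_single ⟨x, hx⟩]
    · rw [irrC_ortho hx hx, if_pos rfl]
    · intro ψ _ hψ
      rw [irrC_ortho hx ψ.2, if_neg, zero_smul]
      exact fun h => hψ (Subtype.ext h.symm)
    · simp
  | zero => simp [ipG]
  | add x y _ _ hx hy => simp only [ipG_add_left, add_smul, smul_add, hx, hy,
      Finset.sum_add_distrib]
  | neg x _ hx =>
    have : -x = (-1 : ℂ) • x := by ext; simp
    simp only [this, ipG_smul_left, mul_smul, ← Finset.smul_sum, ← hx]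
    rw [smul_comm]

lemma reg_expand [Fintype {χ : G → ℂ // IrrC G χ}] [DecidableEq G] (t : G) :
    ∑ φ : {χ : G → ℂ // IrrC G χ}, (φ : G → ℂ) 1 * (φ : G → ℂ) t =
      if t = 1 then (Nat.card G : ℂ) else 0 := by
  let R : G →* Matrix G G ℂ :=
    { toFun := fun g => Matrix.of fun a b => if a = g * b then 1 else 0
      map_one' := by ext a b; simp [Matrix.one_apply]
      map_mul' := by
        intro x y; ext a b
        simp [Matrix.mul_apply, mul_assoc] }
  have hR : (fun g => (R g).trace) = fun g => if g = 1 then (Nat.card G : ℂ) else 0 := by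
    ext g
    simp only [Matrix.trace, R, MonoidHom.coe_mk, OneHom.coe_mk, Matrix.diag_apply,
      Matrix.of_apply]
    by_cases hg : g = 1
    · simp [hg]
    · simp [hg]
  have key := closure_expand (matrix_char_mem R)
  rw [hR] at key
  have key2 := congrFun key t
  simp only [Pi.smul_apply, Finset.sum_apply, smul_eq_mul] at key2
  have hip : ∀ φ : G → ℂ, ipG (fun g => if g = 1 then (Nat.card G : ℂ) else 0) φ
      = Nat.card G * φ 1 := by
    intro φ
    simp [ipG]
  simp only [hip, mul_assoc, ← Finset.mul_sum] at key2
  exact (mul_left_cancel₀ (by simp) key2).symm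

/-- The data extracted from the representation theory of `N`. -/
structure WData (N : Type) [Group N] [Fintype N] [DecidableEq N] (Φ U : Type) [Fintype U] [DecidableEq U]
    [DecidableEq Φ] where
  p : U → Φ
  d : Φ → ℕ
  R : N →* Matrix U U ℂ
  hd : ∀ φ, 0 < d φ
  hdvd : ∀ φ, d φ ∣ Nat.card N
  hfib : ∀ φ, (Finset.univ.filter fun u => p u = φ).card = d φ
  hblock : ∀ t u u', p u ≠ p u' → R t u u' = 0
  hortho : ∀ u u' v' v, ∑ t, R t u u' * R t⁻¹ v' v =
    if p u = p u' ∧ u = v ∧ u' = v' then (Nat.card N : ℂ) / d (p u) else 0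
  hreg : ∀ t, ∑ u, (d (p u) : ℂ) * R t u u = if t = 1 then (Nat.card N : ℂ) else 0

open Classical in
lemma exists_wdata (N : Type) [Group N] [Fintype N] [Fintype {χ : N → ℂ // IrrC N χ}] :
    ∃ (d : {χ : N → ℂ // IrrC N χ} → ℕ)
      (D : WData N {χ : N → ℂ // IrrC N χ} (Σ φ, Fin (d φ))),
      (∀ φ, D.d φ = d φ) ∧ ∀ φ, φ.1 1 = d φ := by
  choose d R hR using fun φ : {χ : N → ℂ // IrrC N χ} => exists_matReal φ.2
  refine ⟨d, ⟨Sigma.fst, d,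
    { toFun := fun t => Matrix.blockDiagonal' fun φ => R φ t
      map_one' := by simp [Matrix.blockDiagonal'_one, ← Pi.one_def]
      map_mul' := fun s t => by
        rw [← Matrix.blockDiagonal'_mul]; simp }, ?_, ?_, ?_, ?_, ?_, ?_⟩, fun _ => rfl, ?_⟩
  · exact fun φ => (hR φ).pos
  · exact fun φ => (hR φ).dvd_card
  · intro φ
    rw [← Fintype.card_subtype, Fintype.card_congr (Equiv.sigmaSubtype (β := fun φ => Fin (d φ)) φ)]
    simp
  · rintro t ⟨φ, u⟩ ⟨ψ, v⟩ h
    change Matrix.blockDiagonal' (fun φ => R φ t) ⟨φ, u⟩ ⟨ψ, v⟩ = 0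
    exact Matrix.blockDiagonal'_apply_ne _ _ _ h
  · rintro ⟨φ, u⟩ ⟨φ', u'⟩ ⟨ψ', v'⟩ ⟨ψ, v⟩
    simp only [MonoidHom.coe_mk, OneHom.coe_mk]
    by_cases h1 : φ = φ'
    · subst h1
      by_cases h2 : ψ' = ψ
      · subst h2
        simp only [Matrix.blockDiagonal'_apply_eq]
        by_cases h3 : φ = ψ'
        · subst h3
          rw [(hR φ).ortho_self]
          simp
        · rw [(hR φ).ortho_ne (hR ψ') (fun h => h3 (Subtype.ext h)), if_neg]
          rintro ⟨_, h, _⟩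
          exact h3 (congrArg Sigma.fst h)
      · rw [if_neg]
        · apply Finset.sum_eq_zero
          intro t _
          rw [Matrix.blockDiagonal'_apply_ne _ _ _ h2, mul_zero]
        · rintro ⟨_, h, h'⟩
          exact h2 ((congrArg Sigma.fst h').symm.trans (congrArg Sigma.fst h))
    · rw [if_neg]
      · apply Finset.sum_eq_zero
        intro t _
        rw [Matrix.blockDiagonal'_apply_ne _ _ _ h1, zero_mul]
      · rintro ⟨h, _, _⟩
        exact h1 h
  · intro t
    rw [← reg_expand, Fintype.sum_sigma]
    refine Finset.sum_congr rfl fun φ _ => ?_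
    simp only [MonoidHom.coe_mk, OneHom.coe_mk, Matrix.blockDiagonal'_apply_eq]
    rw [← Finset.mul_sum, (hR φ).one, (hR φ).trace]
    rfl
  · exact fun φ => (hR φ).one

end MatCoeff

/-! ### Part 3: the wreath product representation -/

section WreathRep

open MvPolynomial

variable {N : Type} [Group N] {B ι : Type} [Fintype B] [DecidableEq B]

/-- The tensor power representation of the wreath product, in matrix form. -/
def wrRep (R : N →* Matrix B B ℂ) (n : ℕ) :
    Wreath N n →* Matrix (Fin n → B) (Fin n → B) ℂ where
  toFun g := Matrix.of fun b b' => ∏ j, R (g.left j) (b j) (b' (g.right⁻¹ j))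
  map_one' := by
    ext b b'
    simp only [SemidirectProduct.one_left, Pi.one_apply, map_one, SemidirectProduct.one_right,
      inv_one, Equiv.Perm.coe_one, id_eq, Matrix.of_apply, Matrix.one_apply]
    by_cases h : b = b'
    · subst h; simp
    · rw [if_neg h]
      obtain ⟨j, hj⟩ := Function.ne_iff.mp h
      exact Finset.prod_eq_zero (Finset.mem_univ j) (if_neg hj)
  map_mul' := by
    intro g g'
    ext b c
    have hl : ∀ j, (g * g').left j = g.left j * g'.left (g.right⁻¹ j) := fun j => rfl
    have hr : ∀ j, (g * g').right⁻¹ j = g'.right⁻¹ (g.right⁻¹ j) := fun j => by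
      simp [SemidirectProduct.mul_right]
    simp only [Matrix.of_apply, Matrix.mul_apply, hl, hr, map_mul]
    rw [← Equiv.sum_comp (Equiv.arrowCongr g.right.symm (Equiv.refl B))]
    rw [Finset.prod_univ_sum, Fintype.piFinset_univ]
    refine Finset.sum_congr rfl fun b' _ => ?_
    rw [← Equiv.prod_comp g.right⁻¹ (fun j => R (g'.left j) _ _), ← Finset.prod_mul_distrib]
    refine Finset.prod_congr rfl fun j _ => ?_
    simp [Equiv.arrowCongr]

lemma wrRep_apply (R : N →* Matrix B B ℂ) (n : ℕ) (g : Wreath N n) (b b' : Fin n → B) :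
    wrRep R n g b b' = ∏ j, R (g.left j) (b j) (b' (g.right⁻¹ j)) := rfl

/-- The content of a tuple. -/
noncomputable def cnt {n : ℕ} (s : Fin n → ι) : ι →₀ ℕ := ∑ j, Finsupp.single (s j) 1

lemma prod_X_cnt {S : Type} [CommSemiring S] {n : ℕ} (s : Fin n → ι) :
    ∏ j, (X (s j) : MvPolynomial ι S) = monomial (cnt s) 1 := by
  simp only [X, cnt]
  rw [← monomial_sum_one]

lemma cnt_comp_perm {n : ℕ} (s : Fin n → ι) (σ : Equiv.Perm (Fin n)) : cnt (s ∘ σ) = cnt s :=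
  Equiv.sum_comp σ (fun j => Finsupp.single (s j) 1)

lemma wrRep_cnt (R : N →* Matrix B B ℂ) (bl : B → ι)
    (hbl : ∀ t b b', bl b ≠ bl b' → R t b b' = 0) (n : ℕ) (g : Wreath N n) (b b' : Fin n → B)
    (h : cnt (bl ∘ b) ≠ cnt (bl ∘ b')) : wrRep R n g b b' = 0 := by
  rw [wrRep_apply]
  by_contra hne
  apply h
  rw [← cnt_comp_perm (bl ∘ b') g.right⁻¹]
  congr 1
  ext j
  by_contra hj
  exact hne (Finset.prod_eq_zero (Finset.mem_univ j) (hbl _ _ _ hj))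

/-- The graded character of the wreath representation. -/
noncomputable def wrP (R : N →* Matrix B B ℂ) (bl : B → ι) (n : ℕ) (g : Wreath N n) :
    MvPolynomial ι ℂ :=
  ∑ b : Fin n → B, (∏ j, X (bl (b j))) * C (wrRep R n g b b)

open Classical in
lemma coeff_wrP (R : N →* Matrix B B ℂ) (bl : B → ι) (n : ℕ) (g : Wreath N n) (γ : ι →₀ ℕ) :
    coeff γ (wrP R bl n g) = ∑ b : Fin n → B, if cnt (bl ∘ b) = γ then wrRep R n g b b else 0 := by
  rw [wrP, coeff_sum]
  refine Finset.sum_congr rfl fun b _ => ?_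
  rw [prod_X_cnt (fun j => bl (b j)), mul_comm, C_mul_monomial, coeff_monomial, mul_one]
  rfl

variable [Fintype N]

noncomputable instance (n : ℕ) : Fintype (Wreath N n) := by
  classical
  exact Fintype.ofEquiv _ (SemidirectProduct.equivProd (φ := wreathAct n N)).symm

lemma card_wreath (n : ℕ) : Nat.card (Wreath N n) = Nat.card N ^ n * n.factorial := by
  rw [SemidirectProduct.card]
  simp [Fintype.card_perm]

lemma coeff_wrP_mem (R : N →* Matrix B B ℂ) (bl : B → ι)
    (hbl : ∀ t b b', bl b ≠ bl b' → R t b b' = 0) (n : ℕ) (γ : ι →₀ ℕ) :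
    (fun g => coeff γ (wrP R bl n g)) ∈
      AddSubgroup.closure {χ | IrrC (Wreath N n) χ} := by
  classical
  let T : Wreath N n →* Matrix {b : Fin n → B // cnt (bl ∘ b) = γ}
      {b : Fin n → B // cnt (bl ∘ b) = γ} ℂ :=
    { toFun := fun g => (wrRep R n g).submatrix Subtype.val Subtype.val
      map_one' := by
        rw [map_one, Matrix.submatrix_one _ Subtype.val_injective]
      map_mul' := by
        intro g g'
        ext b c
        rw [map_mul, Matrix.submatrix_apply, Matrix.mul_apply, Matrix.mul_apply]
        symm
        simp only [Matrix.submatrix_apply]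
        rw [← Finset.sum_subtype (Finset.univ.filter fun b : Fin n → B => cnt (bl ∘ b) = γ)
          (by simp) (fun x => wrRep R n g b x * wrRep R n g' x c), Finset.sum_filter]
        refine Finset.sum_congr rfl fun x _ => ?_
        split_ifs with hx
        · rfl
        · rw [wrRep_cnt R bl hbl n g _ _ (by rw [b.2]; exact Ne.symm hx), zero_mul] }
  have := matrix_char_mem T
  convert this using 2 with g
  rw [coeff_wrP, ← Finset.sum_filter, Matrix.trace]
  rw [Finset.sum_subtype (p := fun b : Fin n → B => cnt (bl ∘ b) = γ) _ (by simp)]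
  rfl

lemma coeff_mul_wrP_mem (R : N →* Matrix B B ℂ) (bl : B → ι)
    (hbl : ∀ t b b', bl b ≠ bl b' → R t b b' = 0) (n : ℕ) (Q : MvPolynomial ι ℤ) (α : ι →₀ ℕ) :
    (fun g => coeff α (map (Int.castRingHom ℂ) Q * wrP R bl n g)) ∈
      AddSubgroup.closure {χ | IrrC (Wreath N n) χ} := by
  classical
  have : (fun g => coeff α (map (Int.castRingHom ℂ) Q * wrP R bl n g)) =
      ∑ x ∈ Finset.HasAntidiagonal.antidiagonal α, coeff x.1 Q • (fun g => coeff x.2 (wrP R bl n g)) := by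
    ext g
    simp [coeff_mul, coeff_map]
  rw [this]
  exact AddSubgroup.sum_mem _ fun x _ => AddSubgroup.zsmul_mem _ (coeff_wrP_mem R bl hbl n _) _

end WreathRep

/-! ### Part 4: generic combinatorial lemmas -/

section Combi

open MvPolynomial

lemma sum_tuples_fiber {E A R : Type} [Fintype E] [Fintype A] [DecidableEq A] [CommRing R]
    (n : ℕ) (π : E → A) (w : E → R) (H : (Fin n → A) → R) :
    ∑ e : Fin n → E, (∏ j, w (e j)) * H (π ∘ e) =
      ∑ a : Fin n → A, (∏ j, ∑ e with π e = a j, w e) * H a := by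
  classical
  rw [← Finset.sum_fiberwise Finset.univ (fun e : Fin n → E => π ∘ e)]
  refine Finset.sum_congr rfl fun a _ => ?_
  rw [Finset.prod_univ_sum, Finset.sum_mul]
  refine Finset.sum_congr ?_ ?_
  · ext e
    simp [funext_iff]
  · intro e he
    simp only [Finset.mem_filter, Finset.mem_univ, true_and, Fintype.mem_piFinset] at he
    rw [show π ∘ e = a from funext he]

lemma cnt_apply {A : Type} [DecidableEq A] {n : ℕ} (a : Fin n → A) (s : A) :
    cnt a s = Fintype.card {j // a j = s} := by
  rw [cnt, Finsupp.finsetSum_apply, Fintype.card_subtype, Finset.card_filter]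
  exact Finset.sum_congr rfl fun j _ => Finsupp.single_apply

lemma prod_cnt {A R : Type} [Fintype A] [CommRing R] {n : ℕ} (a : Fin n → A)
    (t : A → R) : ∏ j, t (a j) = ∏ s, t s ^ cnt a s := by
  classical
  rw [← Finset.prod_fiberwise Finset.univ a]
  refine Finset.prod_congr rfl fun s _ => ?_
  rw [cnt_apply, Fintype.card_subtype]
  exact Finset.prod_eq_pow_card fun j hj => by simp [(Finset.mem_filter.mp hj).2]

lemma sum_cnt {A : Type} [Fintype A] {n : ℕ} (a : Fin n → A) : ∑ s, cnt a s = n := by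
  classical
  simp only [cnt, Finsupp.finsetSum_apply]
  rw [Finset.sum_comm]
  simp [Finsupp.single_apply]

lemma card_cnt_eq {A : Type} [Fintype A] [DecidableEq A] (n : ℕ) (l : A →₀ ℕ)
    (hl : ∑ s, l s = n) :
    (∏ s, (l s).factorial) * (Finset.univ.filter fun a : Fin n → A => cnt a = l).card
      = n.factorial := by
  have h1 := coeff_linearCombination_X_pow_of_fintype (R := ℕ) (fun _ : A => 1) l n
  rw [if_pos (by rw [Finsupp.sum_fintype _ _ (by simp)]; exact hl)] at h1
  simp only [one_smul] at h1
  rw [Fintype.sum_pow] at h1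
  simp only [prod_X_cnt, coeff_sum, coeff_monomial, one_pow, Nat.cast_id] at h1
  rw [show (l.prod fun _ _ => (1 : ℕ)) = 1 from Finset.prod_const_one, mul_one] at h1
  rw [Finset.card_filter, h1, ← Finsupp.multinomial_of_support_subset (Finset.subset_univ _),
    Nat.multinomial_spec, hl]

/-- The geometric series in `T` with ratio `t`. -/
noncomputable def gser {R : Type} [CommRing R] (t : R) : PowerSeries R :=
  PowerSeries.mk fun m => t ^ m

lemma sum_fix {A R : Type} [Fintype A] [DecidableEq A] [CommRing R] (n : ℕ) (t : A → R) :
    ∑ σ : Equiv.Perm (Fin n), ∑ a : Fin n → A, (if a ∘ σ = a then ∏ j, t (a j) else 0)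
      = (n.factorial : R) * PowerSeries.coeff n (∏ s, gser (t s)) := by
  rw [Finset.sum_comm, PowerSeries.coeff_prod]
  have h1 : ∀ a : Fin n → A, ∑ σ : Equiv.Perm (Fin n), (if a ∘ σ = a then ∏ j, t (a j) else 0)
      = (∏ s, (cnt a s).factorial : ℕ) * ∏ s, t s ^ cnt a s := by
    intro a
    rw [← Finset.sum_filter, Finset.sum_const, ← Fintype.card_subtype,
      DomMulAct.stabilizer_card, nsmul_eq_mul, prod_cnt]
    simp only [cnt_apply]
  simp only [h1]
  rw [← Finset.sum_fiberwise_of_maps_to (s := Finset.univ)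
    (t := Finset.finsuppAntidiag (Finset.univ : Finset A) n)
    (g := fun a : Fin n → A => cnt a) (by intro a _; simp [sum_cnt]), Finset.mul_sum]
  refine Finset.sum_congr rfl fun l hl => ?_
  have hl' : ∑ s, l s = n := by
    simpa using (Finset.mem_finsuppAntidiag.mp hl).1
  rw [Finset.sum_congr rfl (g := fun _ => ((∏ s, (l s).factorial : ℕ) : R) * ∏ s, t s ^ l s)]
  · rw [Finset.sum_const, nsmul_eq_mul, ← mul_assoc, ← Nat.cast_mul, mul_comm (Finset.card _),
      card_cnt_eq n l hl']
    simp [gser]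
  · intro a ha
    rw [(Finset.mem_filter.mp ha).2]

/-- complete homogeneous symmetric polynomials -/
noncomputable def hsy {R : Type} [CommRing R] {k : ℕ} (y : Fin k → R) (m : ℕ) : R :=
  PowerSeries.coeff m (∏ r, gser (y r))

lemma gser_mul {R : Type} [CommRing R] (x y : R) :
    gser (x * y) = PowerSeries.rescale x (gser y) := by
  ext m
  simp [gser, mul_pow]

lemma hsy_prod {R : Type} [CommRing R] {k : ℕ} (x : R) (y : Fin k → R) :
    ∏ r, gser (x * y r) = PowerSeries.mk fun m => hsy y m * x ^ m := by
  simp only [gser_mul]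
  rw [← map_prod]
  ext m
  rw [PowerSeries.coeff_rescale, PowerSeries.coeff_mk, hsy, mul_comm]

lemma gser_inv {R : Type} [CommRing R] (y : R) :
    gser y * (1 - PowerSeries.C y * PowerSeries.X) = 1 := by
  rw [mul_sub, mul_one, mul_left_comm]
  ext m
  cases m with
  | zero => simp [gser]
  | succ m =>
    simp [gser, PowerSeries.coeff_succ_mul_X, PowerSeries.coeff_one, pow_succ, mul_comm]

/-- Jacobi–Trudi in the form of bialternants. -/
lemma jacobi_trudi {R : Type} [CommRing R] {k : ℕ} (y : Fin k → R) (α : Fin k → ℕ) :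
    (Matrix.of fun i j : Fin k => if (j : ℕ) ≤ α i then hsy y (α i - j) else 0).det *
      (Matrix.of fun i r : Fin k => y r ^ (i : ℕ)).det =
    (Matrix.of fun i r : Fin k => y r ^ α i).det := by
  classical
  let q : Fin k → Polynomial R := fun r =>
    ∏ r' ∈ Finset.univ.erase r, (1 - Polynomial.C (y r') * Polynomial.X)
  let Cm : Matrix (Fin k) (Fin k) R := Matrix.of fun j r => (q r).coeff j
  have hq : ∀ r j, k ≤ j → (q r).coeff j = 0 := by
    intro r j hj
    apply Polynomial.coeff_eq_zero_of_natDegree_lt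
    calc (q r).natDegree ≤ ∑ r' ∈ Finset.univ.erase r, 
            (1 - Polynomial.C (y r') * Polynomial.X).natDegree := Polynomial.natDegree_prod_le _ _
      _ ≤ ∑ r' ∈ Finset.univ.erase r, 1 := by
            refine Finset.sum_le_sum fun r' _ => ?_
            compute_degree
      _ < j := by
        have : 0 < k := r.pos
        simp; omega
  have hg : ∀ r, gser (y r) = (∏ r', gser (y r')) * (q r : PowerSeries R) := by
    intro r
    have : (q r : PowerSeries R) =
        ∏ r' ∈ Finset.univ.erase r, (1 - PowerSeries.C (y r') * PowerSeries.X) := by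
      have := map_prod (Polynomial.coeToPowerSeries.ringHom (R := R))
        (fun r' => 1 - Polynomial.C (y r') * Polynomial.X) (Finset.univ.erase r)
      rw [Polynomial.coeToPowerSeries.ringHom_apply] at this
      rw [this]
      exact Finset.prod_congr rfl fun r' _ => by simp
    rw [this, ← Finset.mul_prod_erase _ _ (Finset.mem_univ r), mul_assoc,
      ← Finset.prod_mul_distrib]
    simp [gser_inv]
  have key : ∀ α : Fin k → ℕ, (Matrix.of fun i r : Fin k => y r ^ α i) =
      (Matrix.of fun i j : Fin k => if (j : ℕ) ≤ α i then hsy y (α i - j) else 0) * Cm := by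
    intro α
    ext i r
    have h1 : y r ^ α i = PowerSeries.coeff (α i) (gser (y r)) := by simp [gser]
    rw [Matrix.of_apply, h1, hg, mul_comm, PowerSeries.coeff_mul,
      Finset.Nat.sum_antidiagonal_eq_sum_range_succ_mk, Matrix.mul_apply]
    simp only [Matrix.of_apply, Cm, Polynomial.coeff_coe]
    rw [Finset.sum_fin_eq_sum_range]
    trans ∑ j ∈ Finset.range k ∩ Finset.range (α i + 1), (q r).coeff j * hsy y (α i - j)
    · symm
      apply Finset.sum_subset Finset.inter_subset_right
      intro j hj hj'
      rw [hq, zero_mul]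
      simp at hj hj'
      by_contra hk
      have := hj' (by omega)
      omega
    · rw [← Finset.filter_mem_eq_inter, Finset.sum_filter]
      refine Finset.sum_congr rfl fun j hj => ?_
      have := Finset.mem_range.mp hj
      simp only [Finset.mem_range, this, dif_pos, Nat.lt_succ_iff]
      split_ifs <;> simp [mul_comm]
  have hC : Cm.det = (Matrix.of fun i r : Fin k => y r ^ (i : ℕ)).det := by
    have hH : (Matrix.of fun i j : Fin k =>
        if (j : ℕ) ≤ (i : ℕ) then hsy y (i - j) else 0).det = 1 := by
      rw [Matrix.det_of_isLowerTriangular]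
      · simp [hsy, gser]
      · intro i j hij
        simp only [Matrix.of_apply]
        rw [if_neg]
        have : i < j := hij
        simpa using this
    rw [key (fun i => (i : ℕ)), Matrix.det_mul, hH, one_mul]
  rw [← hC, ← Matrix.det_mul, ← key]

end Combi

/-! ### Part 5: the kernel computation -/

section Kernel

open MvPolynomial

variable {N : Type} [Group N] [Fintype N] [DecidableEq N] {Φ U : Type} [Fintype U]
  [DecidableEq U] [DecidableEq Φ]

/-- `k` copies of the representation of `N`. -/
def wRB (D : WData N Φ U) (k : ℕ) : N →* Matrix (U × Fin k) (U × Fin k) ℂ where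
  toFun t := Matrix.blockDiagonal fun _ => D.R t
  map_one' := by simp [← Pi.one_def]
  map_mul' s t := by rw [← Matrix.blockDiagonal_mul]; simp

lemma wRB_apply (D : WData N Φ U) (k : ℕ) (t : N) (b b' : U × Fin k) :
    wRB D k t b b' = if b.2 = b'.2 then D.R t b.1 b'.1 else 0 :=
  Matrix.blockDiagonal_apply (fun _ => D.R t) b b'

/-- block labels -/
def wbl (D : WData N Φ U) (k : ℕ) (b : U × Fin k) : Φ × Fin k := (D.p b.1, b.2)

lemma wRB_block (D : WData N Φ U) (k : ℕ) (t : N) (b b' : U × Fin k)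
    (h : wbl D k b ≠ wbl D k b') : wRB D k t b b' = 0 := by
  rw [wRB_apply]
  split_ifs with h2
  · apply D.hblock
    intro h3
    exact h (Prod.ext h3 h2)
  · rfl

lemma wRB_ortho (D : WData N Φ U) (k : ℕ) (b b' c' c : U × Fin k) :
    ∑ t, wRB D k t b b' * wRB D k t⁻¹ c' c =
    if wbl D k b = wbl D k b' ∧ c'.2 = c.2 ∧ b.1 = c.1 ∧ b'.1 = c'.1 then
      (Nat.card N : ℂ) / D.d (D.p b.1) else 0 := by
  simp only [wRB_apply, wbl, Prod.mk.injEq]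
  by_cases h1 : b.2 = b'.2 <;> by_cases h2 : c'.2 = c.2 <;> simp [h1, h2, D.hortho]

variable {A : Type} [CommRing A] [Algebra ℂ A]

/-- evaluation of the graded character -/
noncomputable def wev (D : WData N Φ U) (k n : ℕ) (x : Φ × Fin k → A) (g : Wreath N n) : A :=
  ∑ b : Fin n → U × Fin k, (∏ j, x (wbl D k (b j))) * algebraMap ℂ A (wrRep (wRB D k) n g b b)

lemma wev_kernel_perm [Fintype Φ] (D : WData N Φ U) (k n : ℕ) (x y : Φ × Fin k → A)
    (σ : Equiv.Perm (Fin n)) :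
    ∑ f : Fin n → N, wev D k n x (⟨f, σ⟩ : Wreath N n) * wev D k n y (⟨f, σ⟩ : Wreath N n)⁻¹ =
      ∑ a : Fin n → Φ × Fin k × Fin k, if a ∘ ⇑σ⁻¹ = a then
        ∏ j, ((Nat.card N : A) * (x ((a j).1, (a j).2.1) * y ((a j).1, (a j).2.2))) else 0 := by
  classical
  have hinv : ∀ (f : Fin n → N) (c : Fin n → U × Fin k),
      wrRep (wRB D k) n (⟨f, σ⟩ : Wreath N n)⁻¹ c c =
      ∏ j, wRB D k (f j)⁻¹ (c (σ⁻¹ j)) (c j) := by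
    intro f c
    rw [wrRep_apply, ← Equiv.prod_comp σ⁻¹]
    refine Finset.prod_congr rfl fun j _ => ?_
    have h1 : (⟨f, σ⟩ : Wreath N n)⁻¹.left (σ⁻¹ j) = (f j)⁻¹ := by
      change (f (σ (σ⁻¹ j)))⁻¹ = _
      simp
    have h2 : (⟨f, σ⟩ : Wreath N n)⁻¹.right⁻¹ (σ⁻¹ j) = j := by
      simp
    rw [h1, h2]
  have step1 : ∑ f : Fin n → N, wev D k n x (⟨f, σ⟩ : Wreath N n) *
      wev D k n y (⟨f, σ⟩ : Wreath N n)⁻¹ =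
      ∑ e : Fin n → (U × Fin k) × (U × Fin k),
        ∏ j, (x (wbl D k (e j).1) * y (wbl D k (e j).2) * algebraMap ℂ A
          (∑ t, wRB D k t (e j).1 (e (σ⁻¹ j)).1 * wRB D k t⁻¹ (e (σ⁻¹ j)).2 (e j).2)) := by
    rw [← (Equiv.arrowProdEquivProdArrow (Fin n) (fun _ => U × Fin k)
      (fun _ => U × Fin k)).symm.sum_comp, Fintype.sum_prod_type]
    simp only [wev, Finset.sum_mul_sum]
    rw [Finset.sum_comm]
    refine Finset.sum_congr rfl fun b _ => ?_
    rw [Finset.sum_comm]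
    refine Finset.sum_congr rfl fun c _ => ?_
    rw [Finset.prod_mul_distrib, ← map_prod, Finset.prod_univ_sum, Fintype.piFinset_univ,
      map_sum, Finset.mul_sum]
    refine Finset.sum_congr rfl fun f _ => ?_
    rw [hinv, wrRep_apply, mul_mul_mul_comm, ← map_mul, ← Finset.prod_mul_distrib,
      ← Finset.prod_mul_distrib]
    rfl
  rw [step1]
  let π : (U × Fin k) × (U × Fin k) → Φ × Fin k × Fin k := fun e => (D.p e.1.1, e.1.2, e.2.2)
  let w : (U × Fin k) × (U × Fin k) → A := fun e =>
    if e.1.1 = e.2.1 then x (wbl D k e.1) * y (wbl D k e.2) *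
      algebraMap ℂ A ((Nat.card N : ℂ) / D.d (D.p e.1.1)) else 0
  have step2 : ∀ e : Fin n → (U × Fin k) × (U × Fin k),
        ∏ j, (x (wbl D k (e j).1) * y (wbl D k (e j).2) * algebraMap ℂ A
          (∑ t, wRB D k t (e j).1 (e (σ⁻¹ j)).1 * wRB D k t⁻¹ (e (σ⁻¹ j)).2 (e j).2))
      = (∏ j, w (e j)) * (if (π ∘ e) ∘ ⇑σ⁻¹ = π ∘ e then 1 else 0) := by
    intro e
    simp only [wRB_ortho]
    by_cases h1 : ∀ j, (e j).1.1 = (e j).2.1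
    · by_cases h2 : (π ∘ e) ∘ ⇑σ⁻¹ = π ∘ e
      · rw [if_pos h2, mul_one]
        refine Finset.prod_congr rfl fun j _ => ?_
        have h3 := congrFun h2 j
        simp only [π, Function.comp_apply, Prod.mk.injEq] at h3
        simp only [w]
        rw [if_pos (h1 j), if_pos ⟨Prod.ext h3.1.symm h3.2.1.symm, h3.2.2, h1 j, h1 _⟩]
      · rw [if_neg h2, mul_zero]
        obtain ⟨j, hj⟩ := Function.ne_iff.mp h2
        apply Finset.prod_eq_zero (Finset.mem_univ j)
        rw [if_neg, map_zero, mul_zero]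
        rintro ⟨h3, h4, _, _⟩
        simp only [wbl, Prod.mk.injEq] at h3
        exact hj (Prod.ext h3.1.symm (Prod.ext h3.2.symm h4))
    · push Not at h1
      obtain ⟨j, hj⟩ := h1
      rw [Finset.prod_eq_zero (Finset.mem_univ j), Finset.prod_eq_zero (Finset.mem_univ j),
        zero_mul]
      · simp [w, hj]
      · rw [if_neg, map_zero, mul_zero]
        rintro ⟨_, _, h, _⟩
        exact hj h
  rw [Finset.sum_congr rfl fun e _ => step2 e,
    sum_tuples_fiber n π w (fun a => if a ∘ ⇑σ⁻¹ = a then 1 else 0)]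
  refine Finset.sum_congr rfl fun a _ => ?_
  have step3 : ∀ s : Φ × Fin k × Fin k, ∑ e with π e = s, w e =
      (Nat.card N : A) * (x (s.1, s.2.1) * y (s.1, s.2.2)) := by
    rintro ⟨φ, i, i'⟩
    have hd : (D.d φ : ℂ) ≠ 0 := by exact_mod_cast (D.hd φ).ne'
    rw [Finset.sum_filter]
    simp only [Fintype.sum_prod_type, π, w, wbl, Prod.mk.injEq]
    have : ∀ u i₁ v i₂, (if D.p u = φ ∧ i₁ = i ∧ i₂ = i' then if u = v then
        x (D.p u, i₁) * y (D.p v, i₂) * algebraMap ℂ A ((Nat.card N : ℂ) / D.d (D.p u)) else 0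
        else 0) = if u = v then (if i₁ = i then (if i₂ = i' then (if D.p u = φ then
          x (φ, i) * y (φ, i') * algebraMap ℂ A ((Nat.card N : ℂ) / D.d φ) else 0) else 0)
          else 0) else 0 := by
      intro u i₁ v i₂
      grind
    simp only [this, Finset.sum_ite_eq, Finset.sum_ite_eq', Finset.mem_univ, if_true,
      Finset.sum_ite_irrel, Finset.sum_const_zero]
    rw [← Finset.sum_filter, Finset.sum_const, D.hfib, nsmul_eq_mul, mul_comm, mul_assoc,
      ← map_natCast (algebraMap ℂ A) (D.d φ), ← map_mul, div_mul_cancel₀ _ hd, map_natCast,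
      mul_comm]
  simp only [step3]
  split_ifs <;> simp

lemma sum_wreath (n : ℕ) (f : Wreath N n → A) :
    ∑ g, f g = ∑ σ : Equiv.Perm (Fin n), ∑ h : Fin n → N, f ⟨h, σ⟩ := by
  classical
  rw [← (SemidirectProduct.equivProd (φ := wreathAct n N)).symm.sum_comp,
    Fintype.sum_prod_type, Finset.sum_comm]
  rfl

lemma wev_kernel [Fintype Φ] (D : WData N Φ U) (k n : ℕ) (x y : Φ × Fin k → A) :
    ∑ g : Wreath N n, wev D k n x g * wev D k n y g⁻¹ =
      (Nat.card (Wreath N n) : A) * PowerSeries.coeff n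
        (∏ s : Φ × Fin k, PowerSeries.mk fun m => hsy (fun r => y (s.1, r)) m * x s ^ m) := by
  rw [sum_wreath]
  simp only [wev_kernel_perm]
  rw [← Equiv.sum_comp (Equiv.inv _)]
  simp only [Equiv.inv_apply, inv_inv]
  rw [sum_fix n (fun s : Φ × Fin k × Fin k =>
    (Nat.card N : A) * (x (s.1, s.2.1) * y (s.1, s.2.2))), card_wreath]
  simp only [← hsy_prod]
  have h1 : ∀ s : Φ × Fin k × Fin k, gser ((Nat.card N : A) * (x (s.1, s.2.1) * y (s.1, s.2.2)))
    = PowerSeries.rescale (Nat.card N : A) (gser (x (s.1, s.2.1) * y (s.1, s.2.2))) :=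
    fun s => gser_mul _ _
  simp only [h1]
  rw [← map_prod, PowerSeries.coeff_rescale]
  simp only [Fintype.prod_prod_type]
  push_cast
  ring

end Kernel

/-! ### Part 6: orthonormality -/

section Ortho

open MvPolynomial

variable {Φ : Type} [Fintype Φ] [DecidableEq Φ] {k : ℕ}

/-- A family of exponents as a finitely supported function. -/
noncomputable def toF (α : Φ → Fin k → ℕ) : Φ × Fin k →₀ ℕ :=
  Finsupp.equivFunOnFinite.symm fun s => α s.1 s.2

@[simp] lemma toF_apply (α : Φ → Fin k → ℕ) (s : Φ × Fin k) : toF α s = α s.1 s.2 := rfl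

/-- product of alternants -/
noncomputable def walt (R : Type) [CommRing R] (α : Φ → Fin k → ℕ) :
    MvPolynomial (Φ × Fin k) R :=
  ∏ φ, (Matrix.of fun i r : Fin k => (X (φ, r) : MvPolynomial (Φ × Fin k) R) ^ α φ i).det

/-- product of Vandermonde determinants -/
noncomputable def wdel (Φ : Type) [Fintype Φ] (k : ℕ) (R : Type) [CommRing R] :
    MvPolynomial (Φ × Fin k) R := walt R fun _ i => (i : ℕ)

lemma monomial_toF {R : Type} [CommRing R] (α : Φ → Fin k → ℕ) (c : R) :
    monomial (toF α) c = C c * ∏ φ, ∏ i, X (φ, i) ^ α φ i := by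
  rw [monomial_eq, Finsupp.prod_fintype _ _ (by simp), Fintype.prod_prod_type]
  rfl

lemma walt_expand (R : Type) [CommRing R] (α : Φ → Fin k → ℕ) :
    walt R α = ∑ w : Φ → Equiv.Perm (Fin k),
      monomial (toF fun φ r => α φ (w φ r)) (∏ φ, ((Equiv.Perm.sign (w φ) : ℤ) : R)) := by
  simp only [walt, Matrix.det_apply]
  rw [Finset.prod_univ_sum, Fintype.piFinset_univ]
  refine Finset.sum_congr rfl fun w _ => ?_
  rw [monomial_toF, map_prod, ← Finset.prod_mul_distrib]
  refine Finset.prod_congr rfl fun φ _ => ?_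
  rw [Units.smul_def, zsmul_eq_mul]
  simp

lemma map_walt {R S : Type} [CommRing R] [CommRing S] (f : R →+* S) (α : Φ → Fin k → ℕ) :
    map f (walt R α) = walt S α := by
  simp only [walt, map_prod, RingHom.map_det]
  refine Finset.prod_congr rfl fun φ _ => ?_
  congr 1
  ext i r
  simp

lemma coeff_walt (R : Type) [CommRing R] (α β : Φ → Fin k → ℕ) (hα : ∀ φ, StrictMono (α φ))
    (hβ : ∀ φ, StrictMono (β φ)) :
    coeff (toF β) (walt R α) = if α = β then 1 else 0 := by
  rw [walt_expand, coeff_sum, Finset.sum_eq_single 1]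
  · rw [coeff_monomial]
    have : (toF fun φ r => α φ r) = toF β ↔ α = β := by
      constructor
      · intro h
        ext φ r
        exact DFunLike.congr_fun h (φ, r)
      · rintro rfl; rfl
    simp [this]
  · intro w _ hw
    rw [coeff_monomial, if_neg]
    intro h
    apply hw
    ext φ r : 2
    have h1 : ∀ r, α φ (w φ r) = β φ r := fun r => DFunLike.congr_fun h (φ, r)
    have h2 : StrictMono (w φ) := by
      intro a b hab
      rw [← (hα φ).lt_iff_lt, h1, h1]
      exact hβ φ hab
    have h3 : (w φ : Fin k → Fin k) = id :=
      StrictMono.range_inj h2 strictMono_id |>.1 (by simp [(w φ).surjective.range_eq])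
    simp [h3]
  · simp

lemma coeff_coeff_prod {R : Type} [CommRing R] (n : ℕ) (c : Φ × Fin k → ℕ → R)
    (γ : Φ × Fin k →₀ ℕ) :
    coeff γ (PowerSeries.coeff n (∏ s : Φ × Fin k,
      PowerSeries.mk fun m => (C (c s m) * X s ^ m : MvPolynomial (Φ × Fin k) R))) =
    if ∑ s, γ s = n then ∏ s, c s (γ s) else 0 := by
  classical
  rw [PowerSeries.coeff_prod]
  simp only [PowerSeries.coeff_mk, Finset.prod_mul_distrib, ← map_prod]
  have : ∀ l : Φ × Fin k →₀ ℕ, (∏ s, (X s : MvPolynomial (Φ × Fin k) R) ^ l s)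
      = monomial l 1 := by
    intro l
    rw [monomial_eq, Finsupp.prod_fintype _ _ (by simp)]
    simp
  simp only [this, C_mul_monomial, mul_one, coeff_sum, coeff_monomial]
  rw [Finset.sum_ite_eq']
  simp [Finset.mem_finsuppAntidiag]

lemma coeff_wdel_mul {R : Type} [CommRing R] (n : ℕ) (c : Φ × Fin k → ℕ → R)
    (P : MvPolynomial (Φ × Fin k) R)
    (hP : ∀ γ, coeff γ P = if ∑ s, γ s = n then ∏ s, c s (γ s) else 0)
    (α : Φ → Fin k → ℕ) (hα : ∑ φ, ∑ i, α φ i = n + Fintype.card Φ * ∑ i : Fin k, (i : ℕ)) :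
    coeff (toF α) (wdel Φ k R * P) = ∏ φ, (Matrix.of fun i j : Fin k =>
      if (j : ℕ) ≤ α φ i then c (φ, i) (α φ i - j) else 0).det := by
  rw [wdel, walt_expand, Finset.sum_mul, coeff_sum]
  simp only [coeff_monomial_mul']
  have hdet : ∀ φ, (Matrix.of fun i j : Fin k =>
      if (j : ℕ) ≤ α φ i then c (φ, i) (α φ i - j) else 0).det =
      ∑ σ : Equiv.Perm (Fin k), ((Equiv.Perm.sign σ : ℤ) : R) * ∏ i,
        if (σ i : ℕ) ≤ α φ i then c (φ, i) (α φ i - σ i) else 0 := by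
    intro φ
    rw [← Matrix.det_transpose, Matrix.det_apply']
    rfl
  simp only [hdet]
  rw [Finset.prod_univ_sum, Fintype.piFinset_univ]
  refine Finset.sum_congr rfl fun w _ => ?_
  rw [Finset.prod_mul_distrib, ← Fintype.prod_prod_type']
  split_ifs with h
  · congr 1
    have h' : ∀ φ i, ((w φ i : Fin k) : ℕ) ≤ α φ i := fun φ i => h (φ, i)
    rw [hP, if_pos]
    · refine Finset.prod_congr rfl fun s _ => ?_
      rw [if_pos (h' _ _)]
      rfl
    · simp only [Finsupp.tsub_apply, toF_apply]
      rw [Fintype.sum_prod_type]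
      have h1 : ∀ φ, ∑ i, (α φ i - ((w φ i : Fin k) : ℕ)) + ∑ i : Fin k, (i : ℕ) = ∑ i, α φ i := by
        intro φ
        rw [← Equiv.sum_comp (w φ) (fun i : Fin k => (i : ℕ)), ← Finset.sum_add_distrib]
        exact Finset.sum_congr rfl fun i _ => Nat.sub_add_cancel (h' φ i)
      have h2 := Finset.sum_congr (rfl : (Finset.univ : Finset Φ) = _) fun φ _ => h1 φ
      rw [Finset.sum_add_distrib, hα] at h2
      simp only [Finset.sum_const, Finset.card_univ, smul_eq_mul] at h2
      exact Nat.add_right_cancel h2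
  · have : ∃ s : Φ × Fin k, ¬ ((w s.1 s.2 : Fin k) : ℕ) ≤ α s.1 s.2 := by
      by_contra! hc
      exact h fun s => hc s
    obtain ⟨s, hs⟩ := this
    rw [Finset.prod_eq_zero (Finset.mem_univ s) (if_neg hs), mul_zero]

lemma hsy_map {R S : Type} [CommRing R] [CommRing S] (f : R →+* S) (y : Fin k → R) (m : ℕ) :
    hsy (fun r => f (y r)) m = f (hsy y m) := by
  have h : ∀ r, gser (f (y r)) = PowerSeries.map f (gser (y r)) := by
    intro r; ext m; simp [gser]
  simp only [hsy, h]
  rw [← map_prod, PowerSeries.coeff_map]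

variable {N : Type} [Group N] [Fintype N] [DecidableEq N] {U : Type} [Fintype U]
  [DecidableEq U]

/-- The virtual character attached to an exponent family. -/
noncomputable def wF (D : WData N Φ U) (n : ℕ) (α : Φ → Fin k → ℕ) (g : Wreath N n) : ℂ :=
  coeff (toF α) (wdel Φ k ℂ * wrP (wRB D k) (wbl D k) n g)

lemma wF_mem (D : WData N Φ U) (n : ℕ) (α : Φ → Fin k → ℕ) :
    wF D n α ∈ AddSubgroup.closure {χ | IrrC (Wreath N n) χ} := by
  have := coeff_mul_wrP_mem (wRB D k) (wbl D k) (wRB_block D k) n (wdel Φ k ℤ) (toF α)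
  rw [wdel, map_walt] at this
  exact this

lemma wF_ortho (D : WData N Φ U) (n : ℕ) (α β : Φ → Fin k → ℕ) (hα : ∀ φ, StrictMono (α φ))
    (hβ : ∀ φ, StrictMono (β φ))
    (hs : ∑ φ, ∑ i, α φ i = n + Fintype.card Φ * ∑ i : Fin k, (i : ℕ)) :
    ipG (wF D n α) (wF D n β) = if α = β then (Nat.card (Wreath N n) : ℂ) else 0 := by
  let ι := Φ × Fin k
  let A := MvPolynomial ι (MvPolynomial ι ℂ)
  let x : ι → A := X
  let y : ι → A := fun s => C (X s)
  have hx : ∀ g, wev D k n x g = map C (wrP (wRB D k) (wbl D k) n g) := by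
    intro g
    simp only [wev, wrP, map_sum, map_mul, map_prod, map_X, map_C]
    rfl
  have hy : ∀ g, wev D k n y g = C (wrP (wRB D k) (wbl D k) n g) := by
    intro g
    simp only [wev, wrP, map_sum, map_mul, map_prod]
    rfl
  have hker := wev_kernel D k n x y
  simp only [hx, hy] at hker
  have h1 : ipG (wF D n α) (wF D n β) = coeff (toF β) (coeff (toF α)
      (wdel Φ k (MvPolynomial ι ℂ) * C (wdel Φ k ℂ) * ∑ g : Wreath N n,
        map C (wrP (wRB D k) (wbl D k) n g) * C (wrP (wRB D k) (wbl D k) n g⁻¹))) := by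
    rw [ipG, Finset.mul_sum, coeff_sum, coeff_sum]
    refine Finset.sum_congr rfl fun g _ => ?_
    have key : ∀ P1 P2 : MvPolynomial ι ℂ, coeff (toF α) (map (C : ℂ →+* MvPolynomial ι ℂ) P1 *
        C P2) = C (coeff (toF α) P1) * P2 := by
      intro P1 P2
      rw [mul_comm, coeff_C_mul, coeff_map, mul_comm]
    have key2 : wdel Φ k (MvPolynomial ι ℂ) = map C (wdel Φ k ℂ) := (map_walt _ _).symm
    rw [mul_mul_mul_comm, ← map_mul C, key2, ← map_mul, key, coeff_C_mul]
    rfl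
  rw [h1, hker]
  have h2 : ∀ s : ι, ∀ m, hsy (fun r => y (s.1, r)) m = C (hsy (fun r => X (s.1, r)) m) :=
    fun s m => hsy_map _ _ _
  simp only [h2]
  have h3 : wdel Φ k (MvPolynomial ι ℂ) * C (wdel Φ k ℂ) * ((Nat.card (Wreath N n) : A) *
      PowerSeries.coeff n (∏ s : ι, PowerSeries.mk fun m =>
        C (hsy (fun r => X (s.1, r)) m) * x s ^ m)) =
      C ((Nat.card (Wreath N n) : MvPolynomial ι ℂ) * wdel Φ k ℂ) *
      (wdel Φ k (MvPolynomial ι ℂ) * PowerSeries.coeff n (∏ s : ι, PowerSeries.mk fun m =>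
        C (hsy (fun r => (X (s.1, r) : MvPolynomial ι ℂ)) m) * x s ^ m)) := by
    rw [map_mul, map_natCast]
    ring
  rw [h3, coeff_C_mul, coeff_wdel_mul n
    (fun s m => hsy (fun r => (X (s.1, r) : MvPolynomial ι ℂ)) m) _
    (coeff_coeff_prod n _) α hs, mul_assoc, ← map_natCast (C : ℂ →+* MvPolynomial ι ℂ),
    coeff_C_mul]
  have h4 : wdel Φ k ℂ * ∏ φ, (Matrix.of fun i j : Fin k => if (j : ℕ) ≤ α φ i then
      hsy (fun r => (X (φ, r) : MvPolynomial ι ℂ)) (α φ i - j) else 0).det = walt ℂ α := by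
    rw [mul_comm, wdel, walt, walt, ← Finset.prod_mul_distrib]
    exact Finset.prod_congr rfl fun φ _ => jacobi_trudi _ _
  rw [h4, coeff_walt ℂ α β hα hβ]
  split_ifs <;> simp

end Ortho

/-! ### Part 7: degrees -/

section Degree

open MvPolynomial

lemma det_fact {k : ℕ} (a : Fin k → ℕ) (d : ℂ) (hd : d ≠ 0) :
    (Matrix.of fun i j : Fin k => if (j : ℕ) ≤ a i then d ^ (a i - j) / ((a i - j).factorial : ℂ)
      else 0).det * (d ^ (∑ i : Fin k, (i : ℕ)) * ∏ i, ((a i).factorial : ℂ)) =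
    d ^ (∑ i, a i) * ∏ i, ∏ j ∈ Finset.Ioi i, ((a j : ℂ) - a i) := by
  rw [← Matrix.det_vandermonde (fun i => (a i : ℂ)),
    Matrix.det_eval_matrixOfPolynomials_eq_det_vandermonde (fun i => (a i : ℂ))
      (fun i => descPochhammer ℂ i) (fun i => descPochhammer_natDegree ℂ i)
      (fun i => monic_descPochhammer ℂ i)]
  rw [← Finset.prod_pow_eq_pow_sum, ← Finset.prod_pow_eq_pow_sum, ← Matrix.det_mul_column, mul_comm,
    mul_comm (∏ i : Fin k, d ^ (i : ℕ)), mul_assoc, ← Matrix.det_mul_row, ← Matrix.det_mul_column]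
  congr 1
  ext i j
  simp only [Matrix.of_apply, descPochhammer_eval_eq_descFactorial]
  split_ifs with h
  · have h1 : ((a i).factorial : ℂ) = (a i - j).factorial * (a i).descFactorial j := by
      rw [← Nat.factorial_mul_descFactorial h]; push_cast; rfl
    have h2 : d ^ a i = d ^ (j : ℕ) * d ^ (a i - j) := by
      rw [← pow_add, Nat.add_sub_cancel' h]
    have h3 : ((a i - j).factorial : ℂ) ≠ 0 := by
      exact_mod_cast Nat.factorial_ne_zero _
    rw [h1, h2]
    field_simp
  · rw [Nat.descFactorial_of_lt (not_le.1 h)]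
    simp

variable {Φ : Type} [Fintype Φ] [DecidableEq Φ] {k : ℕ}
variable {N : Type} [Group N] [Fintype N] [DecidableEq N] {U : Type} [Fintype U]
  [DecidableEq U]

lemma wrP_one (D : WData N Φ U) (n : ℕ) :
    wrP (wRB D k) (wbl D k) n 1 = (∑ s : Φ × Fin k, (D.d s.1 : ℂ) • X s) ^ n := by
  have h1 : (∑ s : Φ × Fin k, (D.d s.1 : ℂ) • (X s : MvPolynomial (Φ × Fin k) ℂ)) =
      ∑ b, X (wbl D k b) := by
    rw [← Finset.sum_fiberwise (s := Finset.univ) (g := wbl D k)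
      (f := fun b => (X (wbl D k b) : MvPolynomial (Φ × Fin k) ℂ))]
    refine Finset.sum_congr rfl fun s _ => ?_
    rw [Finset.sum_congr rfl (g := fun _ => X s) (by
      intro b hb; rw [(Finset.mem_filter.1 hb).2]), Finset.sum_const, Nat.cast_smul_eq_nsmul]
    congr 1
    rw [← D.hfib s.1]
    refine Finset.card_bij (fun u _ => (u, s.2)) ?_ ?_ ?_
    · intro u hu
      exact Finset.mem_filter.2 ⟨Finset.mem_univ _, Prod.ext (Finset.mem_filter.1 hu).2 rfl⟩
    · intro u _ v _ h
      exact (Prod.mk.inj h).1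
    · rintro ⟨u, i⟩ hb
      have hb2 := (Finset.mem_filter.1 hb).2
      refine ⟨u, Finset.mem_filter.2 ⟨Finset.mem_univ _, congrArg Prod.fst hb2⟩, ?_⟩
      exact Prod.ext rfl (congrArg Prod.snd hb2).symm
  rw [h1, ← Fin.prod_const, Finset.prod_univ_sum, Fintype.piFinset_univ, wrP]
  simp

lemma coeff_wrP_one (D : WData N Φ U) (n : ℕ) (γ : Φ × Fin k →₀ ℕ) :
    coeff γ (wrP (wRB D k) (wbl D k) n 1) = (n.factorial : ℂ) *
      if ∑ s, γ s = n then ∏ s, (D.d s.1 : ℂ) ^ γ s / ((γ s).factorial : ℂ) else 0 := by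
  rw [wrP_one, coeff_linearCombination_X_pow_of_fintype, Finsupp.sum_fintype _ _ (by simp),
    Finsupp.prod_fintype _ _ (by simp)]
  split_ifs with h
  · have h1 : ((∏ s, (γ s).factorial : ℕ) : ℂ) * (γ.multinomial : ℂ) = n.factorial := by
      have h2 := Nat.multinomial_spec γ.support γ
      rw [← Finsupp.multinomial_eq] at h2
      rw [Finset.prod_subset (Finset.subset_univ γ.support) (by
        intro x _ hx; simp [Finsupp.notMem_support_iff.1 hx]),
        Finset.sum_subset (Finset.subset_univ γ.support) (by
        intro x _ hx; simp [Finsupp.notMem_support_iff.1 hx]), h] at h2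
      exact_mod_cast h2
    have h3 : ((∏ s, (γ s).factorial : ℕ) : ℂ) ≠ 0 := by
      exact_mod_cast Finset.prod_ne_zero_iff.2 fun s _ => Nat.factorial_ne_zero _
    rw [Finset.prod_div_distrib, ← h1]
    push_cast at h3 ⊢
    field_simp
  · simp

lemma wF_one (D : WData N Φ U) (n : ℕ) (α : Φ → Fin k → ℕ)
    (hα : ∑ φ, ∑ i, α φ i = n + Fintype.card Φ * ∑ i : Fin k, (i : ℕ)) :
    wF D n α 1 * ∏ φ, ((D.d φ : ℂ) ^ (∑ i : Fin k, (i : ℕ)) * ∏ i, ((α φ i).factorial : ℂ)) =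
    n.factorial * ∏ φ, ((D.d φ : ℂ) ^ (∑ i, α φ i) *
      ∏ i, ∏ j ∈ Finset.Ioi i, ((α φ j : ℂ) - α φ i)) := by
  let P : MvPolynomial (Φ × Fin k) ℂ := C ((n.factorial : ℂ)⁻¹) * wrP (wRB D k) (wbl D k) n 1
  have hn : (n.factorial : ℂ) ≠ 0 := by exact_mod_cast Nat.factorial_ne_zero _
  have hP : ∀ γ, coeff γ P = if ∑ s, γ s = n then
      ∏ s, (fun (s : Φ × Fin k) (m : ℕ) => (D.d s.1 : ℂ) ^ m / (m.factorial : ℂ)) s (γ s)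
      else 0 := by
    intro γ
    simp only [P]
    rw [coeff_C_mul, coeff_wrP_one, inv_mul_cancel_left₀ hn]
  have h1 := coeff_wdel_mul n
    (fun (s : Φ × Fin k) (m : ℕ) => (D.d s.1 : ℂ) ^ m / (m.factorial : ℂ)) P hP α hα
  have h2 : wF D n α 1 = n.factorial * coeff (toF α) (wdel Φ k ℂ * P) := by
    simp only [P, wF]
    rw [mul_left_comm, coeff_C_mul, mul_inv_cancel_left₀ hn]
  rw [h2, h1, mul_assoc, ← Finset.prod_mul_distrib]
  congr 1
  refine Finset.prod_congr rfl fun φ _ => ?_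
  exact det_fact (α φ) (D.d φ) (by exact_mod_cast (D.hd φ).ne')

end Degree

/-! ### Part 8: completeness -/

section Complete

open MvPolynomial

variable {Φ : Type} [Fintype Φ] [DecidableEq Φ] {k : ℕ}
variable {N : Type} [Group N] [Fintype N] [DecidableEq N] {U : Type} [Fintype U]
  [DecidableEq U]

/-- row permutations of the variables -/
def rowE (τ : Φ → Equiv.Perm (Fin k)) : Equiv.Perm (Φ × Fin k) where
  toFun s := (s.1, τ s.1 s.2)
  invFun s := (s.1, (τ s.1).symm s.2)
  left_inv s := by simp
  right_inv s := by simp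

lemma rename_wdel (τ : Φ → Equiv.Perm (Fin k)) :
    rename (rowE τ) (wdel Φ k ℂ) = (∏ φ, ((Equiv.Perm.sign (τ φ) : ℤ) : ℂ)) • wdel Φ k ℂ := by
  rw [wdel, walt, map_prod, smul_eq_C_mul, map_prod, ← Finset.prod_mul_distrib]
  refine Finset.prod_congr rfl fun φ _ => ?_
  have := Matrix.det_permute' (τ φ) (Matrix.of fun i r : Fin k =>
    (X (φ, r) : MvPolynomial (Φ × Fin k) ℂ) ^ (i : ℕ))
  rw [map_intCast (C : ℂ →+* MvPolynomial (Φ × Fin k) ℂ), ← this, AlgHom.map_det]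
  congr 1
  ext i r
  simp [rowE]

lemma rename_wrP (D : WData N Φ U) (n : ℕ) (τ : Φ → Equiv.Perm (Fin k)) (g : Wreath N n) :
    rename (rowE τ) (wrP (wRB D k) (wbl D k) n g) = wrP (wRB D k) (wbl D k) n g := by
  let e : Equiv.Perm (U × Fin k) :=
    { toFun := fun b => (b.1, τ (D.p b.1) b.2)
      invFun := fun b => (b.1, (τ (D.p b.1)).symm b.2)
      left_inv := fun b => by simp
      right_inv := fun b => by simp }
  have he : ∀ b, wbl D k (e b) = rowE τ (wbl D k b) := fun b => rfl
  have heR : ∀ t b b', wRB D k t (e b) (e b') = wRB D k t b b' := by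
    intro t b b'
    rw [wRB_apply, wRB_apply]
    by_cases hp : D.p b.1 = D.p b'.1
    · simp [e, hp]
    · have := D.hblock t b.1 b'.1 hp
      simp [e, this]
  rw [wrP, map_sum]
  conv_rhs => rw [← (Equiv.piCongrRight fun _ : Fin n => e).sum_comp]
  refine Finset.sum_congr rfl fun b _ => ?_
  rw [map_mul, map_prod, rename_C]
  simp only [rename_X, Equiv.piCongrRight_apply, Pi.map_apply, he, wrRep_apply, heR]

lemma coeff_row (S : MvPolynomial (Φ × Fin k) ℂ) (τ : Φ → Equiv.Perm (Fin k)) (c : ℂ)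
    (hS : rename (rowE τ) S = c • S) (α : Φ → Fin k → ℕ) :
    coeff (toF fun φ i => α φ (τ φ i)) S = c * coeff (toF α) S := by
  have h := coeff_rename_mapDomain (rowE τ) (rowE τ).injective S (toF fun φ i => α φ (τ φ i))
  have h2 : (toF fun φ i => α φ (τ φ i)).mapDomain (rowE τ) = toF fun φ i => α φ i := by
    ext s
    obtain ⟨s, rfl⟩ := (rowE τ).surjective s
    rw [Finsupp.mapDomain_apply (rowE τ).injective]
    rfl
  rw [h2, hS, coeff_smul, smul_eq_mul] at h
  exact h.symm

lemma wdel_homog : (wdel Φ k ℂ).IsHomogeneous (Fintype.card Φ * ∑ i : Fin k, (i : ℕ)) := by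
  rw [wdel, walt_expand]
  refine IsHomogeneous.sum _ _ _ fun w _ => isHomogeneous_monomial _ ?_
  rw [Finsupp.degree_eq_sum, Fintype.sum_prod_type]
  simp only [toF_apply]
  rw [Finset.sum_congr rfl fun φ _ => Equiv.sum_comp (w φ) (fun i : Fin k => (i : ℕ))]
  simp

lemma wrP_homog (D : WData N Φ U) (n : ℕ) (g : Wreath N n) :
    (wrP (wRB D k) (wbl D k) n g).IsHomogeneous n := by
  refine IsHomogeneous.sum _ _ _ fun b _ => ?_
  rw [mul_comm]
  refine IsHomogeneous.C_mul ?_ _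
  have := IsHomogeneous.prod Finset.univ (fun j => (X (wbl D k (b j)) : MvPolynomial (Φ × Fin k) ℂ))
    (fun _ => 1) (fun j _ => isHomogeneous_X _ _)
  simpa using this

lemma wdel_ne_zero : wdel Φ k ℂ ≠ 0 := by
  intro h
  have := coeff_walt ℂ (fun (_ : Φ) (i : Fin k) => (i : ℕ)) (fun _ i => (i : ℕ))
    (fun _ => Fin.val_strictMono) (fun _ => Fin.val_strictMono)
  rw [← wdel, h] at this
  simp at this

/-- The generating polynomial of a class function. -/
noncomputable def wQ (D : WData N Φ U) (k n : ℕ) (ψ : Wreath N n → ℂ) :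
    MvPolynomial (Φ × Fin k) ℂ :=
  ∑ g, ψ g⁻¹ • wrP (wRB D k) (wbl D k) n g

lemma wQ_eq_zero (D : WData N Φ U) (n : ℕ) (ψ : Wreath N n → ℂ)
    (h : ∀ α : Φ → Fin k → ℕ, (∀ φ, StrictMono (α φ)) →
      ∑ φ, ∑ i, α φ i = n + Fintype.card Φ * ∑ i : Fin k, (i : ℕ) → ipG (wF D n α) ψ = 0) :
    wQ D k n ψ = 0 := by
  have hco : ∀ α : Φ → Fin k → ℕ, coeff (toF α) (wdel Φ k ℂ * wQ D k n ψ) = ipG (wF D n α) ψ := by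
    intro α
    rw [wQ, Finset.mul_sum, coeff_sum, ipG]
    refine Finset.sum_congr rfl fun g _ => ?_
    rw [mul_smul_comm, coeff_smul, smul_eq_mul, mul_comm]
    rfl
  have hhom : (wdel Φ k ℂ * wQ D k n ψ).IsHomogeneous
      (Fintype.card Φ * (∑ i : Fin k, (i : ℕ)) + n) := by
    refine wdel_homog.mul (IsHomogeneous.sum _ _ _ fun g _ => ?_)
    rw [smul_eq_C_mul]
    exact (wrP_homog D n g).C_mul _
  have hQr : ∀ τ : Φ → Equiv.Perm (Fin k), rename (rowE τ) (wQ D k n ψ) = wQ D k n ψ := by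
    intro τ
    simp only [wQ, map_sum, map_smul, rename_wrP]
  have hrow : ∀ (τ : Φ → Equiv.Perm (Fin k)) (α : Φ → Fin k → ℕ),
      coeff (toF fun φ i => α φ (τ φ i)) (wdel Φ k ℂ * wQ D k n ψ) =
      (∏ φ, ((Equiv.Perm.sign (τ φ) : ℤ) : ℂ)) *
        coeff (toF α) (wdel Φ k ℂ * wQ D k n ψ) := by
    intro τ α
    apply coeff_row
    rw [map_mul, rename_wdel, hQr, smul_mul_assoc]
  have hz : wdel Φ k ℂ * wQ D k n ψ = 0 := by
    ext γ
    rw [coeff_zero]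
    obtain ⟨α, rfl⟩ : ∃ α : Φ → Fin k → ℕ, γ = toF α := ⟨fun φ i => γ (φ, i), by ext s; rfl⟩
    by_cases hd : (toF α).degree = Fintype.card Φ * (∑ i : Fin k, (i : ℕ)) + n
    swap
    · exact hhom.coeff_eq_zero hd
    by_cases hinj : ∀ φ, Function.Injective (α φ)
    · have h0 := hrow (fun φ => Tuple.sort (α φ)) α
      rw [hco (fun φ i => α φ (Tuple.sort (α φ) i)), h] at h0
      · refine (mul_eq_zero.1 h0.symm).resolve_left (Finset.prod_ne_zero_iff.2 fun φ _ => ?_)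
        exact_mod_cast (Equiv.Perm.sign (Tuple.sort (α φ))).ne_zero
      · intro φ
        exact (Tuple.monotone_sort (α φ)).strictMono_of_injective
          ((hinj φ).comp (Tuple.sort (α φ)).injective)
      · rw [Finsupp.degree_eq_sum, Fintype.sum_prod_type] at hd
        simp only [toF_apply] at hd
        rw [add_comm, ← hd]
        exact Finset.sum_congr rfl fun φ _ => Equiv.sum_comp (Tuple.sort (α φ)) (α φ)
    · push Not at hinj
      obtain ⟨φ, hφ⟩ := hinj
      rw [Function.Injective] at hφ
      push Not at hφ
      obtain ⟨i, j, hij, hne⟩ := hφ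
      have h1 := hrow (Function.update 1 φ (Equiv.swap i j)) α
      have h2 : (fun φ' r => α φ' ((Function.update (1 : Φ → Equiv.Perm (Fin k)) φ
          (Equiv.swap i j)) φ' r)) = α := by
        ext φ' r
        by_cases hp : φ' = φ
        · subst hp
          rw [Function.update_self]
          by_cases hr : r = i
          · subst hr; simp [hij]
          · by_cases hr' : r = j
            · subst hr'; simp [hij]
            · rw [Equiv.swap_apply_of_ne_of_ne hr hr']
        · rw [Function.update_of_ne hp]; rfl
      rw [h2, Finset.prod_eq_single φ (by
        intro b _ hb; rw [Function.update_of_ne hb]; simp) (by simp), Function.update_self,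
        Equiv.Perm.sign_swap hne] at h1
      have h3 : coeff (toF α) (wdel Φ k ℂ * wQ D k n ψ) =
        -coeff (toF α) (wdel Φ k ℂ * wQ D k n ψ) := by simpa using h1
      exact self_eq_neg.1 h3
  exact (mul_eq_zero.1 hz).resolve_left wdel_ne_zero

lemma wQ_ne_zero (D : WData N Φ U) (n : ℕ) (ψ : Wreath N n → ℂ) (hψ : ψ 1 ≠ 0) :
    wQ D n n ψ ≠ 0 := by
  classical
  intro hQ
  let x : Φ × Fin n → MvPolynomial (Fin n) ℂ := fun s => C (D.d s.1 : ℂ) * X s.2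
  let o : Fin n →₀ ℕ := cnt (id : Fin n → Fin n)
  have hinj : ∀ i : Fin n → Fin n, cnt i = o → Function.Injective i := by
    intro i hi
    apply Finite.injective_iff_surjective.2
    intro r
    have h1 := DFunLike.congr_fun hi r
    simp only [o] at h1
    rw [cnt_apply, cnt_apply] at h1
    simp only [id, Fintype.card_unique] at h1
    obtain ⟨j, hj⟩ := (Fintype.card_pos_iff.1 (by omega : 0 < Fintype.card {j // i j = r}))
    exact ⟨j, hj⟩
  let M : ℂ := ∑ i : Fin n → Fin n, if cnt i = o then 1 else 0
  have hM : M ≠ 0 := by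
    simp only [M]
    rw [Finset.sum_boole]
    have : 0 < (Finset.univ.filter fun i : Fin n → Fin n => cnt i = o).card :=
      Finset.card_pos.2 ⟨id, by simp [o]⟩
    exact_mod_cast this.ne'
  have hco : ∀ g : Wreath N n, coeff o (aeval x (wrP (wRB D n) (wbl D n) n g)) =
      if g = 1 then M * (Nat.card N : ℂ) ^ n else 0 := by
    intro g
    have h1 : coeff o (aeval x (wrP (wRB D n) (wbl D n) n g)) =
        ∑ i : Fin n → Fin n, (if cnt i = o then 1 else 0) * ∑ u : Fin n → U,
          ∏ j, ((D.d (D.p (u j)) : ℂ) * if i j = i (g.right⁻¹ j) then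
            D.R (g.left j) (u j) (u (g.right⁻¹ j)) else 0) := by
      rw [wrP, map_sum, coeff_sum, ← (Equiv.arrowProdEquivProdArrow _ _ _).symm.sum_comp,
        Fintype.sum_prod_type, Finset.sum_comm]
      refine Finset.sum_congr rfl fun i _ => ?_
      rw [Finset.mul_sum]
      refine Finset.sum_congr rfl fun u _ => ?_
      rw [map_mul, map_prod]
      simp only [aeval_X, x, wbl]
      rw [Finset.prod_mul_distrib, ← map_prod]
      simp only [Equiv.arrowProdEquivProdArrow_symm_apply]
      rw [prod_X_cnt, algHom_C, algebraMap_eq, mul_comm, C_mul_monomial, C_mul_monomial,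
        coeff_monomial, wrRep_apply, Finset.prod_mul_distrib]
      simp only [wRB_apply]
      split_ifs
      · simp [mul_comm]
      · simp
    rw [h1]
    split_ifs with hg
    · subst hg
      simp only [M, Finset.sum_mul]
      refine Finset.sum_congr rfl fun i _ => ?_
      congr 1
      simp only [SemidirectProduct.one_right, inv_one, Equiv.Perm.coe_one, id, if_true,
        SemidirectProduct.one_left, Pi.one_apply]
      have h2 := Finset.prod_univ_sum (fun _ : Fin n => (Finset.univ : Finset U))
        (fun _ u => (D.d (D.p u) : ℂ) * D.R 1 u u)
      rw [Fintype.piFinset_univ] at h2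
      rw [← h2]
      simp only [D.hreg, if_true]
      simp
    · refine Finset.sum_eq_zero fun i _ => ?_
      by_cases hi : cnt i = o
      swap
      · rw [if_neg hi, zero_mul]
      rw [if_pos hi, one_mul]
      by_cases hσ : g.right = 1
      · simp only [hσ, inv_one, Equiv.Perm.coe_one, id, if_true]
        have h2 := Finset.prod_univ_sum (fun _ : Fin n => (Finset.univ : Finset U))
          (fun j u => (D.d (D.p u) : ℂ) * D.R (g.left j) u u)
        rw [Fintype.piFinset_univ] at h2
        rw [← h2]
        simp only [D.hreg]
        have : ∃ j, g.left j ≠ 1 := by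
          by_contra! hc
          apply hg
          ext j
          · exact hc j
          · simp [hσ]
        obtain ⟨j, hj⟩ := this
        exact Finset.prod_eq_zero (Finset.mem_univ j) (if_neg hj)
      · have : ∃ j, g.right⁻¹ j ≠ j := by
          by_contra! hc
          apply hσ
          rw [← inv_inj, inv_one]
          ext j
          simp [hc]
        obtain ⟨j, hj⟩ := this
        refine Finset.sum_eq_zero fun u _ => Finset.prod_eq_zero (Finset.mem_univ j) ?_
        rw [if_neg, mul_zero]
        intro hc
        exact hj (hinj i hi hc).symm
  have h := congrArg (fun P => coeff o (aeval x P)) hQ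
  simp only [wQ, map_sum, map_smul, map_zero, coeff_sum, coeff_smul, hco, coeff_zero] at h
  rw [Finset.sum_eq_single 1 (by intro b _ hb; rw [if_neg hb, smul_zero]) (by simp), if_pos rfl,
    inv_one, smul_eq_mul] at h
  have hN : (Nat.card N : ℂ) ≠ 0 := by exact_mod_cast Nat.card_pos.ne'
  exact mul_ne_zero hψ (mul_ne_zero hM (pow_ne_zero _ hN)) h

lemma wF_complete (D : WData N Φ U) (n : ℕ) (ψ : Wreath N n → ℂ) (hψ : ψ 1 ≠ 0) :
    ∃ α : Φ → Fin n → ℕ, (∀ φ, StrictMono (α φ)) ∧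
      ∑ φ, ∑ i, α φ i = n + Fintype.card Φ * ∑ i : Fin n, (i : ℕ) ∧ ipG (wF D n α) ψ ≠ 0 := by
  by_contra! hc
  exact wQ_ne_zero D n ψ hψ (wQ_eq_zero D n ψ hc)

end Complete

/-! ### Part 9: Young diagrams -/

section Young

/-- beta numbers -/
def yb (k : ℕ) (Y : YoungDiagram) (i : Fin k) : ℕ := Y.rowLen (k - 1 - i) + i

lemma yb_strictMono (k : ℕ) (Y : YoungDiagram) : StrictMono (yb k Y) := by
  intro i j h
  have h' : (i : ℕ) < j := h
  have := Y.rowLen_anti (k - 1 - j) (k - 1 - i) (by omega)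
  simp only [yb]
  omega

lemma lt_rowLen_iff (Y : YoungDiagram) (i j : ℕ) : j < Y.rowLen i ↔ i < Y.colLen j := by
  rw [← YoungDiagram.mem_iff_lt_rowLen, ← YoungDiagram.mem_iff_lt_colLen]

lemma rowLen_zero_of_card (k : ℕ) (Y : YoungDiagram) (h : Y.card ≤ k) (i : ℕ) (hi : k ≤ i) :
    Y.rowLen i = 0 := by
  by_contra hne
  have h0 : i < Y.colLen 0 := (lt_rowLen_iff Y i 0).1 (Nat.pos_of_ne_zero hne)
  have h1 : Y.colLen 0 ≤ Y.card := by
    rw [YoungDiagram.colLen_eq_card]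
    exact Finset.card_le_card (Finset.filter_subset _ _)
  omega

lemma prod_cells {M : Type} [CommMonoid M] (k : ℕ) (Y : YoungDiagram) (h : ∀ i, k ≤ i → Y.rowLen i = 0)
    (f : ℕ → ℕ → M) :
    ∏ c ∈ Y.cells, f c.1 c.2 = ∏ i : Fin k, ∏ j ∈ Finset.range (Y.rowLen (k - 1 - i)),
      f (k - 1 - i) j := by
  have h1 : ∏ i : Fin k, ∏ j ∈ Finset.range (Y.rowLen (k - 1 - i)), f (k - 1 - i) j =
      ∏ i ∈ Finset.range k, ∏ j ∈ Finset.range (Y.rowLen i), f i j := by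
    rw [Fin.prod_univ_eq_prod_range
      (fun i => ∏ j ∈ Finset.range (Y.rowLen (k - 1 - i)), f (k - 1 - i) j) k]
    exact Finset.prod_range_reflect (fun i => ∏ j ∈ Finset.range (Y.rowLen i), f i j) k
  rw [h1, Finset.prod_sigma']
  refine Finset.prod_bij' (fun c _ => ⟨c.1, c.2⟩) (fun s _ => (s.1, s.2)) ?_ ?_ ?_ ?_ ?_
  · rintro ⟨i, j⟩ hc
    have hc' := (YoungDiagram.mem_iff_lt_rowLen).1 ((YoungDiagram.mem_cells _).1 hc)
    simp only [Finset.mem_sigma, Finset.mem_range]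
    refine ⟨?_, hc'⟩
    by_contra hk
    rw [h i (not_lt.1 hk)] at hc'
    omega
  · rintro ⟨i, j⟩ hc
    simp only [Finset.mem_sigma, Finset.mem_range] at hc
    exact (YoungDiagram.mem_cells _).2 ((YoungDiagram.mem_iff_lt_rowLen).2 hc.2)
  · intros; rfl
  · intros; rfl
  · intros; rfl

lemma sum_yb (k : ℕ) (Y : YoungDiagram) (h : ∀ i, k ≤ i → Y.rowLen i = 0) :
    ∑ i, yb k Y i = Y.card + ∑ i : Fin k, (i : ℕ) := by
  have h1 := prod_cells (M := Multiplicative ℕ) k Y h (fun _ _ => Multiplicative.ofAdd 1)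
  have h2 : Y.card = ∑ i : Fin k, Y.rowLen (k - 1 - i) := by
    have := congrArg Multiplicative.toAdd h1
    simpa using this
  simp only [yb]
  rw [Finset.sum_add_distrib, h2]

lemma row_hooks (k : ℕ) (Y : YoungDiagram) (h : ∀ i, k ≤ i → Y.rowLen i = 0) (i : Fin k) :
    (Finset.range (Y.rowLen (k - 1 - i))).image (hookLength Y (k - 1 - i)) ∪
      (Finset.Iio i).image (fun i' => yb k Y i - yb k Y i') = Finset.Icc 1 (yb k Y i) ∧
    Disjoint ((Finset.range (Y.rowLen (k - 1 - i))).image (hookLength Y (k - 1 - i)))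
      ((Finset.Iio i).image (fun i' => yb k Y i - yb k Y i')) ∧
    Set.InjOn (hookLength Y (k - 1 - i)) (Finset.range (Y.rowLen (k - 1 - i))) ∧
    Set.InjOn (fun i' => yb k Y i - yb k Y i') (Finset.Iio i) := by
  have hik := i.2
  have hcol : ∀ j, Y.colLen j ≤ k := by
    intro j
    by_contra hc
    have := (lt_rowLen_iff Y k j).2 (not_le.1 hc)
    rw [h k le_rfl] at this
    omega
  have hI1 : Set.InjOn (hookLength Y (k - 1 - i)) (Finset.range (Y.rowLen (k - 1 - i))) := by
    intro a ha b hb hab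
    rw [Finset.mem_coe, Finset.mem_range] at ha hb
    have ha2 := (lt_rowLen_iff _ _ _).1 ha
    have hb2 := (lt_rowLen_iff _ _ _).1 hb
    simp only [hookLength] at hab
    rcases lt_trichotomy a b with hlt | heq | hlt
    · have := Y.colLen_anti a b hlt.le
      omega
    · exact heq
    · have := Y.colLen_anti b a hlt.le
      omega
  have hI2 : Set.InjOn (fun i' => yb k Y i - yb k Y i') (Finset.Iio i) := by
    intro a ha b hb hab
    rw [Finset.mem_coe, Finset.mem_Iio] at ha hb
    have h1 := yb_strictMono k Y ha
    have h2 := yb_strictMono k Y hb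
    simp only at hab
    apply (yb_strictMono k Y).injective
    omega
  have hD : Disjoint ((Finset.range (Y.rowLen (k - 1 - i))).image (hookLength Y (k - 1 - i)))
      ((Finset.Iio i).image (fun i' => yb k Y i - yb k Y i')) := by
    rw [Finset.disjoint_left]
    intro x hx hx'
    obtain ⟨j, hj, rfl⟩ := Finset.mem_image.1 hx
    obtain ⟨i', hi', he⟩ := Finset.mem_image.1 hx'
    rw [Finset.mem_range] at hj
    rw [Finset.mem_Iio] at hi'
    have h1 := yb_strictMono k Y hi'
    have hj2 := (lt_rowLen_iff _ _ _).1 hj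
    have h3 : (i' : ℕ) < i := hi'
    simp only [hookLength, yb] at he h1
    by_cases hc : j < Y.rowLen (k - 1 - i')
    · have := (lt_rowLen_iff _ _ _).1 hc
      omega
    · have := mt (lt_rowLen_iff _ _ _).2 hc
      omega
  refine ⟨?_, hD, hI1, hI2⟩
  apply Finset.eq_of_subset_of_card_le
  · intro x hx
    rw [Finset.mem_Icc]
    rcases Finset.mem_union.1 hx with hx | hx
    · obtain ⟨j, hj, rfl⟩ := Finset.mem_image.1 hx
      rw [Finset.mem_range] at hj
      have hj2 := (lt_rowLen_iff _ _ _).1 hj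
      have := hcol j
      simp only [hookLength, yb]
      omega
    · obtain ⟨i', hi', rfl⟩ := Finset.mem_image.1 hx
      rw [Finset.mem_Iio] at hi'
      have h1 := yb_strictMono k Y hi'
      omega
  · rw [Finset.card_union_of_disjoint hD, Finset.card_image_of_injOn hI1,
      Finset.card_image_of_injOn hI2]
    simp [yb]

lemma fact_Icc (m : ℕ) : m.factorial = ∏ x ∈ Finset.Icc 1 m, x := by
  induction m with
  | zero => simp
  | succ m ih => rw [Nat.factorial_succ, Finset.prod_Icc_succ_top (by omega), ← ih, mul_comm]

lemma row_prod (k : ℕ) (Y : YoungDiagram) (h : ∀ i, k ≤ i → Y.rowLen i = 0) (i : Fin k) :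
    (yb k Y i).factorial = (∏ j ∈ Finset.range (Y.rowLen (k - 1 - i)), hookLength Y (k - 1 - i) j) *
      ∏ i' ∈ Finset.Iio i, (yb k Y i - yb k Y i') := by
  obtain ⟨h1, h2, h3, h4⟩ := row_hooks k Y h i
  rw [fact_Icc, ← h1, Finset.prod_union h2, Finset.prod_image h3,
    Finset.prod_image h4]

/-- product of hook lengths -/
def hprod (Y : YoungDiagram) : ℕ := ∏ c ∈ Y.cells, hookLength Y c.1 c.2

lemma hprod_pos (Y : YoungDiagram) : 0 < hprod Y := by
  refine Finset.prod_pos fun c hc => ?_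
  have h1 := (YoungDiagram.mem_iff_lt_rowLen).1 ((YoungDiagram.mem_cells _).1 hc)
  have h2 := (lt_rowLen_iff _ _ _).1 h1
  simp only [hookLength]
  omega

lemma prod_fact (k : ℕ) (Y : YoungDiagram) (h : ∀ i, k ≤ i → Y.rowLen i = 0) :
    ∏ i, ((yb k Y i).factorial : ℂ) = hprod Y *
      ∏ i, ∏ j ∈ Finset.Ioi i, ((yb k Y j : ℂ) - yb k Y i) := by
  have h1 : ∏ i, ∏ j ∈ Finset.Ioi i, ((yb k Y j : ℂ) - yb k Y i) =
      ∏ j, ∏ i ∈ Finset.Iio j, ((yb k Y j : ℂ) - yb k Y i) :=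
    Finset.prod_comm' (by simp)
  rw [h1, hprod, prod_cells k Y h (fun i j => hookLength Y i j)]
  push_cast
  rw [← Finset.prod_mul_distrib]
  refine Finset.prod_congr rfl fun i _ => ?_
  rw [row_prod k Y h i]
  push_cast
  congr 1
  refine Finset.prod_congr rfl fun i' hi' => ?_
  rw [Nat.cast_sub (yb_strictMono k Y (Finset.mem_Iio.1 hi')).le]

lemma prod_diff_ne_zero (k : ℕ) (Y : YoungDiagram) :
    ∏ i, ∏ j ∈ Finset.Ioi i, ((yb k Y j : ℂ) - yb k Y i) ≠ 0 := by
  refine Finset.prod_ne_zero_iff.2 fun i _ => Finset.prod_ne_zero_iff.2 fun j hj => ?_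
  rw [sub_ne_zero]
  exact_mod_cast (yb_strictMono k Y (Finset.mem_Ioi.1 hj)).ne'

lemma core_aux (k ℓ : ℕ) (hℓ : 0 < ℓ) (Y : YoungDiagram) (h : ∀ i, k ≤ i → Y.rowLen i = 0)
    (hc : IsLCore ℓ Y) (m : ℕ) : ∀ (i : Fin k) (j : ℕ), j < Y.rowLen (k - 1 - i) →
      hookLength Y (k - 1 - i) j = (m + 1) * ℓ → False := by
  have hcore : ∀ (i : Fin k) (j : ℕ), j < Y.rowLen (k - 1 - i) →
      hookLength Y (k - 1 - i) j ≠ ℓ := fun i j hj =>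
    hc (k - 1 - i, j) ((YoungDiagram.mem_cells _).2 ((YoungDiagram.mem_iff_lt_rowLen).2 hj))
  induction m with
  | zero =>
    intro i j hj he
    exact hcore i j hj (by omega)
  | succ m ih =>
    intro i j hj he
    obtain ⟨h1, h2, h3, h4⟩ := row_hooks k Y h i
    have hm : hookLength Y (k - 1 - i) j ∈
      (Finset.range (Y.rowLen (k - 1 - i))).image (hookLength Y (k - 1 - i)) :=
      Finset.mem_image_of_mem _ (Finset.mem_range.2 hj)
    have hle : hookLength Y (k - 1 - i) j ∈ Finset.Icc 1 (yb k Y i) := by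
      rw [← h1]; exact Finset.mem_union_left _ hm
    rw [he, Finset.mem_Icc] at hle
    have hexp : (m + 1 + 1) * ℓ = (m + 1) * ℓ + ℓ := by ring
    have hp : 0 < (m + 1) * ℓ := by positivity
    have hl : ℓ ∈ Finset.Icc 1 (yb k Y i) := by
      rw [Finset.mem_Icc]; omega
    rw [← h1] at hl
    rcases Finset.mem_union.1 hl with hl | hl
    · obtain ⟨j', hj', he'⟩ := Finset.mem_image.1 hl
      exact hcore i j' (Finset.mem_range.1 hj') he'
    · obtain ⟨i', hi', he'⟩ := Finset.mem_image.1 hl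
      rw [Finset.mem_Iio] at hi'
      have hlt := yb_strictMono k Y hi'
      obtain ⟨g1, g2, g3, g4⟩ := row_hooks k Y h i'
      have hx : (m + 1) * ℓ ∈ Finset.Icc 1 (yb k Y i') := by
        rw [Finset.mem_Icc]; omega
      rw [← g1] at hx
      rcases Finset.mem_union.1 hx with hx | hx
      · obtain ⟨j', hj', he''⟩ := Finset.mem_image.1 hx
        exact ih i' j' (Finset.mem_range.1 hj') he''
      · obtain ⟨i'', hi'', he''⟩ := Finset.mem_image.1 hx
        rw [Finset.mem_Iio] at hi''
        have hlt2 := yb_strictMono k Y hi''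
        refine Finset.disjoint_left.1 h2 hm (Finset.mem_image.2 ⟨i'', ?_, ?_⟩)
        · exact Finset.mem_Iio.2 (hi''.trans hi')
        · omega

lemma isLCore_iff (ℓ : ℕ) (hℓ : ℓ.Prime) (Y : YoungDiagram) : IsLCore ℓ Y ↔ ¬ ℓ ∣ hprod Y := by
  have h := rowLen_zero_of_card Y.card Y le_rfl
  rw [hprod, hℓ.prime.dvd_finsetProd_iff]
  constructor
  · rintro hc ⟨⟨i, j⟩, hij, hdvd⟩
    have h1 := (YoungDiagram.mem_iff_lt_rowLen).1 ((YoungDiagram.mem_cells _).1 hij)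
    have h2 := (lt_rowLen_iff _ _ _).1 h1
    have hi : i < Y.card := by
      by_contra hk
      rw [h i (not_lt.1 hk)] at h1
      omega
    obtain ⟨m, hm⟩ := hdvd
    have hpos : 0 < hookLength Y i j := by
      simp only [hookLength]
      omega
    obtain ⟨m, rfl⟩ : ∃ m', m = m' + 1 := by
      refine ⟨m - 1, ?_⟩
      have : m ≠ 0 := by
        rintro rfl
        simp only [mul_zero] at hm
        omega
      omega
    have e : Y.card - 1 - (Y.card - 1 - i) = i := by omega
    refine core_aux Y.card ℓ hℓ.pos Y h hc m ⟨Y.card - 1 - i, by omega⟩ j ?_ ?_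
    · simp only [e]
      exact h1
    · simp only [e]
      rw [mul_comm]
      exact hm
  · intro hn c hc he
    exact hn ⟨c, hc, by rw [he]⟩

lemma yb_injective (k : ℕ) (Y Y' : YoungDiagram) (h : ∀ i, k ≤ i → Y.rowLen i = 0)
    (h' : ∀ i, k ≤ i → Y'.rowLen i = 0) (he : yb k Y = yb k Y') : Y = Y' := by
  have h1 : ∀ i, Y.rowLen i = Y'.rowLen i := by
    intro i
    by_cases hi : i < k
    · have := congrFun he ⟨k - 1 - i, by omega⟩
      simp only [yb] at this
      have e : k - 1 - (k - 1 - i) = i := by omega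
      rw [e] at this
      omega
    · rw [h i (not_lt.1 hi), h' i (not_lt.1 hi)]
  ext ⟨i, j⟩
  rw [YoungDiagram.mem_cells, YoungDiagram.mem_cells, YoungDiagram.mem_iff_lt_rowLen,
    YoungDiagram.mem_iff_lt_rowLen, h1]

lemma yb_surjective (k : ℕ) (β : Fin k → ℕ) (hβ : StrictMono β) :
    ∃ Y : YoungDiagram, (∀ i, k ≤ i → Y.rowLen i = 0) ∧ yb k Y = β := by
  let r : ℕ → ℕ := fun i => if hi : i < k then β ⟨k - 1 - i, by omega⟩ - (k - 1 - i) else 0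
  have hstep : ∀ i j : Fin k, i ≤ j → β i + (j - i : ℕ) ≤ β j := by
    intro i j hij
    have hij' : (i : ℕ) ≤ j := hij
    obtain ⟨t, ht⟩ := Nat.exists_eq_add_of_le hij'
    induction t generalizing j with
    | zero =>
      have : i = j := Fin.ext (by omega)
      subst this; simp
    | succ t ih =>
      have hj := j.2
      have := ih ⟨j - 1, by omega⟩ (by rw [Fin.le_def]; simp only; omega) (by simp only; omega)
        (by simp only; omega)
      have h2 := hβ (show (⟨j - 1, by omega⟩ : Fin k) < j by rw [Fin.lt_def]; simp only; omega)
      simp only at this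
      omega
  have hge : ∀ j : Fin k, (j : ℕ) ≤ β j := by
    intro j
    have hj := j.2
    have := hstep ⟨0, by omega⟩ j (by rw [Fin.le_def]; simp)
    simp only at this
    omega
  have hr : ∀ i j, i ≤ j → r j ≤ r i := by
    intro i j hij
    simp only [r]
    split_ifs with h1 h2
    · have := hstep ⟨k - 1 - j, by omega⟩ ⟨k - 1 - i, by omega⟩ (by rw [Fin.le_def]; simp only; omega)
      simp only at this
      omega
    · omega
    · omega
    · omega
  let Y : YoungDiagram :=
    { cells := (Finset.range k).biUnion fun i => (Finset.range (r i)).image fun j => (i, j)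
      isLowerSet := by
        rintro ⟨a, b⟩ ⟨c, e⟩ hle hm
        obtain ⟨h1, h2⟩ := Prod.mk_le_mk.1 hle
        simp only [Finset.coe_biUnion, Finset.mem_coe, Finset.mem_range, Finset.coe_image,
          Set.mem_iUnion, Set.mem_image, Prod.mk.injEq] at hm ⊢
        obtain ⟨i, hi, j, hj, rfl, rfl⟩ := hm
        exact ⟨c, by omega, e, lt_of_le_of_lt h2 (lt_of_lt_of_le hj (hr _ _ h1)), rfl, rfl⟩ }
  have hmem : ∀ i j, (i, j) ∈ Y ↔ j < r i := by
    intro i j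
    rw [← YoungDiagram.mem_cells]
    simp only [Y, Finset.mem_biUnion, Finset.mem_range, Finset.mem_image, Prod.mk.injEq]
    constructor
    · rintro ⟨a, _, b, hb, rfl, rfl⟩
      exact hb
    · intro h
      refine ⟨i, ?_, j, h, rfl, rfl⟩
      by_contra hk
      simp [r, hk] at h
  have hrow : ∀ i, Y.rowLen i = r i := by
    intro i
    have : ∀ j, j < Y.rowLen i ↔ j < r i := fun j => by
      rw [← YoungDiagram.mem_iff_lt_rowLen, hmem]
    have h1 := this (Y.rowLen i)
    have h2 := this (r i)
    omega
  refine ⟨Y, ?_, ?_⟩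
  · intro i hi
    rw [hrow]
    simp [r, not_lt.2 hi]
  · ext i
    have hi := i.2
    have e : k - 1 - (k - 1 - (i : ℕ)) = i := by omega
    have hlt : k - 1 - (i : ℕ) < k := by omega
    simp only [yb, hrow, r, dif_pos hlt, e, Fin.eta]
    have := hge i
    omega

end Young

/-! ### Part 10: assembly -/

section Assembly

variable {Φ : Type} [Fintype Φ] [DecidableEq Φ]
variable {N : Type} [Group N] [Fintype N] [DecidableEq N] {U : Type} [Fintype U]
  [DecidableEq U]

/-- the character attached to a family of Young diagrams -/
noncomputable def ych (D : WData N Φ U) (n : ℕ) (w : Φ → YoungDiagram) : Wreath N n → ℂ :=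
  wF D n fun φ => yb n (w φ)

lemma rows_of_sum (n : ℕ) (w : Φ → YoungDiagram) (hw : ∑ φ, (w φ).card = n) (φ : Φ) :
    ∀ i, n ≤ i → (w φ).rowLen i = 0 := by
  apply rowLen_zero_of_card
  rw [← hw]
  exact Finset.single_le_sum (f := fun φ => (w φ).card) (fun _ _ => Nat.zero_le _)
    (Finset.mem_univ φ)

lemma sum_of_rows (n : ℕ) (w : Φ → YoungDiagram) (hr : ∀ φ i, n ≤ i → (w φ).rowLen i = 0) :
    ∑ φ, ∑ i, yb n (w φ) i = ∑ φ, (w φ).card + Fintype.card Φ * ∑ i : Fin n, (i : ℕ) := by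
  rw [Finset.sum_congr rfl fun φ _ => sum_yb n (w φ) (hr φ), Finset.sum_add_distrib]
  simp

lemma ych_one (D : WData N Φ U) (n : ℕ) (w : Φ → YoungDiagram) (hw : ∑ φ, (w φ).card = n) :
    ych D n w 1 * ∏ φ, (hprod (w φ) : ℂ) = n.factorial * ∏ φ, (D.d φ : ℂ) ^ (w φ).card := by
  have hr := rows_of_sum n w hw
  have h := wF_one D n (fun φ => yb n (w φ)) (by rw [sum_of_rows n w hr, hw])
  simp only [prod_fact n _ (hr _), sum_yb n _ (hr _), pow_add] at h
  set Δ : Φ → ℂ := fun φ => ∏ i, ∏ j ∈ Finset.Ioi i, ((yb n (w φ) j : ℂ) - yb n (w φ) i) with hΔ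
  set T : Φ → ℂ := fun φ => (D.d φ : ℂ) ^ (∑ i : Fin n, (i : ℕ)) with hT
  have hΔ0 : ∏ φ, Δ φ ≠ 0 := Finset.prod_ne_zero_iff.2 fun φ _ => prod_diff_ne_zero n (w φ)
  have hT0 : ∏ φ, T φ ≠ 0 := Finset.prod_ne_zero_iff.2 fun φ _ => pow_ne_zero _ (by
    exact_mod_cast (D.hd φ).ne')
  have h2 : wF D n (fun φ => yb n (w φ)) 1 * ∏ φ, (T φ * (hprod (w φ) * Δ φ)) =
    n.factorial * ∏ φ, ((D.d φ : ℂ) ^ (w φ).card * T φ * Δ φ) := h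
  simp only [Finset.prod_mul_distrib] at h2
  apply mul_right_cancel₀ (mul_ne_zero hT0 hΔ0)
  rw [ych]
  linear_combination h2

lemma int_value {G : Type} [Group G] [Fintype G] (f : G → ℂ)
    (hf : f ∈ AddSubgroup.closure {χ | IrrC G χ}) : ∃ z : ℤ, f 1 = z := by
  induction hf using AddSubgroup.closure_induction with
  | mem x hx =>
    obtain ⟨d, _, hd⟩ := irrC_one hx
    exact ⟨d, by simp [hd]⟩
  | zero => exact ⟨0, by simp⟩
  | add x y _ _ hx hy =>
    obtain ⟨a, ha⟩ := hx
    obtain ⟨b, hb⟩ := hy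
    exact ⟨a + b, by simp [ha, hb]⟩
  | neg x _ hx =>
    obtain ⟨a, ha⟩ := hx
    exact ⟨-a, by simp [ha]⟩

lemma ych_nat (D : WData N Φ U) (n : ℕ) (w : Φ → YoungDiagram) (hw : ∑ φ, (w φ).card = n) :
    ∃ m : ℕ, ych D n w 1 = m ∧
      m * ∏ φ, hprod (w φ) = n.factorial * ∏ φ, D.d φ ^ (w φ).card := by
  obtain ⟨z, hz⟩ := int_value _ (wF_mem D n fun φ => yb n (w φ))
  have h1 := ych_one D n w hw
  have hz' : ych D n w 1 = z := hz
  rw [hz'] at h1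
  have h2 : z * ((∏ φ, hprod (w φ) : ℕ) : ℤ) =
    ((n.factorial * ∏ φ, D.d φ ^ (w φ).card : ℕ) : ℤ) := by exact_mod_cast h1
  have hH : 0 < ∏ φ, hprod (w φ) := Finset.prod_pos fun φ _ => hprod_pos _
  have hz0 : 0 ≤ z := by
    by_contra hneg
    have : z * ((∏ φ, hprod (w φ) : ℕ) : ℤ) < 0 :=
      mul_neg_of_neg_of_pos (not_le.1 hneg) (by exact_mod_cast hH)
    rw [h2] at this
    exact absurd this (not_lt.2 (Int.natCast_nonneg _))
  obtain ⟨m, rfl⟩ := Int.eq_ofNat_of_zero_le hz0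
  exact ⟨m, by simpa using hz', by exact_mod_cast h2⟩

lemma ych_irr (D : WData N Φ U) (n : ℕ) (w : Φ → YoungDiagram) (hw : ∑ φ, (w φ).card = n) :
    IrrC (Wreath N n) (ych D n w) := by
  have hr := rows_of_sum n w hw
  refine mem_closure_norm_one (wF_mem D n _) ?_ ?_
  · rw [ych, wF_ortho D n _ _ (fun φ => yb_strictMono n _) (fun φ => yb_strictMono n _)
      (by rw [sum_of_rows n w hr, hw]), if_pos rfl]
  · obtain ⟨m, hm, _⟩ := ych_nat D n w hw
    exact ⟨m, hm⟩

lemma ych_inj (D : WData N Φ U) (n : ℕ) (w w' : Φ → YoungDiagram) (hw : ∑ φ, (w φ).card = n)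
    (hw' : ∑ φ, (w' φ).card = n) (h : ych D n w = ych D n w') : w = w' := by
  have hr := rows_of_sum n w hw
  have hr' := rows_of_sum n w' hw'
  have h1 := irrC_ortho (ych_irr D n w hw) (ych_irr D n w' hw')
  rw [if_pos h, ych, ych, wF_ortho D n _ _ (fun φ => yb_strictMono n _)
    (fun φ => yb_strictMono n _) (by rw [sum_of_rows n w hr, hw])] at h1
  have hG : (Nat.card (Wreath N n) : ℂ) ≠ 0 := by exact_mod_cast Nat.card_pos.ne'
  by_cases he : (fun φ => yb n (w φ)) = fun φ => yb n (w' φ)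
  · ext1 φ
    exact yb_injective n _ _ (hr φ) (hr' φ) (congrFun he φ)
  · rw [if_neg he] at h1
    exact absurd h1.symm hG

lemma ych_surj (D : WData N Φ U) (n : ℕ) (ψ : Wreath N n → ℂ) (hψ : IrrC (Wreath N n) ψ) :
    ∃ w : Φ → YoungDiagram, ∑ φ, (w φ).card = n ∧ ych D n w = ψ := by
  obtain ⟨d, hd, hd1⟩ := irrC_one hψ
  obtain ⟨α, hα, hs, hne⟩ := wF_complete D n ψ (by rw [hd1]; exact_mod_cast hd.ne')
  choose w hr hw using fun φ => yb_surjective n (α φ) (hα φ)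
  obtain rfl : (fun φ => yb n (w φ)) = α := funext hw
  have hw' : ∑ φ, (w φ).card = n := by
    rw [sum_of_rows n w hr] at hs
    exact Nat.add_right_cancel hs
  refine ⟨w, hw', ?_⟩
  have h1 := irrC_ortho (ych_irr D n w hw') hψ
  by_contra hc
  rw [if_neg hc] at h1
  exact hne h1

lemma ych_defect (D : WData N Φ U) (n : ℕ) (w : Φ → YoungDiagram) (hw : ∑ φ, (w φ).card = n)
    (ℓ : ℕ) (hℓ : ℓ.Prime) :
    IsDefectZeroChar ℓ (Wreath N n) (ych D n w) ↔
      ∀ φ, IsLCore ℓ (w φ) ∧ ((w φ).card = 0 ∨ ¬ ℓ ∣ Nat.card N / D.d φ) := by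
  obtain ⟨m, hm, hmp⟩ := ych_nat D n w hw
  have hq : ∀ φ, Nat.card N / D.d φ * D.d φ = Nat.card N := fun φ => Nat.div_mul_cancel (D.hdvd φ)
  have hdp : 0 < ∏ φ, D.d φ ^ (w φ).card := Finset.prod_pos fun φ _ => pow_pos (D.hd φ) _
  have hm0 : 0 < m := by
    have : 0 < n.factorial * ∏ φ, D.d φ ^ (w φ).card := Nat.mul_pos n.factorial_pos hdp
    rw [← hmp] at this
    exact Nat.pos_of_mul_pos_right this
  have hcard : Nat.card (Wreath N n) =
      m * ∏ φ, ((Nat.card N / D.d φ) ^ (w φ).card * hprod (w φ)) := by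
    have h1 : (∏ φ, (Nat.card N / D.d φ) ^ (w φ).card) * ∏ φ, D.d φ ^ (w φ).card =
        Nat.card N ^ n := by
      rw [← Finset.prod_mul_distrib]
      simp only [← mul_pow, hq]
      rw [Finset.prod_pow_eq_pow_sum, hw]
    rw [card_wreath, ← h1, Finset.prod_mul_distrib, mul_assoc, mul_comm (∏ φ, D.d φ ^ (w φ).card),
      ← hmp]
    ring
  have hdiv : Nat.card (Wreath N n) / m =
      ∏ φ, ((Nat.card N / D.d φ) ^ (w φ).card * hprod (w φ)) := by
    rw [hcard, Nat.mul_div_cancel_left _ hm0]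
  have h1 : IsDefectZeroChar ℓ (Wreath N n) (ych D n w) ↔
      ¬ ℓ ∣ ∏ φ, ((Nat.card N / D.d φ) ^ (w φ).card * hprod (w φ)) := by
    rw [← hdiv]
    constructor
    · rintro ⟨_, d, hd, h⟩
      rw [hm] at hd
      have : m = d := by exact_mod_cast hd
      rwa [this]
    · intro h
      exact ⟨isIrrChar_iff.2 (ych_irr D n w hw), m, hm, h⟩
  rw [h1, hℓ.prime.dvd_finsetProd_iff]
  push Not
  constructor
  · intro h φ
    have h2 := h φ (Finset.mem_univ φ)
    rw [hℓ.dvd_mul, not_or] at h2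
    refine ⟨(isLCore_iff ℓ hℓ _).2 h2.2, ?_⟩
    by_contra! hc
    exact h2.1 (dvd_pow hc.2 hc.1)
  · intro h φ _
    rw [hℓ.dvd_mul, not_or]
    refine ⟨fun hd => ?_, (isLCore_iff ℓ hℓ _).1 (h φ).1⟩
    rcases (h φ).2 with h0 | h0
    · rw [h0, pow_zero] at hd
      exact hℓ.one_lt.ne' (Nat.dvd_one.1 hd)
    · exact h0 (hℓ.dvd_of_dvd_pow hd)

end Assembly

lemma card_eq_zero_iff_bot (Y : YoungDiagram) : Y.card = 0 ↔ Y = ⊥ := by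
  constructor
  · intro h
    ext c
    have : Y.cells = ∅ := Finset.card_eq_zero.1 h
    simp [this]
  · rintro rfl; rfl

theorem wreath_defect_zero_bijection (ℓ : ℕ) (hℓ : ℓ.Prime)
    (N : Type) [Group N] [Finite N] (n : ℕ) :
    Nonempty
      ({χ : Wreath N n → ℂ // IsDefectZeroChar ℓ (Wreath N n) χ} ≃
        {w : {χ : N → ℂ // IsDefectZeroChar ℓ N χ} →
            {Y : YoungDiagram // IsLCore ℓ Y} //
          ∑ᶠ φ, ((w φ : YoungDiagram)).card = n}) := by
  classical
  have : Fintype N := Fintype.ofFinite N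
  have : Fintype {χ : N → ℂ // IrrC N χ} := Set.Finite.fintype irrC_finite
  obtain ⟨d, D, hD, hd⟩ := exists_wdata N
  let Φ := {χ : N → ℂ // IrrC N χ}
  let Φ₀ := {χ : N → ℂ // IsDefectZeroChar ℓ N χ}
  let e : Φ₀ → Φ := fun χ => ⟨χ.1, isIrrChar_iff.1 χ.2.1⟩
  have he : Function.Injective e := fun a b h => Subtype.ext (congrArg (fun x : Φ => x.1) h)
  have : Fintype Φ₀ := Fintype.ofInjective e he
  have hdef : ∀ φ : Φ, IsDefectZeroChar ℓ N φ.1 ↔ ¬ ℓ ∣ Nat.card N / D.d φ := by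
    intro φ
    rw [hD]
    constructor
    · rintro ⟨_, d', hd', h⟩
      rw [hd φ] at hd'
      have : d φ = d' := by exact_mod_cast hd'
      rwa [this]
    · intro h
      exact ⟨isIrrChar_iff.2 φ.2, d φ, hd φ, h⟩
  let ext : (Φ₀ → {Y : YoungDiagram // IsLCore ℓ Y}) → Φ → YoungDiagram := fun w φ =>
    if h : IsDefectZeroChar ℓ N φ.1 then (w ⟨φ.1, h⟩).1 else ⊥
  have hext_e : ∀ w χ, ext w (e χ) = (w χ).1 := by
    intro w χ
    simp only [ext]
    rw [dif_pos (show IsDefectZeroChar ℓ N (e χ).1 from χ.2)]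
  have hext_n : ∀ w φ, ¬ IsDefectZeroChar ℓ N φ.1 → ext w φ = ⊥ := by
    intro w φ h
    simp only [ext]
    rw [dif_neg h]
  have hsum : ∀ w : Φ₀ → {Y : YoungDiagram // IsLCore ℓ Y},
      ∑ φ, (ext w φ).card = ∑ᶠ χ, ((w χ : YoungDiagram)).card := by
    intro w
    rw [finsum_eq_sum_of_fintype]
    symm
    refine Fintype.sum_of_injective e he _ _ ?_ ?_
    · intro φ hφ
      rw [hext_n w φ, (card_eq_zero_iff_bot _).2 rfl]
      intro h
      exact hφ ⟨⟨φ.1, h⟩, rfl⟩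
    · intro χ
      rw [hext_e]
  have hcore_bot : IsLCore ℓ ⊥ := by
    intro c hc
    simp at hc
  have hmain : ∀ w : {w : Φ₀ → {Y : YoungDiagram // IsLCore ℓ Y} //
      ∑ᶠ φ, ((w φ : YoungDiagram)).card = n},
      IsDefectZeroChar ℓ (Wreath N n) (ych D n (ext w.1)) := by
    intro w
    rw [ych_defect D n _ ((hsum _).trans w.2) ℓ hℓ]
    intro φ
    by_cases h : IsDefectZeroChar ℓ N φ.1
    · refine ⟨?_, Or.inr ((hdef φ).1 h)⟩
      rw [show φ = e ⟨φ.1, h⟩ from rfl, hext_e]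
      exact (w.1 _).2
    · rw [hext_n _ _ h]
      exact ⟨hcore_bot, Or.inl ((card_eq_zero_iff_bot _).2 rfl)⟩
  refine ⟨(Equiv.ofBijective (fun w => ⟨ych D n (ext w.1), hmain w⟩) ⟨?_, ?_⟩).symm⟩
  · intro w w' h
    have h1 := ych_inj D n _ _ ((hsum _).trans w.2) ((hsum _).trans w'.2)
      (congrArg Subtype.val h)
    apply Subtype.ext
    funext χ
    apply Subtype.ext
    rw [← hext_e, ← hext_e, h1]
  · rintro ⟨ψ, hψ⟩
    obtain ⟨w, hw, rfl⟩ := ych_surj D n ψ (isIrrChar_iff.1 hψ.1)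
    rw [ych_defect D n w hw ℓ hℓ] at hψ
    let w₀ : Φ₀ → {Y : YoungDiagram // IsLCore ℓ Y} := fun χ => ⟨w (e χ), (hψ (e χ)).1⟩
    have hw0 : ext w₀ = w := by
      funext φ
      by_cases h : IsDefectZeroChar ℓ N φ.1
      · rw [show φ = e ⟨φ.1, h⟩ from rfl, hext_e]
      · rw [hext_n _ _ h]
        symm
        rw [← card_eq_zero_iff_bot]
        exact (hψ φ).2.resolve_right fun hc => h ((hdef φ).2 hc)
    refine ⟨⟨w₀, ?_⟩, ?_⟩
    · rw [← hsum, hw0, hw]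
    · apply Subtype.ext
      simp only [hw0]
end
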